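/- arXiv:1602.02961 — 4 statements merged into one kernel-verified Lean document; each statement's English description precedes it below -/
import Mathlib

section
/- Let N ≥ 2, Ω ⊆ ℝ^N an open set, and u ∈ L¹_loc(Ω, ℝ^N) satisfy the kinetic formulation. Let y, z ∈ Ω be two distinct Lebesgue points of u, with values u(y) and u(z) respectively, such that the closed segment [y, z] is contained in Ω, and let ξ ∈ S^{N−1} satisfy ξ·(z − y) = 0. Then: if u(y)·ξ > 0 then u(z)·ξ ≥ 0, and if u(y)·ξ < 0 then u(z)·ξ ≤ 0; moreover, in either case, y and z are Lebesgue points of χ(·, ξ) and the corresponding values satisfy χ(y, ξ) = χ(z, ξ). -/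
/-!
Write `v = z - y` and `f x = ⟪u x, ξ⟫`, so that `χ(·, ξ)` is the Heaviside function of `f`. Its
distributional derivative along `v` vanishes. Testing this against the average
`x ↦ ∫ t in 0..1, φ (x + t • v)` of a bump function `φ` supported near `z`, whose derivative along
`v` is `φ (x + v) - φ x`, shows that `χ(x, ξ) = χ(x - v, ξ)` for almost every `x` near `z`.
The Heaviside function `H` satisfies `|H s - H a| ≤ |s - a| / |a|` for `a ≠ 0`, so a Lebesgue
point of `f` with nonzero value is a Lebesgue point of `χ(·, ξ)`. The translation by `v` carries
such a point from `y` to `z` without changing the value, and Lebesgue values are unique.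
-/

open MeasureTheory Metric Set Filter
open scoped RealInnerProductSpace ENNReal Topology

noncomputable section

/-- `χ(x, ξ) = 1` if `u(x)·ξ > 0` and `0` otherwise. -/
def chi {N : ℕ} (u : EuclideanSpace ℝ (Fin N) → EuclideanSpace ℝ (Fin N))
    (x ξ : EuclideanSpace ℝ (Fin N)) : ℝ :=
  if 0 < ⟪u x, ξ⟫ then 1 else 0

/-- The kinetic formulation: for every unit direction `ξ`, every `v ⊥ ξ` and every
test function `φ ∈ C_c^∞(Ω)`, `∫_Ω χ(x,ξ) (v·∇φ(x)) dx = 0`. -/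
def KineticFormulation {N : ℕ} (Ω : Set (EuclideanSpace ℝ (Fin N)))
    (u : EuclideanSpace ℝ (Fin N) → EuclideanSpace ℝ (Fin N)) : Prop :=
  ∀ ξ : EuclideanSpace ℝ (Fin N), ‖ξ‖ = 1 →
    ∀ v : EuclideanSpace ℝ (Fin N), ⟪v, ξ⟫ = 0 →
      ∀ φ : EuclideanSpace ℝ (Fin N) → ℝ, ContDiff ℝ (⊤ : ℕ∞) φ → HasCompactSupport φ →
        tsupport φ ⊆ Ω →
        ∫ x in Ω, chi u x ξ * ⟪v, gradient φ x⟫ = 0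

/-- `x₀` is a Lebesgue point of `f` with value `f₀`. -/
def IsLebesguePoint {E : Type*} [MeasureSpace E] [PseudoMetricSpace E]
    {F : Type*} [NormedAddCommGroup F]
    (f : E → F) (x₀ : E) (f₀ : F) : Prop :=
  Tendsto (fun r : ℝ => ⨍ x in Metric.ball x₀ r, ‖f x - f₀‖) (𝓝[>] 0) (𝓝 0)

open scoped ContDiff

/-- The Heaviside step function with value `0` at `0`; `χ(x, ξ)` is `heaviside ⟪u x, ξ⟫`. -/
def heaviside (s : ℝ) : ℝ := if 0 < s then 1 else 0

lemma heaviside_of_pos {s : ℝ} (hs : 0 < s) : heaviside s = 1 := if_pos hs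

lemma heaviside_of_nonpos {s : ℝ} (hs : s ≤ 0) : heaviside s = 0 := if_neg hs.not_gt

lemma measurable_heaviside : Measurable heaviside :=
  measurable_const.ite measurableSet_Ioi measurable_const

lemma norm_heaviside_le_one (s : ℝ) : ‖heaviside s‖ ≤ 1 := by
  unfold heaviside
  split_ifs <;> simp

lemma norm_heaviside_sub_le {a : ℝ} (ha : a ≠ 0) (s : ℝ) :
    ‖heaviside s - heaviside a‖ ≤ |a|⁻¹ * ‖s - a‖ := by
  have one_le_of_far (h : |a| ≤ |s - a|) : 1 ≤ |a|⁻¹ * |s - a| := by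
    rwa [inv_mul_eq_div, one_le_div (abs_pos.2 ha)]
  simp only [Real.norm_eq_abs]
  rcases ha.lt_or_gt with ha | ha <;> rcases lt_or_ge 0 s with hs | hs
  · rw [heaviside_of_pos hs, heaviside_of_nonpos ha.le, sub_zero, abs_one]
    exact one_le_of_far (by rw [abs_of_neg ha, abs_of_pos (by linarith)]; linarith)
  · rw [heaviside_of_nonpos hs, heaviside_of_nonpos ha.le, sub_self, abs_zero]
    positivity
  · rw [heaviside_of_pos hs, heaviside_of_pos ha, sub_self, abs_zero]
    positivity
  · rw [heaviside_of_nonpos hs, heaviside_of_pos ha, zero_sub, abs_neg, abs_one]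
    exact one_le_of_far (by rw [abs_of_pos ha, abs_of_neg (by linarith)]; linarith)

lemma locallyIntegrableOn_heaviside_comp {X : Type*} [TopologicalSpace X] [MeasurableSpace X]
    [SecondCountableTopology X] [OpensMeasurableSpace X] {μ : Measure X} [IsLocallyFiniteMeasure μ]
    {Ω : Set X} {f : X → ℝ} (hf : LocallyIntegrableOn f Ω μ) :
    LocallyIntegrableOn (heaviside ∘ f) Ω μ := by
  have hmeas : AEStronglyMeasurable (heaviside ∘ f) (μ.restrict Ω) :=
    (measurable_heaviside.comp_aemeasurable hf.aestronglyMeasurable.aemeasurable)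
      |>.aestronglyMeasurable
  refine locallyIntegrableOn_of_locallyIntegrable_restrict
    ((locallyIntegrable_const (1 : ℝ)).mono hmeas (Eventually.of_forall fun x => ?_))
  simpa using norm_heaviside_le_one (f x)

lemma eventually_ball_of_eventually_smallSets_nhds {X : Type*} [PseudoMetricSpace X] {x₀ : X}
    {p : Set X → Prop} (h : ∀ᶠ s in (𝓝 x₀).smallSets, p s) :
    ∀ᶠ r in 𝓝[>] (0 : ℝ), p (ball x₀ r) := by
  refine Tendsto.eventually (nhds_basis_ball.smallSets.tendsto_right_iff.2 fun ε hε => ?_) h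
  filter_upwards [Ioo_mem_nhdsGT hε] with r hr using ball_subset_ball hr.2.le

namespace IsLebesguePoint

section Metric

variable {X F G : Type*} [PseudoMetricSpace X] [MeasureSpace X]
  [NormedAddCommGroup F] [NormedAddCommGroup G] {f : X → F} {x₀ : X} {a : F}

lemma congr_ae [OpensMeasurableSpace X] {g : X → F} {s : Set X} (hf : IsLebesguePoint f x₀ a)
    (hs : s ∈ 𝓝 x₀) (hfg : ∀ᵐ x, x ∈ s → f x = g x) : IsLebesguePoint g x₀ a := by
  refine Tendsto.congr' ?_ hf
  filter_upwards [eventually_ball_of_eventually_smallSets_nhds (eventually_smallSets_subset.2 hs)]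
    with r hr
  refine setAverage_congr_fun measurableSet_ball (hfg.mono fun x hx hxr => ?_)
  rw [hx (hr hxr)]

lemma comp_isometryEquiv {Y : Type*} [PseudoMetricSpace Y] [MeasureSpace Y] [BorelSpace X]
    [BorelSpace Y] (e : Y ≃ᵢ X) (he : MeasurePreserving e) {y₀ : Y}
    (hf : IsLebesguePoint f (e y₀) a) : IsLebesguePoint (f ∘ e) y₀ a := by
  refine Tendsto.congr (fun r => ?_) hf
  have hball : ball y₀ r = e ⁻¹' ball (e y₀) r := by
    rw [e.preimage_ball, e.symm_apply_apply]
  have hemb : MeasurableEmbedding e := e.toHomeomorph.measurableEmbedding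
  rw [setAverage_eq, setAverage_eq, hball, measureReal_def, measureReal_def,
    he.measure_preimage_emb hemb, ← he.setIntegral_preimage_emb hemb]
  rfl

variable [IsLocallyFiniteMeasure (volume : Measure X)]

lemma eventually_integrableOn_norm_sub (hf : IntegrableAtFilter f (𝓝 x₀)) (a : F) :
    ∀ᶠ r in 𝓝[>] (0 : ℝ), IntegrableOn (fun x => ‖f x - a‖) (ball x₀ r) :=
  eventually_ball_of_eventually_smallSets_nhds
    (hf.sub (locallyIntegrable_const a x₀)).norm.eventually

lemma of_norm_sub_le {g : X → G} {b : G} {C : ℝ} (hint : IntegrableAtFilter f (𝓝 x₀))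
    (hf : IsLebesguePoint f x₀ a) (hle : ∀ x, ‖g x - b‖ ≤ C * ‖f x - a‖) :
    IsLebesguePoint g x₀ b := by
  have hlim : Tendsto (fun r => C * ⨍ x in ball x₀ r, ‖f x - a‖) (𝓝[>] 0) (𝓝 0) := by
    simpa using hf.const_mul C
  refine squeeze_zero' (Eventually.of_forall fun r => ?_) ?_ hlim
  · exact integral_nonneg fun x => norm_nonneg _
  filter_upwards [eventually_integrableOn_norm_sub hint a] with r hr
  calc ⨍ x in ball x₀ r, ‖g x - b‖
      ≤ ⨍ x in ball x₀ r, C * ‖f x - a‖ := by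
        rw [setAverage_eq, setAverage_eq]
        refine smul_le_smul_of_nonneg_left ?_ (by positivity)
        exact integral_mono_of_nonneg (Eventually.of_forall fun x => norm_nonneg _)
          (hr.const_mul C) (Eventually.of_forall hle)
    _ = C * ⨍ x in ball x₀ r, ‖f x - a‖ := integral_const_mul C _

lemma unique [OpensMeasurableSpace X] [(volume : Measure X).IsOpenPosMeasure] {b : F}
    (hint : IntegrableAtFilter f (𝓝 x₀)) (ha : IsLebesguePoint f x₀ a)
    (hb : IsLebesguePoint f x₀ b) : a = b := by
  suffices h : ‖a - b‖ ≤ 0 from sub_eq_zero.1 (norm_le_zero_iff.1 h)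
  have hlim := ha.add hb
  rw [add_zero] at hlim
  refine ge_of_tendsto hlim ?_
  filter_upwards [eventually_integrableOn_norm_sub hint a, eventually_integrableOn_norm_sub hint b,
    eventually_ball_of_eventually_smallSets_nhds (volume.finiteAt_nhds x₀).eventually,
    self_mem_nhdsWithin] with r hra hrb hfin hr
  have hpos : volume (ball x₀ r) ≠ 0 := (measure_ball_pos volume x₀ hr).ne'
  calc ‖a - b‖ = ⨍ _ in ball x₀ r, ‖a - b‖ := (setAverage_const hpos hfin.ne _).symm
    _ ≤ ⨍ x in ball x₀ r, (‖f x - a‖ + ‖f x - b‖) := by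
        rw [setAverage_eq, setAverage_eq]
        refine smul_le_smul_of_nonneg_left ?_ (by positivity)
        refine integral_mono (integrableOn_const hfin.ne) (hra.add hrb) fun x => ?_
        simpa only [Pi.add_apply, dist_eq_norm, norm_sub_rev a (f x)] using dist_triangle a (f x) b
    _ = (⨍ x in ball x₀ r, ‖f x - a‖) + ⨍ x in ball x₀ r, ‖f x - b‖ := by
        simp only [setAverage_eq, integral_add hra hrb, smul_add]

lemma heaviside_comp {f : X → ℝ} {a : ℝ} (hint : IntegrableAtFilter f (𝓝 x₀))
    (hf : IsLebesguePoint f x₀ a) (ha : a ≠ 0) :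
    IsLebesguePoint (heaviside ∘ f) x₀ (heaviside a) :=
  hf.of_norm_sub_le hint fun x => norm_heaviside_sub_le ha (f x)

lemma clm_comp [NormedSpace ℝ F] [NormedSpace ℝ G] (L : F →L[ℝ] G)
    (hint : IntegrableAtFilter f (𝓝 x₀)) (hf : IsLebesguePoint f x₀ a) :
    IsLebesguePoint (L ∘ f) x₀ (L a) :=
  hf.of_norm_sub_le hint fun x => by simpa [map_sub] using L.le_opNorm (f x - a)

end Metric

lemma comp_sub_right {E F : Type*} [SeminormedAddCommGroup E] [MeasureSpace E] [BorelSpace E]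
    [(volume : Measure E).IsAddRightInvariant] [NormedAddCommGroup F] {f : E → F} {x₀ v : E} {a : F}
    (hf : IsLebesguePoint f (x₀ - v) a) : IsLebesguePoint (fun x => f (x - v)) x₀ a :=
  comp_isometryEquiv (IsometryEquiv.subRight v) (measurePreserving_sub_right volume v) hf

end IsLebesguePoint

lemma integrable_smul_of_tsupport_subset {X F : Type*} [TopologicalSpace X] [T2Space X]
    [MeasurableSpace X] [OpensMeasurableSpace X] {μ : Measure X} [NormedAddCommGroup F]
    [NormedSpace ℝ F] {f : X → F} {Ω : Set X} {φ : X → ℝ}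
    (hf : LocallyIntegrableOn f Ω μ) (hφ : Continuous φ) (hc : HasCompactSupport φ)
    (hsupp : tsupport φ ⊆ Ω) : Integrable (fun x => φ x • f x) μ := by
  refine (integrableOn_iff_integrable_of_support_subset (s := tsupport φ) ?_).1
    ((hf.integrableOn_compact_subset hsupp hc).continuousOn_smul hφ.continuousOn hc)
  exact (Function.support_smul_subset_left φ f).trans (subset_tsupport φ)

lemma locallyIntegrableOn_comp_sub_right {G F : Type*} [TopologicalSpace G] [AddGroup G]
    [IsTopologicalAddGroup G] [T2Space G] [LocallyCompactSpace G] [MeasurableSpace G] [BorelSpace G]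
    {μ : Measure G} [μ.IsAddRightInvariant] [NormedAddCommGroup F] {f : G → F} {v : G}
    {Ω V : Set G} (hf : LocallyIntegrableOn f Ω μ) (hV : IsOpen V)
    (hVΩ : ∀ x ∈ V, x - v ∈ Ω) : LocallyIntegrableOn (fun x => f (x - v)) V μ := by
  refine (locallyIntegrableOn_iff hV.isLocallyClosed).2 fun K hKV hK => ?_
  have himage := hf.integrableOn_compact_subset (image_subset_iff.2 fun x hx => hVΩ x (hKV hx))
    (hK.image (Homeomorph.subRight v).continuous)
  rw [← (measurePreserving_sub_right μ v).integrableOn_comp_preimage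
    (Homeomorph.subRight v).measurableEmbedding] at himage
  exact himage.mono_set (subset_preimage_image _ K)

section WeakDerivative

variable {E : Type*} [NormedAddCommGroup E] [NormedSpace ℝ E]

/-- The average of `φ` over the segment from `x` to `x + v`. For a test function `φ` it is a test
function whose derivative along `v` is `φ (x + v) - φ x`. -/
def segmentAverage (φ : E → ℝ) (v x : E) : ℝ := ∫ t in (0 : ℝ)..1, φ (x + t • v)

lemma tsupport_segmentAverage_subset {φ : E → ℝ} (hc : HasCompactSupport φ) (v : E) :
    tsupport (segmentAverage φ v) ⊆
      (fun p : ℝ × E => p.2 - p.1 • v) '' (Icc 0 1 ×ˢ tsupport φ) := by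
  have hcompact : IsCompact ((fun p : ℝ × E => p.2 - p.1 • v) '' (Icc 0 1 ×ˢ tsupport φ)) :=
    (isCompact_Icc.prod hc).image (by fun_prop)
  refine closure_minimal (fun x hx => ?_) hcompact.isClosed
  by_contra hmem
  refine hx (intervalIntegral.integral_zero_ae (Eventually.of_forall fun t ht => ?_))
  refine image_eq_zero_of_notMem_tsupport fun hsupp => hmem ⟨(t, x + t • v), ⟨?_, hsupp⟩, ?_⟩
  · exact Ioc_subset_Icc_self (uIoc_of_le (zero_le_one' ℝ) ▸ ht)
  · exact add_sub_cancel_right x _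

lemma hasCompactSupport_segmentAverage {φ : E → ℝ} (hc : HasCompactSupport φ) (v : E) :
    HasCompactSupport (segmentAverage φ v) :=
  ((isCompact_Icc.prod hc).image (by fun_prop)).of_isClosed_subset (isClosed_tsupport _)
    (tsupport_segmentAverage_subset hc v)

lemma contDiff_segmentAverage {n : ℕ∞} {φ : E → ℝ} (hφ : ContDiff ℝ n φ)
    (hc : HasCompactSupport φ) (v : E) : ContDiff ℝ n (segmentAverage φ v) := by
  borelize E
  set ν : Measure E := Measure.map (fun t : ℝ => -t • v) (volume.restrict (Ioc 0 1))
  have hconv : segmentAverage φ v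
      = convolution (fun _ => (1 : ℝ)) φ (ContinuousLinearMap.lsmul ℝ ℝ) ν := by
    ext x
    have hcont : Continuous fun w => φ (x - w) := hφ.continuous.comp (by fun_prop)
    simp only [convolution_lsmul, one_smul]
    rw [integral_map (by fun_prop) hcont.aestronglyMeasurable, segmentAverage,
      intervalIntegral.integral_of_le zero_le_one]
    simp only [neg_smul, sub_neg_eq_add]
  rw [hconv]
  exact hc.contDiff_convolution_right _ (locallyIntegrable_const 1) hφ

lemma fderiv_segmentAverage_apply {φ : E → ℝ} (hφ : ContDiff ℝ 1 φ) (hc : HasCompactSupport φ)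
    (v x : E) : fderiv ℝ (segmentAverage φ v) x v = φ (x + v) - φ x := by
  have hline (s : ℝ) : segmentAverage φ v (x + s • v) = ∫ t in s..(s + 1), φ (x + t • v) := by
    have hshift :=
      intervalIntegral.integral_comp_add_left (a := 0) (b := 1) (fun t => φ (x + t • v)) s
    rw [add_zero] at hshift
    simp only [segmentAverage, ← hshift, add_smul, add_assoc]
  have hcont : Continuous fun t : ℝ => φ (x + t • v) := hφ.continuous.comp (by fun_prop)
  have hftc : HasDerivAt (fun s : ℝ => segmentAverage φ v (x + s • v)) (φ (x + v) - φ x) 0 := by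
    have hprim (b : ℝ) :=
      intervalIntegral.integral_hasDerivAt_right (hcont.intervalIntegrable 0 b)
        (hcont.stronglyMeasurableAtFilter _ _) hcont.continuousAt
    have hright := (hprim (0 + 1)).comp_add_const 0 1
    have hdecomp : (fun s : ℝ => segmentAverage φ v (x + s • v))
        = (fun s => ∫ t in 0..(s + 1), φ (x + t • v)) - fun s => ∫ t in 0..s, φ (x + t • v) := by
      ext s
      rw [hline, Pi.sub_apply, intervalIntegral.integral_interval_sub_left
        (hcont.intervalIntegrable _ _) (hcont.intervalIntegrable _ _)]
    rw [hdecomp]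
    simpa using hright.sub (hprim 0)
  have hdiff : Differentiable ℝ (segmentAverage φ v) :=
    (contDiff_segmentAverage (n := 1) hφ hc v).differentiable one_ne_zero
  have hline_deriv := (hdiff x).hasFDerivAt.hasLineDerivAt v
  exact hline_deriv.unique hftc

variable [MeasurableSpace E] {F : Type*} [NormedAddCommGroup F] [NormedSpace ℝ F]

/-- The distributional derivative of `f` in the direction `v` vanishes on `Ω`. Meaningful only for
`f` locally integrable on `Ω`, since the integral of a nonintegrable function is `0`. -/
def HasZeroWeakDirDeriv (f : E → F) (v : E) (Ω : Set E) (μ : Measure E) : Prop :=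
  ∀ φ : E → ℝ, ContDiff ℝ ∞ φ → HasCompactSupport φ → tsupport φ ⊆ Ω →
    ∫ x in Ω, fderiv ℝ φ x v • f x ∂μ = 0

variable {f : E → F} {v : E} {Ω V : Set E} {μ : Measure E}

lemma HasZeroWeakDirDeriv.integral_comp_add_right [OpensMeasurableSpace E]
    (hweak : HasZeroWeakDirDeriv f v Ω μ) (hf : LocallyIntegrableOn f Ω μ) {φ : E → ℝ}
    (hφ : ContDiff ℝ ∞ φ) (hc : HasCompactSupport φ)
    (hsweep : ∀ x ∈ tsupport φ, ∀ t ∈ Icc (0 : ℝ) 1, x - t • v ∈ Ω) :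
    ∫ x, φ (x + v) • f x ∂μ = ∫ x, φ x • f x ∂μ := by
  have hsupp : tsupport φ ⊆ Ω := fun x hx => by simpa using hsweep x hx 0 (by simp)
  have hsupp_shift : tsupport (fun x => φ (x + v)) ⊆ Ω := fun x hx => by
    have hmem : x + v ∈ tsupport φ :=
      tsupport_comp_subset_preimage φ (f := fun x => x + v) (by fun_prop) hx
    simpa using hsweep _ hmem 1 (by simp)
  have hint := integrable_smul_of_tsupport_subset hf hφ.continuous hc hsupp
  have hint_shift : Integrable (fun x => φ (x + v) • f x) μ :=
    integrable_smul_of_tsupport_subset hf (hφ.continuous.comp (continuous_add_const v))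
      (hc.comp_homeomorph (Homeomorph.addRight v)) hsupp_shift
  have hsupp_avg : tsupport (segmentAverage φ v) ⊆ Ω := by
    refine (tsupport_segmentAverage_subset hc v).trans ?_
    rintro _ ⟨⟨t, x⟩, ⟨ht, hx⟩, rfl⟩
    exact hsweep x hx t ht
  have hzero : ∫ x in Ω, (φ (x + v) - φ x) • f x ∂μ = 0 := by
    simpa only [fderiv_segmentAverage_apply (hφ.of_le (mod_cast le_top)) hc]
      using hweak _ (contDiff_segmentAverage hφ hc v) (hasCompactSupport_segmentAverage hc v)
        hsupp_avg
  rw [setIntegral_eq_integral_of_forall_compl_eq_zero fun x hx => ?_] at hzero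
  · simp only [sub_smul] at hzero
    rwa [integral_sub hint_shift hint, sub_eq_zero] at hzero
  · rw [image_eq_zero_of_notMem_tsupport fun h => hx (hsupp h),
      image_eq_zero_of_notMem_tsupport (f := fun x => φ (x + v)) fun h => hx (hsupp_shift h),
      sub_zero, zero_smul]

lemma HasZeroWeakDirDeriv.ae_eq_comp_sub_right [BorelSpace E] [FiniteDimensional ℝ E]
    [CompleteSpace F] [μ.IsAddRightInvariant] (hweak : HasZeroWeakDirDeriv f v Ω μ)
    (hf : LocallyIntegrableOn f Ω μ) (hV : IsOpen V)
    (hsweep : ∀ x ∈ V, ∀ t ∈ Icc (0 : ℝ) 1, x - t • v ∈ Ω) :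
    ∀ᵐ x ∂μ, x ∈ V → f (x - v) = f x := by
  have hVΩ : V ⊆ Ω := fun x hx => by simpa using hsweep x hx 0 (by simp)
  have hVΩ_shift : ∀ x ∈ V, x - v ∈ Ω := fun x hx => by simpa using hsweep x hx 1 (by simp)
  have hf_shift := locallyIntegrableOn_comp_sub_right hf hV hVΩ_shift
  suffices h : ∀ᵐ x ∂μ, x ∈ V → f (x - v) - f x = 0 from
    h.mono fun x hx hxV => sub_eq_zero.1 (hx hxV)
  refine hV.ae_eq_zero_of_integral_contDiff_smul_eq_zero (hf_shift.sub (hf.mono_set hVΩ))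
    fun φ hφ hc hsupp => ?_
  have hint := integrable_smul_of_tsupport_subset hf hφ.continuous hc (hsupp.trans hVΩ)
  have hint_shift := integrable_smul_of_tsupport_subset hf_shift hφ.continuous hc hsupp
  calc ∫ x, φ x • (f (x - v) - f x) ∂μ
      = (∫ x, φ x • f (x - v) ∂μ) - ∫ x, φ x • f x ∂μ := by
        simp only [smul_sub, integral_sub hint_shift hint]
    _ = (∫ x, φ (x + v) • f x ∂μ) - ∫ x, φ x • f x ∂μ := by
        congr 1
        simpa using integral_sub_right_eq_self (μ := μ) (fun x => φ (x + v) • f x) v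
    _ = 0 := sub_eq_zero.2 <|
        hweak.integral_comp_add_right hf hφ hc fun x hx => hsweep x (hsupp hx)

end WeakDerivative

lemma integrableAtFilter_nhds_of_locallyIntegrableOn {X F : Type*} [TopologicalSpace X]
    [MeasurableSpace X] {μ : Measure X} [NormedAddCommGroup F] {f : X → F} {Ω : Set X}
    (hf : LocallyIntegrableOn f Ω μ) (hΩ : IsOpen Ω) {x : X} (hx : x ∈ Ω) :
    IntegrableAtFilter f (𝓝 x) μ :=
  hΩ.nhdsWithin_eq hx ▸ hf x hx

lemma exists_isOpen_sweep_subset {E : Type*} [NormedAddCommGroup E] [NormedSpace ℝ E] {Ω : Set E}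
    (hΩ : IsOpen Ω) {y z : E} (hseg : segment ℝ y z ⊆ Ω) :
    ∃ V, IsOpen V ∧ z ∈ V ∧ ∀ x ∈ V, ∀ t ∈ Icc (0 : ℝ) 1, x - t • (z - y) ∈ Ω := by
  have hnear : ∀ᶠ x in 𝓝 z, ∀ t ∈ Icc (0 : ℝ) 1, x - t • (z - y) ∈ Ω := by
    refine isCompact_Icc.eventually_forall_of_forall_eventually fun t ht => ?_
    have hcont : Continuous fun p : E × ℝ => p.1 - p.2 • (z - y) := by fun_prop
    refine hcont.continuousAt.eventually (hΩ.mem_nhds (hseg ?_))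
    exact ⟨t, 1 - t, ht.1, sub_nonneg.2 ht.2, add_sub_cancel t 1, by module⟩
  obtain ⟨V, hVΩ, hV, hzV⟩ := _root_.eventually_nhds_iff.1 hnear
  exact ⟨V, hV, hzV, hVΩ⟩

section General

variable {E : Type*} [NormedAddCommGroup E] [NormedSpace ℝ E] [FiniteDimensional ℝ E]
  [MeasureSpace E] [BorelSpace E] [(volume : Measure E).IsAddRightInvariant]

lemma IsLebesguePoint.of_hasZeroWeakDirDeriv {F : Type*} [NormedAddCommGroup F] [NormedSpace ℝ F]
    [CompleteSpace F] {Ω : Set E} (hΩ : IsOpen Ω) {f : E → F} (hf : LocallyIntegrableOn f Ω)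
    {y z : E} (hseg : segment ℝ y z ⊆ Ω) (hweak : HasZeroWeakDirDeriv f (z - y) Ω volume) {a : F}
    (hy : IsLebesguePoint f y a) : IsLebesguePoint f z a := by
  obtain ⟨V, hV, hzV, hsweep⟩ := exists_isOpen_sweep_subset hΩ hseg
  have htranslate : IsLebesguePoint (fun x => f (x - (z - y))) z a :=
    IsLebesguePoint.comp_sub_right (by rwa [sub_sub_cancel])
  exact htranslate.congr_ae (hV.mem_nhds hzV) (hweak.ae_eq_comp_sub_right hf hV hsweep)

theorem ordering_of_level_sets_general [IsLocallyFiniteMeasure (volume : Measure E)]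
    [(volume : Measure E).IsOpenPosMeasure] {F : Type*} [NormedAddCommGroup F] [NormedSpace ℝ F]
    {Ω : Set E} (hΩ : IsOpen Ω) {u : E → F} (hu : LocallyIntegrableOn u Ω) (L : F →L[ℝ] ℝ) {y z : E}
    (hseg : segment ℝ y z ⊆ Ω)
    (hweak : HasZeroWeakDirDeriv (fun x => heaviside (L (u x))) (z - y) Ω volume)
    {uy uz : F} (huy : IsLebesguePoint u y uy) (huz : IsLebesguePoint u z uz) :
    (0 < L uy → 0 ≤ L uz) ∧ (L uy < 0 → L uz ≤ 0) ∧
      (L uy ≠ 0 → ∃ a : ℝ, IsLebesguePoint (fun x => heaviside (L (u x))) y a ∧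
        IsLebesguePoint (fun x => heaviside (L (u x))) z a) := by
  have hyΩ : y ∈ Ω := hseg (left_mem_segment ℝ y z)
  have hzΩ : z ∈ Ω := hseg (right_mem_segment ℝ y z)
  have hLu := L.locallyIntegrableOn_comp hu
  have hHLu := locallyIntegrableOn_heaviside_comp hLu
  have hHeaviside {x : E} (hx : x ∈ Ω) {a : F} (ha : L a ≠ 0) (hux : IsLebesguePoint u x a) :
      IsLebesguePoint (fun x => heaviside (L (u x))) x (heaviside (L a)) :=
    (hux.clm_comp L (integrableAtFilter_nhds_of_locallyIntegrableOn hu hΩ hx)).heaviside_comp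
      (integrableAtFilter_nhds_of_locallyIntegrableOn hLu hΩ hx) ha
  have htransport (hy : L uy ≠ 0) : IsLebesguePoint (fun x => heaviside (L (u x))) z
      (heaviside (L uy)) :=
    (hHeaviside hyΩ hy huy).of_hasZeroWeakDirDeriv hΩ hHLu hseg hweak
  have hsame (hy : L uy ≠ 0) (hz : L uz ≠ 0) : heaviside (L uy) = heaviside (L uz) :=
    (htransport hy).unique (integrableAtFilter_nhds_of_locallyIntegrableOn hHLu hΩ hzΩ)
      (hHeaviside hzΩ hz huz)
  refine ⟨fun hy => ?_, fun hy => ?_, fun hy => ⟨_, hHeaviside hyΩ hy huy, htransport hy⟩⟩ <;>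
    by_contra! hz
  · simpa [heaviside_of_pos hy, heaviside_of_nonpos hz.le] using hsame hy.ne' hz.ne
  · simpa [heaviside_of_pos hz, heaviside_of_nonpos hy.le] using hsame hy.ne hz.ne'

end General

lemma KineticFormulation.hasZeroWeakDirDeriv {N : ℕ} {Ω : Set (EuclideanSpace ℝ (Fin N))}
    {u : EuclideanSpace ℝ (Fin N) → EuclideanSpace ℝ (Fin N)} (hkin : KineticFormulation Ω u)
    {ξ v : EuclideanSpace ℝ (Fin N)} (hξ : ‖ξ‖ = 1) (hv : ⟪v, ξ⟫ = 0) :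
    HasZeroWeakDirDeriv (fun x => chi u x ξ) v Ω volume := by
  intro φ hφ hc hsupp
  have hgrad (x : EuclideanSpace ℝ (Fin N)) : ⟪v, gradient φ x⟫ = fderiv ℝ φ x v := by
    rw [real_inner_comm, inner_gradient_left]
  simpa only [hgrad, smul_eq_mul, mul_comm] using hkin ξ hξ v hv φ hφ hc hsupp

theorem ordering_of_level_sets (N : ℕ) (hN : 2 ≤ N)
    (Ω : Set (EuclideanSpace ℝ (Fin N))) (hΩ : IsOpen Ω)
    (u : EuclideanSpace ℝ (Fin N) → EuclideanSpace ℝ (Fin N))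
    (hloc : LocallyIntegrableOn u Ω volume)
    (hkin : KineticFormulation Ω u)
    (y z : EuclideanSpace ℝ (Fin N)) (hyz : y ≠ z) (hseg : segment ℝ y z ⊆ Ω)
    (uy uz : EuclideanSpace ℝ (Fin N))
    (hy : IsLebesguePoint u y uy) (hz : IsLebesguePoint u z uz)
    (ξ : EuclideanSpace ℝ (Fin N)) (hξ : ‖ξ‖ = 1) (hperp : ⟪ξ, z - y⟫ = 0) :
    (0 < ⟪uy, ξ⟫ → 0 ≤ ⟪uz, ξ⟫) ∧
    (⟪uy, ξ⟫ < 0 → ⟪uz, ξ⟫ ≤ 0) ∧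
    (⟪uy, ξ⟫ ≠ 0 → ∃ a : ℝ, IsLebesguePoint (fun x => chi u x ξ) y a ∧
      IsLebesguePoint (fun x => chi u x ξ) z a) := by
  exact ordering_of_level_sets_general hΩ hloc (innerSLFlip ℝ ξ) hseg
    (hkin.hasZeroWeakDirDeriv hξ (by rwa [real_inner_comm])) hy hz
end
end

section
/- Let N ≥ 2, Ω ⊆ ℝ^N an open set containing the segment L = {0}^{N−1} × [−1, 1], and u : Ω → ℝ^N a Lebesgue measurable vector field with |u| = 1 a.e. satisfying the kinetic formulation. Then there exists a Lebesgue measurable function ũ : (−1, 1) → ℝ^N (the trace of u on L) such that: (i) lim_{r→0⁺} ⨍_{(−r,r)^{N−1}} ∫_{−1}^{1} |u(x′, x_N) − ũ(x_N)| dx_N dx′ = 0; (ii) |ũ(x_N)| = 1 for a.e. x_N ∈ (−1, 1) and ũ(x_N) = lim_{r→0⁺} ⨍_{(−r,r)^{N−1}} u(x′, x_N) dx′ for a.e. x_N; (iii) whenever a point x = (0, …, 0, x_N) ∈ L with x_N ∈ (−1,1) is a Lebesgue point of u with value u(x), then x_N is a Lebesgue point of ũ with value ũ(x_N) = u(x).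 -/
open MeasureTheory Metric Set Filter
open scoped RealInnerProductSpace ENNReal Topology

noncomputable section

/-- The point of the Euclidean space whose first N-1 coordinates are given by y and whose
last coordinate is t. -/
def ins (N : ℕ) (y : Fin (N - 1) → ℝ) (t : ℝ) : EuclideanSpace ℝ (Fin N) :=
  (WithLp.equiv 2 (Fin N → ℝ)).symm
    (fun j => if h : (j : ℕ) < N - 1 then y ⟨j, h⟩ else t)

/-- The open cube of half-side r in the first N-1 variables. -/
def cube (N : ℕ) (r : ℝ) : Set (Fin (N - 1) → ℝ) :=
  Set.univ.pi fun _ => Ioo (-r) r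

/-!
The kinetic formulation says that, for each direction `ξ`, the set `{u · ξ > 0}` is locally, up to a
null set, invariant under translations orthogonal to `ξ`; hence it is locally `{x | x · ξ ∈ G}` for
a measurable set `G ⊆ ℝ`. If `ξ` is transversal to `{x_N = 0}`, almost every point of `L` is a point
of density zero or one of this set within the slice at its height. Applied to a countable dense set
of directions `ξ`, this determines an approximate limit of `u` on almost every slice, because a unit
vector is determined by the signs of its inner products with a dense set of directions. The trace
is the precise representative of these approximate limits: at a point of `L` where `u` itself has an
approximate limit `w`, the sets `G` also have the density prescribed by `w`, so the slice limits
tend to `w` approximately.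
-/

theorem eventually_nhds_inf_ae_iff {X : Type*} [TopologicalSpace X] [MeasurableSpace X]
    {μ : Measure X} {x : X} {p : X → Prop} :
    (∀ᶠ y in 𝓝 x ⊓ ae μ, p y) ↔ ∃ U ∈ 𝓝 x, ∀ᵐ y ∂μ, y ∈ U → p y := by
  rw [eventually_inf]
  constructor
  · rintro ⟨U, hU, t, ht, h⟩
    exact ⟨U, hU, mem_of_superset ht fun y hy hyU => h y ⟨hyU, hy⟩⟩
  · rintro ⟨U, hU, h⟩
    exact ⟨U, hU, _, h, fun y hy => hy.2 hy.1⟩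

section NullDensity

/-- The set `A` has Lebesgue density zero at the point `x`. -/
def NullDensityAt {E : Type*} [MeasureSpace E] [PseudoMetricSpace E] (A : Set E) (x : E) : Prop :=
  Tendsto (fun r : ℝ => volume.real (A ∩ ball x r) / volume.real (ball x r)) (𝓝[>] 0) (𝓝 0)

/-- The function `f` has approximate limit `w` at `x`: each superlevel set of `‖f - w‖` has Lebesgue
density zero at `x`. Unlike Lebesgue points, approximate limits require no integrability. -/
def IsApproxLimit {E : Type*} [MeasureSpace E] [PseudoMetricSpace E] {F : Type*}
    [NormedAddCommGroup F] (f : E → F) (x : E) (w : F) : Prop :=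
  ∀ ε > 0, NullDensityAt {y | ε ≤ ‖f y - w‖} x

variable {E : Type*} [MeasureSpace E] [PseudoMetricSpace E] {A B : Set E} {x : E}

theorem ae_restrict_ball_of_eventually [OpensMeasurableSpace E] {p : E → Prop}
    (h : ∀ᶠ y in 𝓝 x ⊓ ae volume, p y) :
    ∀ᶠ r in 𝓝[>] (0 : ℝ), ∀ᵐ y ∂volume.restrict (ball x r), p y := by
  obtain ⟨U, hU, hp⟩ := eventually_nhds_inf_ae_iff.1 h
  obtain ⟨δ, hδ, hδU⟩ := Metric.mem_nhds_iff.1 hU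
  filter_upwards [Ioo_mem_nhdsGT hδ] with r hr
  filter_upwards [ae_restrict_of_ae hp, ae_restrict_mem measurableSet_ball] with y hy hyr
  exact hy (hδU (ball_subset_ball hr.2.le hyr))

theorem nullDensityAt_empty : NullDensityAt ∅ x := by
  simp [NullDensityAt]

theorem NullDensityAt.union (hA : NullDensityAt A x) (hB : NullDensityAt B x) :
    NullDensityAt (A ∪ B) x := by
  have hAB := Tendsto.add hA hB
  rw [add_zero] at hAB
  refine squeeze_zero (fun r => by positivity) (fun r => ?_) hAB
  rw [union_inter_distrib_right, ← add_div]
  gcongr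
  exact measureReal_union_le _ _

theorem nullDensityAt_biUnion_finset {ι : Type*} {s : Finset ι} {A : ι → Set E}
    (h : ∀ i ∈ s, NullDensityAt (A i) x) : NullDensityAt (⋃ i ∈ s, A i) x := by
  classical
  induction s using Finset.induction_on with
  | empty => simpa using nullDensityAt_empty
  | insert i s _ ih =>
    rw [Finset.set_biUnion_insert]
    exact (h i (Finset.mem_insert_self i s)).union
      (ih fun j hj => h j (Finset.mem_insert_of_mem hj))

variable [ProperSpace E] [IsFiniteMeasureOnCompacts (volume : Measure E)]

theorem NullDensityAt.mono (hB : NullDensityAt B x)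
    (h : ∀ᶠ y in 𝓝 x ⊓ ae volume, y ∈ A → y ∈ B) : NullDensityAt A x := by
  obtain ⟨U, hU, hAB⟩ := eventually_nhds_inf_ae_iff.1 h
  obtain ⟨δ, hδ, hδU⟩ := Metric.mem_nhds_iff.1 hU
  refine squeeze_zero' (.of_forall fun r => by positivity) ?_ hB
  filter_upwards [Ioo_mem_nhdsGT hδ] with r hr
  gcongr ?_ / _
  refine ENNReal.toReal_mono (measure_lt_top_mono inter_subset_right measure_ball_lt_top).ne
    (measure_mono_ae ?_)
  filter_upwards [hAB] with y hy hyA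
  exact ⟨hy (hδU (ball_subset_ball hr.2.le hyA.2)) hyA.1, hyA.2⟩

theorem NullDensityAt.subset (hB : NullDensityAt B x) (h : A ⊆ B) : NullDensityAt A x :=
  hB.mono (.of_forall fun _ hy => h hy)

theorem IsLebesguePoint.isApproxLimit [OpensMeasurableSpace E] {F : Type*} [NormedAddCommGroup F]
    {f : E → F} {w : F} (hf : IsLebesguePoint f x w)
    (hfi : ∀ᶠ r in 𝓝[>] (0 : ℝ), IntegrableOn f (ball x r)) : IsApproxLimit f x w := by
  intro ε hε
  have hdiv := Tendsto.div_const hf ε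
  rw [zero_div] at hdiv
  refine squeeze_zero' (.of_forall fun r => by positivity) ?_ hdiv
  filter_upwards [hfi] with r hfr
  have h_int : IntegrableOn (fun y => ‖f y - w‖) (ball x r) :=
    (hfr.sub (integrableOn_const measure_ball_lt_top.ne)).norm
  have hmarkov := mul_meas_ge_le_integral_of_nonneg (.of_forall fun y => norm_nonneg _) h_int ε
  rw [measureReal_restrict_apply' measurableSet_ball] at hmarkov
  rw [setAverage_eq, smul_eq_mul, inv_mul_eq_div, div_right_comm]
  gcongr
  rwa [le_div_iff₀' hε]

variable [(volume : Measure E).IsOpenPosMeasure]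

theorem measureReal_ball_pos {r : ℝ} (hr : 0 < r) (x : E) : 0 < volume.real (ball x r) :=
  ENNReal.toReal_pos (measure_ball_pos volume x hr).ne' measure_ball_lt_top.ne

theorem NullDensityAt.frequently_notMem (hA : NullDensityAt A x) :
    ∃ᶠ y in 𝓝 x ⊓ ae volume, y ∉ A := by
  intro h
  have huniv : NullDensityAt univ x := hA.mono (h.mono fun y hy _ => not_not.1 hy)
  refine zero_ne_one (tendsto_nhds_unique huniv (tendsto_const_nhds.congr' ?_))
  filter_upwards [self_mem_nhdsWithin] with r hr
  rw [univ_inter, div_self (measureReal_ball_pos hr x).ne']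

theorem setAverage_ball_norm_sub_le [OpensMeasurableSpace E] {F : Type*} [NormedAddCommGroup F]
    {f : E → F} {M r ε : ℝ} (hf : StronglyMeasurable f) (hr : 0 < r) (hε : 0 ≤ ε)
    (hM : ∀ᵐ y ∂volume.restrict (ball x r), ‖f y‖ ≤ M) (w : F) :
    ⨍ y in ball x r, ‖f y - w‖ ≤
      ε + volume.real ({y | ε ≤ ‖f y - w‖} ∩ ball x r) / volume.real (ball x r) * (M + ‖w‖) := by
  set A := {y | ε ≤ ‖f y - w‖}
  have hA : MeasurableSet A :=
    measurableSet_le measurable_const (hf.sub stronglyMeasurable_const).norm.measurable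
  have hconst (c : ℝ) : Integrable (fun _ => c) (volume.restrict (ball x r)) :=
    integrableOn_const measure_ball_lt_top.ne
  have hle : ∫ y in ball x r, ‖f y - w‖ ≤
      ∫ y in ball x r, (ε + A.indicator (fun _ => M + ‖w‖) y) := by
    refine integral_mono_of_nonneg (.of_forall fun y => norm_nonneg _)
      ((hconst ε).add ((hconst _).indicator hA)) ?_
    filter_upwards [hM] with y hy
    by_cases hyA : y ∈ A
    · rw [indicator_of_mem hyA]
      linarith [norm_sub_le (f y) w]
    · rw [indicator_of_notMem hyA, add_zero]
      exact (not_le.1 hyA).le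
  rw [integral_add (hconst ε) ((hconst _).indicator hA), setIntegral_const,
    integral_indicator_const _ hA, measureReal_restrict_apply' measurableSet_ball] at hle
  have hpos := measureReal_ball_pos hr x
  rw [setAverage_eq, smul_eq_mul, inv_mul_le_iff₀ hpos]
  refine hle.trans_eq ?_
  simp only [smul_eq_mul]
  field_simp

theorem IsApproxLimit.isLebesguePoint [OpensMeasurableSpace E] {F : Type*}
    [NormedAddCommGroup F] {f : E → F} {w : F} {M : ℝ} (h : IsApproxLimit f x w)
    (hf : StronglyMeasurable f) (hM : ∀ᶠ y in 𝓝 x ⊓ ae volume, ‖f y‖ ≤ M) :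
    IsLebesguePoint f x w := by
  refine tendsto_order.2 ⟨fun a ha => .of_forall fun r => ha.trans_le ?_, fun a ha => ?_⟩
  · exact integral_nonneg fun y => norm_nonneg _
  · have hlim := ((h (a / 2) (half_pos ha)).mul_const (M + ‖w‖)).const_add (a / 2)
    rw [zero_mul, add_zero] at hlim
    filter_upwards [hlim.eventually_lt_const (half_lt_self ha),
      ae_restrict_ball_of_eventually hM, self_mem_nhdsWithin] with r hlt hMr hr
    exact (setAverage_ball_norm_sub_le hf hr (half_pos ha).le hMr w).trans_lt hlt

theorem IsApproxLimit.norm_eq {F : Type*} [NormedAddCommGroup F] {f : E → F} {w : F} {c : ℝ}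
    (h : IsApproxLimit f x w) (hf : ∀ᶠ y in 𝓝 x ⊓ ae volume, ‖f y‖ = c) : ‖w‖ = c := by
  by_contra hne
  have hpos : 0 < |c - ‖w‖| := abs_pos.2 (sub_ne_zero.2 (Ne.symm hne))
  obtain ⟨y, hy, hyc⟩ := ((h _ hpos).frequently_notMem.and_eventually hf).exists
  exact hy (hyc ▸ abs_norm_sub_norm_le (f y) w)

end NullDensity

section UnitField

variable {V : Type*} [NormedAddCommGroup V] [InnerProductSpace ℝ V]

theorem exists_mem_dense_inner_pos_inner_neg {D : Set V} (hD : Dense D) {w q : V} (hw : ‖w‖ = 1)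
    (hq : ‖q‖ = 1) (hwq : w ≠ q) : ∃ ξ ∈ D, 0 < ⟪w, ξ⟫ ∧ ⟪q, ξ⟫ < 0 := by
  have hlt : ⟪w, q⟫ < 1 := (inner_lt_one_iff_real_of_norm_eq_one hw hq).2 hwq
  have hopen : IsOpen {ξ : V | 0 < ⟪w, ξ⟫ ∧ ⟪q, ξ⟫ < 0} :=
    .and (isOpen_lt continuous_const (by fun_prop)) (isOpen_lt (by fun_prop) continuous_const)
  refine hD.exists_mem_open hopen ⟨w - q, ?_, ?_⟩
  · simpa [inner_sub_right, hw] using hlt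
  · simpa [inner_sub_right, hq, real_inner_comm] using hlt

variable {E : Type*} [MeasureSpace E] [PseudoMetricSpace E] [ProperSpace E]
  [IsFiniteMeasureOnCompacts (volume : Measure E)] {f : E → V} {x : E} {w : V}

theorem IsApproxLimit.nullDensityAt_inner_nonpos (h : IsApproxLimit f x w) {ξ : V}
    (hξ : 0 < ⟪w, ξ⟫) : NullDensityAt {y | ⟪f y, ξ⟫ ≤ 0} x := by
  have hξ0 : 0 < ‖ξ‖ := norm_pos_iff.2 fun h0 => by simp [h0] at hξ
  refine (h (⟪w, ξ⟫ / ‖ξ‖) (div_pos hξ hξ0)).subset fun y (hy : ⟪f y, ξ⟫ ≤ 0) => ?_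
  refine (div_le_iff₀ hξ0).2 ?_
  calc ⟪w, ξ⟫ ≤ ⟪w - f y, ξ⟫ := by rw [inner_sub_left]; linarith
    _ ≤ ‖w - f y‖ * ‖ξ‖ := real_inner_le_norm _ _
    _ = ‖f y - w‖ * ‖ξ‖ := by rw [norm_sub_rev]

variable [ProperSpace V]

theorem isApproxLimit_of_inner_neg {D : Set V} (hD : Dense D)
    (hunit : ∀ᶠ y in 𝓝 x ⊓ ae volume, ‖f y‖ = 1) (hw : ‖w‖ = 1)
    (h : ∀ ξ ∈ D, 0 < ⟪w, ξ⟫ → NullDensityAt {y | ⟪f y, ξ⟫ < 0} x) : IsApproxLimit f x w := by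
  intro ε hε
  obtain ⟨s, hs⟩ := ((isCompact_sphere (0 : V) 1).diff isOpen_ball).elim_finite_subcover
    (fun ξ : {ξ // ξ ∈ D ∧ 0 < ⟪w, ξ⟫} => {q | ⟪q, ξ⟫ < 0})
    (fun ξ => isOpen_lt (by fun_prop) continuous_const)
    (fun q (hq : q ∈ sphere 0 1 \ ball w ε) => by
      have hwq : w ≠ q := fun h => hq.2 (h ▸ mem_ball_self hε)
      obtain ⟨ξ, hξD, hξw, hξq⟩ :=
        exists_mem_dense_inner_pos_inner_neg hD hw (mem_sphere_zero_iff_norm.1 hq.1) hwq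
      exact mem_iUnion.2 ⟨⟨ξ, hξD, hξw⟩, hξq⟩)
  refine (nullDensityAt_biUnion_finset (s := s) fun ξ _ => h ξ ξ.2.1 ξ.2.2).mono ?_
  filter_upwards [hunit] with y hy hyε
  simpa using hs ⟨mem_sphere_zero_iff_norm.2 hy, by simpa [dist_eq_norm] using hyε⟩

variable [(volume : Measure E).IsOpenPosMeasure]

theorem exists_norm_eq_one_forall_inner_nonneg (hunit : ∀ᶠ y in 𝓝 x ⊓ ae volume, ‖f y‖ = 1) :
    ∃ w : V, ‖w‖ = 1 ∧ ∀ ξ, NullDensityAt {y | ⟪f y, ξ⟫ < 0} x → 0 ≤ ⟪w, ξ⟫ := by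
  obtain ⟨w, hw, hwξ⟩ := (isCompact_sphere (0 : V) 1).inter_iInter_nonempty
    (fun ξ : {ξ // NullDensityAt {y | ⟪f y, ξ⟫ < 0} x} => {q | 0 ≤ ⟪q, ξ⟫})
    (fun ξ => isClosed_le continuous_const (by fun_prop)) (fun s => by
      obtain ⟨y, hys, hy⟩ := ((nullDensityAt_biUnion_finset (s := s)
        fun ξ _ => ξ.2).frequently_notMem.and_eventually hunit).exists
      exact ⟨f y, mem_sphere_zero_iff_norm.2 hy, by simpa using hys⟩)
  exact ⟨w, mem_sphere_zero_iff_norm.1 hw, fun ξ hξ => mem_iInter.1 hwξ ⟨ξ, hξ⟩⟩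

theorem exists_isApproxLimit_of_inner_signs {D : Set V} (hD : Dense D)
    (hunit : ∀ᶠ y in 𝓝 x ⊓ ae volume, ‖f y‖ = 1)
    (h : ∀ ξ ∈ D, NullDensityAt {y | ⟪f y, ξ⟫ ≤ 0} x ∨ NullDensityAt {y | 0 < ⟪f y, ξ⟫} x) :
    ∃ w, IsApproxLimit f x w := by
  obtain ⟨w, hw, hwξ⟩ := exists_norm_eq_one_forall_inner_nonneg hunit
  refine ⟨w, isApproxLimit_of_inner_neg hD hunit hw fun ξ hξ hpos => ?_⟩
  refine (h ξ hξ).elim (fun hle => hle.subset fun y hy => (mem_ofPred.1 hy).le) fun hlt => ?_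
  have := hwξ (-ξ) (by simpa using hlt)
  rw [inner_neg_right] at this
  linarith

end UnitField

section LebesgueDifferentiation

variable {E : Type*} [NormedAddCommGroup E] [NormedSpace ℝ E] [FiniteDimensional ℝ E]
  [MeasureSpace E] [BorelSpace E] [(volume : Measure E).IsAddHaarMeasure]

theorem ae_isLebesguePoint {F : Type*} [NormedAddCommGroup F] {f : E → F}
    (hf : LocallyIntegrable f) : ∀ᵐ x, IsLebesguePoint f x (f x) := by
  filter_upwards [IsUnifLocDoublingMeasure.ae_tendsto_average_norm_sub volume hf 1] with x hx
  have hclosed := hx (fun _ : ℝ => x) id tendsto_id (by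
    filter_upwards [self_mem_nhdsWithin] with r hr
    exact mem_closedBall_self (by simpa using le_of_lt hr))
  refine hclosed.congr' ?_
  filter_upwards [self_mem_nhdsWithin] with r hr
  have hsphere := ae_eq_empty.2 (Measure.addHaar_sphere_of_ne_zero volume x (ne_of_gt hr))
  refine setAverage_congr ?_
  rw [id, ← ball_union_sphere]
  exact union_ae_eq_left_of_ae_eq_empty hsphere

theorem ae_nullDensityAt_of_notMem {A : Set E} (hA : MeasurableSet A) :
    ∀ᵐ x, x ∉ A → NullDensityAt A x := by
  have h_int : LocallyIntegrable (A.indicator fun _ => (1 : ℝ)) (volume : Measure E) :=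
    (locallyIntegrable_const 1).indicator hA
  filter_upwards [ae_isLebesguePoint h_int] with x hx hxA
  rw [indicator_of_notMem hxA] at hx
  have h1 := hx.isApproxLimit (.of_forall fun r =>
    (h_int.integrableOn_isCompact (isCompact_closedBall x r)).mono_set ball_subset_closedBall)
    1 one_pos
  refine h1.subset fun y hy => ?_
  simp [hy]

end LebesgueDifferentiation

section Product

variable {E F : Type*} [MeasureSpace E] [PseudoMetricSpace E] [MeasureSpace F]
  [PseudoMetricSpace F] [SFinite (volume : Measure F)] {p : E × F}

theorem nullDensityAt_preimage_fst_iff [ProperSpace F]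
    [IsFiniteMeasureOnCompacts (volume : Measure F)] [(volume : Measure F).IsOpenPosMeasure]
    {A : Set E} :
    NullDensityAt (Prod.fst ⁻¹' A) p ↔ NullDensityAt A p.1 := by
  refine tendsto_congr' ?_
  filter_upwards [self_mem_nhdsWithin] with r hr
  have hset : Prod.fst ⁻¹' A ∩ ball p r = (A ∩ ball p.1 r) ×ˢ ball p.2 r := by
    rw [← Prod.eta p, ← ball_prod_same]
    ext
    simp [and_assoc]
  rw [hset, ← Prod.eta p, ← ball_prod_same, Measure.volume_eq_prod, measureReal_prod_prod,
    measureReal_prod_prod, mul_div_mul_right _ _ (measureReal_ball_pos hr p.2).ne']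

theorem nullDensityAt_preimage_snd_iff [ProperSpace E]
    [IsFiniteMeasureOnCompacts (volume : Measure E)] [(volume : Measure E).IsOpenPosMeasure]
    {A : Set F} :
    NullDensityAt (Prod.snd ⁻¹' A) p ↔ NullDensityAt A p.2 := by
  refine tendsto_congr' ?_
  filter_upwards [self_mem_nhdsWithin] with r hr
  have hset : Prod.snd ⁻¹' A ∩ ball p r = ball p.1 r ×ˢ (A ∩ ball p.2 r) := by
    rw [← Prod.eta p, ← ball_prod_same]
    ext
    simp only [mem_inter_iff, mem_preimage, mem_prod]
    tauto
  rw [hset, ← Prod.eta p, ← ball_prod_same, Measure.volume_eq_prod, measureReal_prod_prod,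
    measureReal_prod_prod, mul_div_mul_left _ _ (measureReal_ball_pos hr p.1).ne']

end Product

theorem nullDensityAt_preimage_const_add_iff {E : Type*} [NormedAddCommGroup E] [MeasureSpace E]
    [BorelSpace E] [(volume : Measure E).IsAddHaarMeasure] {A : Set E} {b x : E} :
    NullDensityAt ((b + ·) ⁻¹' A) x ↔ NullDensityAt A (b + x) := by
  refine tendsto_congr fun r => ?_
  have hball : ball x r = (b + ·) ⁻¹' ball (b + x) r := by ext; simp
  rw [hball, ← preimage_inter, measureReal_def, measureReal_def, measure_preimage_add,
    measure_preimage_add, ← measureReal_def, ← measureReal_def]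

section LinearPreimage

variable {E F : Type*} [NormedAddCommGroup E] [NormedSpace ℝ E] [FiniteDimensional ℝ E]
  [MeasureSpace E] [BorelSpace E] [(volume : Measure E).IsAddHaarMeasure]
  [NormedAddCommGroup F] [NormedSpace ℝ F] [FiniteDimensional ℝ F]
  [MeasureSpace F] [BorelSpace F] [(volume : Measure F).IsAddHaarMeasure]

theorem NullDensityAt.preimage_continuousLinearEquiv {A : Set E} {x : E} (e : E ≃L[ℝ] E)
    (hA : NullDensityAt A (e x)) : NullDensityAt (e ⁻¹' A) x := by
  set K : ℝ := ‖(e : E →L[ℝ] E)‖ + 1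
  have hK : 0 < K := by positivity
  have hscale : Tendsto (fun r => K * r) (𝓝[>] 0) (𝓝[>] 0) := by
    refine tendsto_nhdsWithin_iff.2 ⟨?_, ?_⟩
    · exact (Continuous.tendsto' (by fun_prop) _ _ (mul_zero K)).mono_left nhdsWithin_le_nhds
    · filter_upwards [self_mem_nhdsWithin] with r hr using mul_pos hK hr
  set c : ℝ := |LinearMap.det (e.symm : E →ₗ[ℝ] E)|
  have hlim := (Tendsto.comp hA hscale).const_mul (c * K ^ Module.finrank ℝ E)
  rw [mul_zero] at hlim
  refine squeeze_zero' (.of_forall fun r => by positivity) ?_ hlim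
  filter_upwards [self_mem_nhdsWithin] with r hr
  have hsub : e ⁻¹' A ∩ ball x r ⊆ e ⁻¹' (A ∩ ball (e x) (K * r)) := by
    refine fun y hy => ⟨hy.1, mem_ball.2 ?_⟩
    calc dist (e y) (e x) ≤ ‖(e : E →L[ℝ] E)‖ * dist y x := (e : E →L[ℝ] E).dist_le_opNorm y x
      _ ≤ ‖(e : E →L[ℝ] E)‖ * r := by gcongr; exact (mem_ball.1 hy.2).le
      _ < K * r := by gcongr; exact lt_add_one _
  have hmeas : volume.real (e ⁻¹' A ∩ ball x r) ≤ c * volume.real (A ∩ ball (e x) (K * r)) := by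
    have hfin : volume (e ⁻¹' (A ∩ ball (e x) (K * r))) ≠ ∞ := by
      rw [Measure.addHaar_preimage_continuousLinearEquiv]
      exact ENNReal.mul_ne_top ENNReal.ofReal_ne_top
        (measure_lt_top_mono inter_subset_right measure_ball_lt_top).ne
    refine (measureReal_mono hsub hfin).trans_eq ?_
    rw [measureReal_def, Measure.addHaar_preimage_continuousLinearEquiv, ENNReal.toReal_mul,
      ENNReal.toReal_ofReal (abs_nonneg _), ← measureReal_def]
  have hball : volume.real (ball (e x) (K * r)) =
      K ^ Module.finrank ℝ E * volume.real (ball x r) := by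
    rw [Measure.addHaar_real_ball_center _ x, measureReal_def,
      Measure.addHaar_ball_mul_of_pos _ _ hK, ENNReal.toReal_mul,
      ENNReal.toReal_ofReal (by positivity), ← measureReal_def]
  have hpos := measureReal_ball_pos hr x
  rw [Function.comp_apply, hball]
  field_simp
  exact hmeas

instance isAddHaarMeasure_volume_prod : (volume : Measure (E × F)).IsAddHaarMeasure :=
  inferInstanceAs ((volume : Measure E).prod (volume : Measure F)).IsAddHaarMeasure

-- With `σ` a right inverse of `L`, the isomorphism `(y, s) ↦ (y + σ s, L y)` pulls `Prod.snd ⁻¹' A`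
-- back to `Prod.fst ⁻¹' (L ⁻¹' A)`.
theorem nullDensityAt_preimage_continuousLinearMap_iff {A : Set F} {x : E} {L : E →L[ℝ] F}
    (hL : Function.Surjective L) : NullDensityAt (L ⁻¹' A) x ↔ NullDensityAt A (L x) := by
  obtain ⟨σ, hσ⟩ := L.exists_rightInverse_of_surjective (LinearMap.range_eq_top.2 hL)
  have hLσ (s : F) : L (σ s) = s := DFunLike.congr_fun hσ s
  let fst := ContinuousLinearMap.fst ℝ E F
  let snd := ContinuousLinearMap.snd ℝ E F
  let Φ : (E × F) ≃L[ℝ] E × F := .equivOfInverse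
    ((fst + σ ∘L snd).prod (L ∘L fst)) ((fst - σ ∘L (L ∘L fst - snd)).prod (L ∘L fst - snd))
    (fun p => by ext <;> simp [fst, snd, hLσ]) (fun p => by ext <;> simp [fst, snd, hLσ])
  calc NullDensityAt (L ⁻¹' A) x
      ↔ NullDensityAt (Φ ⁻¹' (Prod.snd ⁻¹' A)) (x, (0 : F)) :=
        (nullDensityAt_preimage_fst_iff (p := (x, (0 : F)))).symm
    _ ↔ NullDensityAt (Prod.snd ⁻¹' A) (Φ (x, 0)) := by
        refine ⟨fun h => ?_, NullDensityAt.preimage_continuousLinearEquiv Φ⟩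
        have h' := NullDensityAt.preimage_continuousLinearEquiv (x := Φ (x, 0)) Φ.symm
          (by rwa [Φ.symm_apply_apply])
        rwa [← preimage_comp, Φ.self_comp_symm] at h'
    _ ↔ NullDensityAt A (L x) := nullDensityAt_preimage_snd_iff

end LinearPreimage

section PreciseValue

variable {E F : Type*} [MeasureSpace E] [PseudoMetricSpace E] [NormedAddCommGroup F]
  [NormedSpace ℝ F]

/-- The precise value of `f` at `x`: the limit of the averages of `f` over the balls of radius
`1 / (k + 1)` centered at `x`, and a junk value if these averages diverge. Restricting to a sequence
of radii makes `preciseValue` measurable in parameters. -/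
def preciseValue (f : E → F) (x : E) : F :=
  limUnder atTop fun k : ℕ => ⨍ y in ball x (1 / (k + 1)), f y

theorem IsLebesguePoint.tendsto_average [CompleteSpace F] [ProperSpace E]
    [IsFiniteMeasureOnCompacts (volume : Measure E)] [(volume : Measure E).IsOpenPosMeasure]
    {f : E → F} {x : E} {w : F} (h : IsLebesguePoint f x w)
    (hf : ∀ᶠ r in 𝓝[>] (0 : ℝ), IntegrableOn f (ball x r)) :
    Tendsto (fun r : ℝ => ⨍ y in ball x r, f y) (𝓝[>] 0) (𝓝 w) := by
  refine tendsto_iff_norm_sub_tendsto_zero.2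
    (squeeze_zero' (.of_forall fun r => norm_nonneg _) ?_ h)
  filter_upwards [hf, self_mem_nhdsWithin] with r hfr hr
  have hvol : volume (ball x r) ≠ ∞ := measure_ball_lt_top.ne
  have hw : ⨍ _ in ball x r, w = w := setAverage_const (measure_ball_pos volume x hr).ne' hvol w
  calc ‖(⨍ y in ball x r, f y) - w‖ = ‖⨍ y in ball x r, (f y - w)‖ := by
        conv_lhs => rw [← hw]
        simp only [setAverage_eq]
        rw [integral_sub hfr (integrableOn_const hvol), smul_sub]
    _ ≤ ⨍ y in ball x r, ‖f y - w‖ := norm_integral_le_integral_norm _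

theorem preciseValue_eq_of_tendsto {f : E → F} {x : E} {w : F}
    (h : Tendsto (fun r : ℝ => ⨍ y in ball x r, f y) (𝓝[>] 0) (𝓝 w)) :
    preciseValue f x = w := by
  have hseq : Tendsto (fun k : ℕ => 1 / ((k : ℝ) + 1)) atTop (𝓝[>] 0) :=
    tendsto_nhdsWithin_iff.2 ⟨tendsto_one_div_add_atTop_nhds_zero_nat,
      .of_forall fun k => mem_Ioi.2 Nat.one_div_pos_of_nat⟩
  exact (h.comp hseq).limUnder_eq

variable [SFinite (volume : Measure E)] [OpensMeasurableSpace E] [SecondCountableTopology E]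
  {T : Type*} [MeasurableSpace T] {G : T → E → F} {c : T → E}

theorem stronglyMeasurable_setAverage_ball (hG : StronglyMeasurable (Function.uncurry G))
    (hc : Measurable c) (r : ℝ) : StronglyMeasurable fun t => ⨍ y in ball (c t) r, G t y := by
  have hball : MeasurableSet {p : T × E | p.2 ∈ ball (c p.1) r} :=
    measurableSet_lt (measurable_snd.dist (hc.comp measurable_fst)) measurable_const
  have hvol : Measurable fun t => volume.real (ball (c t) r) :=
    (measurable_measure_prodMk_left hball).ennreal_toReal
  have h_int : StronglyMeasurable fun t => ∫ y in ball (c t) r, G t y := by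
    simp only [← integral_indicator measurableSet_ball]
    exact (hG.indicator hball).integral_prod_right'
  simp only [setAverage_eq]
  exact hvol.inv.stronglyMeasurable.smul h_int

theorem stronglyMeasurable_preciseValue [CompleteSpace F]
    (hG : StronglyMeasurable (Function.uncurry G)) (hc : Measurable c) :
    StronglyMeasurable fun t => preciseValue (G t) (c t) :=
  StronglyMeasurable.limUnder fun _ => stronglyMeasurable_setAverage_ball hG hc _

end PreciseValue

section DominatedAverages

variable {E F T : Type*} [MeasureSpace E] [PseudoMetricSpace E] [NormedAddCommGroup F]
  [NormedSpace ℝ F] [ProperSpace E] [IsFiniteMeasureOnCompacts (volume : Measure E)] {x : E}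
  {M r : ℝ}

theorem norm_setAverage_ball_le {f : E → F} (hM₀ : 0 ≤ M)
    (hM : ∀ᵐ y ∂volume.restrict (ball x r), ‖f y‖ ≤ M) : ‖⨍ y in ball x r, f y‖ ≤ M := by
  rw [setAverage_eq, norm_smul, norm_inv, Real.norm_of_nonneg measureReal_nonneg, inv_mul_eq_div]
  exact div_le_of_le_mul₀ measureReal_nonneg hM₀
    (norm_setIntegral_le_of_norm_le_const_ae measure_ball_lt_top hM)

variable [MeasurableSpace T] {μ : Measure T} [IsFiniteMeasure μ]
  {G : E × T → F}

theorem setAverage_ball_integral_comm (hG : StronglyMeasurable G)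
    (hM : ∀ᵐ t ∂μ, ∀ᵐ y ∂volume.restrict (ball x r), ‖G (y, t)‖ ≤ M) :
    ⨍ y in ball x r, (∫ t, G (y, t) ∂μ) = ∫ t, (⨍ y in ball x r, G (y, t)) ∂μ := by
  have : IsFiniteMeasure (volume.restrict (ball x r)) :=
    isFiniteMeasure_restrict.2 measure_ball_lt_top.ne
  have hset : MeasurableSet {p | ‖G p‖ ≤ M} :=
    measurableSet_le hG.norm.measurable measurable_const
  have h_int : Integrable G ((volume.restrict (ball x r)).prod μ) :=
    .of_bound hG.aestronglyMeasurable M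
      ((Measure.ae_prod_mem_iff_ae_ae_mem hset).2 ((Measure.ae_ae_comm hset).2 hM))
  simp only [setAverage_eq]
  rw [integral_smul, integral_integral_swap (f := fun y t => G (y, t)) h_int]

theorem tendsto_setAverage_ball_integral [OpensMeasurableSpace E] [SecondCountableTopology E]
    {g : T → F} (hG : StronglyMeasurable G)
    (hM : ∀ᶠ r in 𝓝[>] (0 : ℝ), ∀ᵐ t ∂μ, ∀ᵐ y ∂volume.restrict (ball x r), ‖G (y, t)‖ ≤ M)
    (hg : ∀ᵐ t ∂μ, Tendsto (fun r => ⨍ y in ball x r, G (y, t)) (𝓝[>] 0) (𝓝 (g t))) :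
    Tendsto (fun r => ⨍ y in ball x r, (∫ t, G (y, t) ∂μ)) (𝓝[>] 0) (𝓝 (∫ t, g t ∂μ)) := by
  have hlim : Tendsto (fun r => ∫ t, (⨍ y in ball x r, G (y, t)) ∂μ) (𝓝[>] 0)
      (𝓝 (∫ t, g t ∂μ)) := by
    refine tendsto_integral_filter_of_dominated_convergence (fun _ => |M|) ?_ ?_
      (integrable_const _) hg
    · exact .of_forall fun r => (stronglyMeasurable_setAverage_ball (G := fun t y => G (y, t))
        (hG.comp_measurable measurable_swap) measurable_const r).aestronglyMeasurable
    · filter_upwards [hM] with r hr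
      filter_upwards [hr] with t ht
      exact norm_setAverage_ball_le (abs_nonneg M) (ht.mono fun y hy => hy.trans (le_abs_self M))
  refine hlim.congr' ?_
  filter_upwards [hM] with r hr using (setAverage_ball_integral_comm hG hr).symm

end DominatedAverages

section WeakTranslationInvariance

variable {E F : Type*} [NormedAddCommGroup E] [NormedSpace ℝ E] [NormedAddCommGroup F]
  [NormedSpace ℝ F] {Ω : Set E}

theorem isOpen_setOf_segment_add_subset (hΩ : IsOpen Ω) (h : E) :
    IsOpen {x | segment ℝ x (x + h) ⊆ Ω} := by
  simp only [segment_eq_image', add_sub_cancel_left, image_subset_iff]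
  refine isOpen_iff_eventually.2 fun x hx =>
    isCompact_Icc.eventually_forall_of_forall_eventually fun s hs => ?_
  have hc : Continuous fun z : E × ℝ => z.1 + z.2 • h := by fun_prop
  exact hc.continuousAt.eventually (hΩ.mem_nhds (hx hs))

variable [FiniteDimensional ℝ E] [MeasurableSpace E] [BorelSpace E] {μ : Measure E}
  [μ.IsAddHaarMeasure] {f : E → F} {φ : E → ℝ}

theorem hasDerivAt_integral_comp_sub_smul (hf : LocallyIntegrable f μ) (hφ : ContDiff ℝ 1 φ)
    (hφc : HasCompactSupport φ) (h : E) (s : ℝ) :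
    HasDerivAt (fun s : ℝ => ∫ x, φ (x - s • h) • f x ∂μ)
      (-∫ x, fderiv ℝ φ (x - s • h) h • f x ∂μ) s := by
  let L : F →L[ℝ] ℝ →L[ℝ] F := (ContinuousLinearMap.lsmul ℝ ℝ).flip
  have hgc : HasCompactSupport fun x => φ (-x) := hφc.comp_homeomorph (Homeomorph.neg _)
  have hg : ContDiff ℝ 1 fun x => φ (-x) := hφ.comp contDiff_neg
  have hg' : ∀ x, fderiv ℝ (fun x => φ (-x)) x h = -fderiv ℝ φ (-x) h := fun x => by
    have hd := (hφ.differentiable one_ne_zero (-x)).hasFDerivAt.comp x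
      (hasFDerivAt_id (𝕜 := ℝ) x).neg
    exact (DFunLike.congr_fun hd.fderiv h).trans (by simp)
  have hder := (hgc.hasFDerivAt_convolution_right L hf hg (s • h)).comp_hasDerivAt s
    (((hasDerivAt_id s).smul_const h).congr_deriv (one_smul ℝ h))
  rw [convolution_precompR_apply L hf (hgc.fderiv ℝ) (hg.continuous_fderiv one_ne_zero)] at hder
  convert hder using 1
  · ext t
    simp [convolution, L]
  · simp [convolution, L, hg', integral_neg]

theorem integral_comp_sub_smul_eq (hf : LocallyIntegrable f μ) (hφ : ContDiff ℝ 1 φ)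
    (hφc : HasCompactSupport φ) {h : E}
    (hzero : ∀ s ∈ Icc (0 : ℝ) 1, ∫ x, fderiv ℝ φ (x - s • h) h • f x ∂μ = 0) :
    ∫ x, φ (x - h) • f x ∂μ = ∫ x, φ x • f x ∂μ := by
  have hder : ∀ s ∈ Icc (0 : ℝ) 1,
      HasDerivAt (fun s : ℝ => ∫ x, φ (x - s • h) • f x ∂μ) 0 s := fun s hs => by
    simpa only [hzero s hs, neg_zero] using hasDerivAt_integral_comp_sub_smul hf hφ hφc h s
  simpa using constant_of_has_deriv_right_zero
    (fun s hs => (hder s hs).continuousAt.continuousWithinAt)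
    (fun s hs => (hder s (Ico_subset_Icc_self hs)).hasDerivWithinAt) 1 (right_mem_Icc.2 zero_le_one)

theorem ae_add_eq_of_forall_integral_fderiv_eq_zero [CompleteSpace F] (hΩ : IsOpen Ω)
    (hf : LocallyIntegrable f μ) {h : E}
    (hweak : ∀ φ : E → ℝ, ContDiff ℝ (⊤ : ℕ∞) φ → HasCompactSupport φ → tsupport φ ⊆ Ω →
      ∫ x, fderiv ℝ φ x h • f x ∂μ = 0) :
    ∀ᵐ x ∂μ, segment ℝ x (x + h) ⊆ Ω → f (x + h) = f x := by
  have hfh : LocallyIntegrable (fun x => f (x + h)) μ := by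
    refine (locallyIntegrable_map_homeomorph (Homeomorph.addRight h)).1 ?_
    rwa [Homeomorph.coe_addRight, map_add_right_eq_self]
  suffices ∀ᵐ x ∂μ, x ∈ {x | segment ℝ x (x + h) ⊆ Ω} → f (x + h) - f x = 0 from
    this.mono fun x hx hseg => sub_eq_zero.1 (hx hseg)
  refine (isOpen_setOf_segment_add_subset hΩ h).ae_eq_zero_of_integral_contDiff_smul_eq_zero
    ((hfh.sub hf).locallyIntegrableOn _) fun φ hφ hφc hφS => ?_
  have hshift : ∫ x, φ (x - h) • f x ∂μ = ∫ x, φ x • f x ∂μ := by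
    refine integral_comp_sub_smul_eq hf (hφ.of_le (mod_cast le_top)) hφc fun s hs => ?_
    have hsupp : tsupport (fun x => φ (x - s • h)) ⊆ Ω := by
      rw [show tsupport (fun x => φ (x - s • h)) = Homeomorph.subRight (s • h) ⁻¹' tsupport φ from
        tsupport_comp_eq_preimage φ (Homeomorph.subRight (s • h))]
      intro x hx
      refine hφS hx ?_
      rw [segment_eq_image']
      exact ⟨s, hs, by simp⟩
    simpa only [fderiv_comp_sub] using hweak (fun x => φ (x - s • h))
      (hφ.comp (contDiff_id.sub contDiff_const))
      (hφc.comp_homeomorph (Homeomorph.subRight (s • h))) hsupp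
  calc ∫ x, φ x • (f (x + h) - f x) ∂μ
      = ∫ x, φ x • f (x + h) ∂μ - ∫ x, φ x • f x ∂μ := by
        simp only [smul_sub]
        exact integral_sub (hfh.integrable_smul_left_of_hasCompactSupport hφ.continuous hφc)
          (hf.integrable_smul_left_of_hasCompactSupport hφ.continuous hφc)
    _ = ∫ x, φ (x - h) • f x ∂μ - ∫ x, φ x • f x ∂μ := by
        rw [← integral_add_right_eq_self (fun x => φ (x - h) • f x) h]
        simp only [add_sub_cancel_right]
    _ = 0 := sub_eq_zero.2 hshift

end WeakTranslationInvariance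

theorem KineticFormulation.ae_inner_add_pos_iff {N : ℕ} {Ω : Set (EuclideanSpace ℝ (Fin N))}
    {u : EuclideanSpace ℝ (Fin N) → EuclideanSpace ℝ (Fin N)} (hkin : KineticFormulation Ω u)
    (hΩ : IsOpen Ω) (hmeas : Measurable u) {ξ h : EuclideanSpace ℝ (Fin N)} (hh : ⟪h, ξ⟫ = 0) :
    ∀ᵐ x, segment ℝ x (x + h) ⊆ Ω → (0 < ⟪u (x + h), ξ⟫ ↔ 0 < ⟪u x, ξ⟫) := by
  rcases eq_or_ne ξ 0 with rfl | hξ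
  · simp
  set ξ₁ : EuclideanSpace ℝ (Fin N) := ‖ξ‖⁻¹ • ξ
  have hpos : ∀ v : EuclideanSpace ℝ (Fin N), 0 < ⟪v, ξ₁⟫ ↔ 0 < ⟪v, ξ⟫ := fun v => by
    rw [real_inner_smul_right, mul_pos_iff_of_pos_left (inv_pos.2 (norm_pos_iff.2 hξ))]
  set f : EuclideanSpace ℝ (Fin N) → ℝ := Ω.indicator fun x => chi u x ξ₁
  have hf : LocallyIntegrable f := by
    refine (locallyIntegrable_const (1 : ℝ)).mono (Measurable.aestronglyMeasurable ?_) ?_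
    · refine Measurable.indicator (Measurable.ite ?_ measurable_const measurable_const)
        hΩ.measurableSet
      exact measurableSet_lt measurable_const (hmeas.inner_const)
    · refine .of_forall fun x => (norm_indicator_le_norm_self _ x).trans ?_
      unfold chi
      split_ifs <;> simp
  have hshift := ae_add_eq_of_forall_integral_fderiv_eq_zero hΩ hf (h := h)
    fun φ hφ hφc hφΩ => ?_
  · filter_upwards [hshift] with x hx hseg
    have hchi := hx hseg
    simp only [f, indicator_of_mem (hseg (left_mem_segment ℝ _ _)),
      indicator_of_mem (hseg (right_mem_segment ℝ _ _))] at hchi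
    simp only [chi, hpos] at hchi
    split_ifs at hchi with hadd hx₀ <;> simp_all only [zero_ne_one, one_ne_zero]
  · have h_int := hkin ξ₁ (norm_smul_inv_norm hξ) h (by rw [real_inner_smul_right, hh, mul_zero])
      φ hφ hφc hφΩ
    rw [← integral_indicator hΩ.measurableSet] at h_int
    rw [← h_int]
    congr 1 with x
    by_cases hx : x ∈ Ω <;> simp [f, hx, mul_comm, inner_gradient_right]

section Profiles

theorem exists_ae_mem_iff_of_ae_add_right {T Y : Type*} [MeasurableSpace T] {ν : Measure T}
    [SFinite ν] [AddCommGroup Y] [MeasurableSpace Y] [MeasurableAdd₂ Y] [MeasurableSub Y]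
    {μ : Measure Y} [SFinite μ] [μ.IsAddRightInvariant] {B : Set (T × Y)} (hB : MeasurableSet B)
    {S : Set Y} (hS : MeasurableSet S) (hμS : μ S ≠ 0)
    (hinv : ∀ z, ∀ᵐ p ∂ν.prod μ, p.2 ∈ S → p.2 + z ∈ S → ((p.1, p.2 + z) ∈ B ↔ p ∈ B)) :
    ∃ G, MeasurableSet G ∧ ∀ᵐ p ∂ν.prod μ, p.2 ∈ S → (p ∈ B ↔ p.1 ∈ G) := by
  have hQ : MeasurableSet {q : Y × (T × Y) |
      q.2.2 ∈ S → q.2.2 + q.1 ∈ S → ((q.2.1, q.2.2 + q.1) ∈ B ↔ q.2 ∈ B)} :=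
    (hS.mem.comp (by fun_prop)).imp ((hS.mem.comp (by fun_prop)).imp
      ((hB.mem.comp (by fun_prop)).iff (hB.mem.comp (by fun_prop)))) |>.setOf
  have hcomm : ∀ᵐ p ∂ν.prod μ, ∀ᵐ z ∂μ,
      p.2 ∈ S → p.2 + z ∈ S → ((p.1, p.2 + z) ∈ B ↔ p ∈ B) :=
    (Measure.ae_ae_comm hQ).1 (.of_forall hinv)
  have hswap : ∀ᵐ y ∂μ, ∀ᵐ t ∂ν, ∀ᵐ z ∂μ, y ∈ S → y + z ∈ S → ((t, y + z) ∈ B ↔ (t, y) ∈ B) :=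
    Measure.ae_ae_of_ae_prod (Measure.measurePreserving_swap.quasiMeasurePreserving.ae hcomm)
  obtain ⟨y₀, hy₀, hae⟩ := ((frequently_ae_mem_iff.2 hμS).and_eventually hswap).exists
  refine ⟨{t | (t, y₀) ∈ B}, measurable_prodMk_right hB,
    (Measure.ae_prod_iff_ae_ae ?_).2 (hae.mono fun t ht => ?_)⟩
  · exact ((hS.mem.comp measurable_snd).imp
      (hB.mem.iff ((measurable_prodMk_right hB).mem.comp measurable_fst))).setOf
  · filter_upwards [(measurePreserving_sub_right μ y₀).quasiMeasurePreserving.ae ht] with y hy hyS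
    simpa using hy hy₀ (by simpa using hyS)

theorem exists_eventually_mem_iff_of_ae_add_right {T Y : Type*} [PseudoMetricSpace T]
    [MeasurableSpace T] [OpensMeasurableSpace T] {ν : Measure T} [SFinite ν]
    [NormedAddCommGroup Y] [SecondCountableTopology Y] [MeasurableSpace Y] [BorelSpace Y]
    {μ : Measure Y} [SFinite μ] [μ.IsAddHaarMeasure] {B O : Set (T × Y)} {p₀ : T × Y}
    (hB : MeasurableSet B) (hO : O ∈ 𝓝 p₀)
    (hinv : ∀ z, ∀ᵐ p ∂ν.prod μ, p ∈ O → (p.1, p.2 + z) ∈ O → ((p.1, p.2 + z) ∈ B ↔ p ∈ B)) :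
    ∃ G, MeasurableSet G ∧ ∀ᶠ p in 𝓝 p₀ ⊓ ae (ν.prod μ), (p ∈ B ↔ p.1 ∈ G) := by
  obtain ⟨δ, hδ, hball⟩ := Metric.mem_nhds_iff.1 hO
  have hmem (p : T × Y) : p ∈ ball p₀ δ ↔ p.1 ∈ ball p₀.1 δ ∧ p.2 ∈ ball p₀.2 δ := by
    rw [← mem_prod, ball_prod_same]
  have hrestrict : (ν.restrict (ball p₀.1 δ)).prod μ =
      (ν.prod μ).restrict (ball p₀.1 δ ×ˢ univ) := by
    rw [← Measure.prod_restrict, Measure.restrict_univ]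
  have hstrip : MeasurableSet (ball p₀.1 δ ×ˢ (univ : Set Y)) := measurableSet_ball.prod .univ
  obtain ⟨G, hG, hae⟩ := exists_ae_mem_iff_of_ae_add_right (ν := ν.restrict (ball p₀.1 δ))
    hB measurableSet_ball (measure_ball_pos μ p₀.2 hδ).ne' fun z => by
      rw [hrestrict, ae_restrict_iff' hstrip]
      filter_upwards [hinv z] with p hp hp₁ hp₂ hpz
      exact hp (hball ((hmem _).2 ⟨hp₁.1, hp₂⟩)) (hball ((hmem (_, _)).2 ⟨hp₁.1, hpz⟩))
  rw [hrestrict, ae_restrict_iff' hstrip] at hae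
  refine ⟨G, hG, eventually_nhds_inf_ae_iff.2 ⟨ball p₀ δ, ball_mem_nhds _ hδ, ?_⟩⟩
  filter_upwards [hae] with p hp hpδ
  exact hp ⟨((hmem p).1 hpδ).1, trivial⟩ ((hmem p).1 hpδ).2

variable {E F : Type*} [NormedAddCommGroup E] [NormedSpace ℝ E] [FiniteDimensional ℝ E]
  [MeasurableSpace E] [BorelSpace E] {μ : Measure E} [μ.IsAddHaarMeasure]
  [NormedAddCommGroup F] [NormedSpace ℝ F] [MeasurableSpace F] [BorelSpace F] {L : E →L[ℝ] F}

theorem quasiMeasurePreserving_of_surjective {ν : Measure F} [ν.IsAddHaarMeasure]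
    (hL : Function.Surjective L) : Measure.QuasiMeasurePreserving L μ ν := by
  obtain ⟨c, -, hc⟩ := (L : E →ₗ[ℝ] F).exists_map_addHaar_eq_smul_addHaar μ ν hL
  exact ⟨L.continuous.measurable, hc ▸ Measure.smul_absolutelyContinuous⟩

-- In coordinates `E ≃ F × ker L` the invariance is under translations of the second factor.
theorem exists_eventually_mem_iff_of_ae_add_ker {A O : Set E} {x : E} (hL : Function.Surjective L)
    (hA : MeasurableSet A) (hO : O ∈ 𝓝 x)
    (hinv : ∀ z, L z = 0 → ∀ᵐ p ∂μ, p ∈ O → p + z ∈ O → (p + z ∈ A ↔ p ∈ A)) :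
    ∃ G, MeasurableSet G ∧ ∀ᶠ p in 𝓝 x ⊓ ae μ, (p ∈ A ↔ L p ∈ G) := by
  have : FiniteDimensional ℝ F := .of_surjective (L : E →ₗ[ℝ] F) hL
  obtain ⟨σ, hσ⟩ := L.exists_rightInverse_of_surjective (LinearMap.range_eq_top.2 hL)
  let e : E ≃L[ℝ] F × L.ker := .equivOfRightInverse L σ (DFunLike.congr_fun hσ)
  let ν : Measure F := Measure.addHaar
  let κ : Measure L.ker := Measure.addHaar
  have he : Measure.QuasiMeasurePreserving e μ (ν.prod κ) :=
    quasiMeasurePreserving_of_surjective (L := (e : E →L[ℝ] F × L.ker)) e.surjective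
  have he' : Measure.QuasiMeasurePreserving e.symm (ν.prod κ) μ :=
    quasiMeasurePreserving_of_surjective (L := (e.symm : F × L.ker →L[ℝ] E)) e.symm.surjective
  obtain ⟨G, hG, hae⟩ := exists_eventually_mem_iff_of_ae_add_right (ν := ν) (μ := κ) (p₀ := e x)
    (O := e.symm ⁻¹' O) (e.symm.continuous.measurable hA)
    (e.symm.continuous.continuousAt.preimage_mem_nhds (by simpa using hO)) fun z => by
      have hz : e.symm (0, z) = z :=
        (ContinuousLinearEquiv.equivOfRightInverse_symm_apply _ _ _ _).trans (by simp)
      filter_upwards [he'.ae (hinv z z.2)] with p hp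
      have hpz : e.symm (p.1, p.2 + z) = e.symm p + z := by
        rw [← hz, ← map_add, Prod.add_def, add_zero]
      simpa only [mem_preimage, hpz] using hp
  refine ⟨G, hG, ?_⟩
  filter_upwards [((e.continuous.tendsto x).inf he.tendsto_ae).eventually hae] with p hp
  rw [mem_preimage, e.symm_apply_apply] at hp
  exact hp

end Profiles

section SliceTraces

theorem eventually_eventually_of_eventually_prod {Y T : Type*} [TopologicalSpace Y]
    [TopologicalSpace T] [MeasureSpace Y] [MeasureSpace T] [SFinite (volume : Measure Y)]
    [SFinite (volume : Measure T)] {P : Y × T → Prop} {y₀ : Y} {t₀ : T}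
    (hP : ∀ᶠ p in 𝓝 (y₀, t₀) ⊓ ae volume, P p) :
    ∀ᶠ t in 𝓝 t₀ ⊓ ae volume, ∀ᶠ y in 𝓝 y₀ ⊓ ae volume, P (y, t) := by
  obtain ⟨U, hU, hae⟩ := eventually_nhds_inf_ae_iff.1 hP
  obtain ⟨V, hV, W, hW, hVW⟩ := mem_nhds_prod_iff.1 hU
  have hslice : ∀ᵐ t : T, ∀ᵐ y : Y, (y, t) ∈ U → P (y, t) :=
    Measure.ae_ae_of_ae_prod (Measure.measurePreserving_swap.quasiMeasurePreserving.ae hae)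
  refine eventually_nhds_inf_ae_iff.2 ⟨W, hW, ?_⟩
  filter_upwards [hslice] with t ht htW
  refine eventually_nhds_inf_ae_iff.2 ⟨V, hV, ?_⟩
  filter_upwards [ht] with y hy hyV using hy (hVW ⟨hyV, htW⟩)

variable {Y T : Type*} [NormedAddCommGroup Y] [NormedSpace ℝ Y] [FiniteDimensional ℝ Y]
  [MeasureSpace Y] [BorelSpace Y] [(volume : Measure Y).IsAddHaarMeasure]
  [NormedAddCommGroup T] [NormedSpace ℝ T] [FiniteDimensional ℝ T] [MeasureSpace T]
  [BorelSpace T] [(volume : Measure T).IsAddHaarMeasure]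

theorem nullDensityAt_preimage_const_add_continuousLinearMap_iff {M : Y →L[ℝ] ℝ} {b : ℝ}
    {G : Set ℝ} {x : Y} (hM : Function.Surjective M) :
    NullDensityAt {y | b + M y ∈ G} x ↔ NullDensityAt G (b + M x) :=
  (nullDensityAt_preimage_continuousLinearMap_iff (A := (b + ·) ⁻¹' G) hM).trans
    nullDensityAt_preimage_const_add_iff

theorem NullDensityAt.preimage_const_add_continuousLinearMap {M : Y →L[ℝ] ℝ} {b : ℝ}
    {G : Set ℝ} {x : Y} (hx : b + M x ∉ G) (hG : NullDensityAt G (b + M x)) :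
    NullDensityAt {y | b + M y ∈ G} x := by
  rcases eq_or_ne M 0 with rfl | hM
  · simpa [show b ∉ G by simpa using hx] using nullDensityAt_empty (x := x)
  · have hsurj : Function.Surjective M :=
      LinearMap.surjective_iff_ne_zero.2 fun h => hM (ContinuousLinearMap.coe_injective h)
    exact (nullDensityAt_preimage_const_add_continuousLinearMap_iff hsurj).2 hG

/-- `A` has a trace near `t₀` on the slices through `y₀`: at almost every `t` near `t₀` the slice of
`A`, or that of its complement, has density zero at `y₀`, according to whether `t` lies in a set `H`
which has full density at `t₀` as soon as `A` has full density at `(y₀, t₀)`. -/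
def HasSliceTrace (A : Set (Y × T)) (y₀ : Y) (t₀ : T) : Prop :=
  ∃ H : Set T,
    (∀ᶠ t in 𝓝 t₀ ⊓ ae volume, t ∉ H → NullDensityAt {y | (y, t) ∈ A} y₀) ∧
    (∀ᶠ t in 𝓝 t₀ ⊓ ae volume, t ∈ H → NullDensityAt {y | (y, t) ∉ A} y₀) ∧
    (NullDensityAt Aᶜ (y₀, t₀) → NullDensityAt Hᶜ t₀)

variable {L : Y × T →L[ℝ] ℝ} {G : Set ℝ}

theorem ae_nullDensityAt_slice_of_notMem
    (hL : Function.Surjective (L.comp (.inr ℝ Y T))) (hG : MeasurableSet G) (y₀ : Y) :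
    ∀ᵐ t : T, L (y₀, t) ∉ G → NullDensityAt {y | L (y, t) ∈ G} y₀ := by
  have hsum (y : Y) (t : T) : L (y, t) = L (0, t) + L.comp (.inl ℝ Y T) y := by
    simp [← map_add]
  have hshift := (measurePreserving_add_left volume (L (y₀, 0))).quasiMeasurePreserving.comp
    (quasiMeasurePreserving_of_surjective (μ := volume) (ν := volume) hL)
  filter_upwards [hshift.ae (ae_nullDensityAt_of_notMem hG)] with t ht htG
  have hty : L (y₀, 0) + L.comp (.inr ℝ Y T) t = L (0, t) + L.comp (.inl ℝ Y T) y₀ := by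
    simp [← map_add]
  rw [Function.comp_apply, hty] at ht
  rw [hsum] at htG
  simpa only [← hsum] using (ht htG).preimage_const_add_continuousLinearMap htG

theorem hasSliceTrace_of_eventually_mem_iff {A : Set (Y × T)} {y₀ : Y} {t₀ : T}
    (hL : Function.Surjective (L.comp (.inr ℝ Y T))) (hG : MeasurableSet G)
    (hA : ∀ᶠ p in 𝓝 (y₀, t₀) ⊓ ae volume, (p ∈ A ↔ L p ∈ G)) : HasSliceTrace A y₀ t₀ := by
  have hslice := eventually_eventually_of_eventually_prod hA
  refine ⟨{t | L (y₀, t) ∈ G}, ?_, ?_, fun hnull => ?_⟩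
  · filter_upwards [hslice, (ae_nullDensityAt_slice_of_notMem hL hG y₀).filter_mono inf_le_right]
      with t ht hGt htG using (hGt htG).mono (ht.mono fun y hy => hy.1)
  · filter_upwards [hslice,
      (ae_nullDensityAt_slice_of_notMem hL hG.compl y₀).filter_mono inf_le_right]
      with t ht hGt htG using (hGt (not_not_intro htG)).mono (ht.mono fun y hy => mt hy.2)
  · have hLs : Function.Surjective L := .of_comp hL
    have hGc : NullDensityAt Gᶜ (L (y₀, t₀)) :=
      (nullDensityAt_preimage_continuousLinearMap_iff hLs).1
        (hnull.mono (hA.mono fun p hp => mt hp.1))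
    have hsum (t : T) : L (y₀, t) = L (y₀, 0) + L.comp (.inr ℝ Y T) t := by simp [← map_add]
    rw [hsum] at hGc
    simpa only [← hsum] using!
      (nullDensityAt_preimage_const_add_continuousLinearMap_iff hL).2 hGc

end SliceTraces

section LocallyBounded

variable {E F : Type*} [MeasureSpace E] [PseudoMetricSpace E] [ProperSpace E]
  [OpensMeasurableSpace E] [IsFiniteMeasureOnCompacts (volume : Measure E)] [NormedAddCommGroup F]
  {f : E → F} {x : E} {w : F} {M : ℝ}

theorem eventually_integrableOn_ball (hf : AEStronglyMeasurable f)
    (hM : ∀ᶠ y in 𝓝 x ⊓ ae volume, ‖f y‖ ≤ M) :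
    ∀ᶠ r in 𝓝[>] (0 : ℝ), IntegrableOn f (ball x r) := by
  filter_upwards [ae_restrict_ball_of_eventually hM] with r hr
  exact .of_bound measure_ball_lt_top hf.restrict M hr

theorem IsApproxLimit.tendsto_average [NormedSpace ℝ F] [CompleteSpace F]
    [(volume : Measure E).IsOpenPosMeasure] (h : IsApproxLimit f x w) (hf : StronglyMeasurable f)
    (hM : ∀ᶠ y in 𝓝 x ⊓ ae volume, ‖f y‖ ≤ M) :
    Tendsto (fun r : ℝ => ⨍ y in ball x r, f y) (𝓝[>] 0) (𝓝 w) :=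
  (h.isLebesguePoint hf hM).tendsto_average
    (eventually_integrableOn_ball hf.aestronglyMeasurable hM)

end LocallyBounded

theorem ae_restrict_of_forall_eventually {X : Type*} [TopologicalSpace X]
    [SecondCountableTopology X] [MeasurableSpace X] {μ : Measure X} {J : Set X} {P : X → Prop}
    (hJ : MeasurableSet J) (hP : ∀ x ∈ J, ∀ᶠ y in 𝓝 x ⊓ ae μ, P y) :
    ∀ᵐ x ∂μ.restrict J, P x := by
  rw [ae_restrict_iff' hJ, ae_iff]
  refine measure_null_of_locally_null _ fun x hx => ?_
  obtain ⟨U, hU, hae⟩ := eventually_nhds_inf_ae_iff.1 (hP x (Classical.not_imp.1 hx).1)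
  refine ⟨_, inter_mem_nhdsWithin _ hU, measure_eq_zero_iff_ae_notMem.2 ?_⟩
  filter_upwards [hae] with y hy h
  exact h.1 fun _ => hy h.2

theorem ae_restrict_eventually_slice {Y T : Type*} [TopologicalSpace Y] [TopologicalSpace T]
    [SecondCountableTopology T] [MeasureSpace Y] [MeasureSpace T] [SFinite (volume : Measure Y)]
    [SFinite (volume : Measure T)] {J : Set T} {P : Y × T → Prop} {y₀ : Y} (hJ : MeasurableSet J)
    (hP : ∀ t ∈ J, ∀ᶠ p in 𝓝 (y₀, t) ⊓ ae volume, P p) :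
    ∀ᵐ t ∂volume.restrict J, ∀ᶠ y in 𝓝 y₀ ⊓ ae volume, P (y, t) :=
  ae_restrict_of_forall_eventually hJ fun t ht => eventually_eventually_of_eventually_prod (hP t ht)

theorem preciseValue_ae_eq {E F : Type*} [NormedAddCommGroup E] [NormedSpace ℝ E]
    [FiniteDimensional ℝ E] [MeasureSpace E] [BorelSpace E] [(volume : Measure E).IsAddHaarMeasure]
    [NormedAddCommGroup F] [NormedSpace ℝ F] [CompleteSpace F] {f : E → F}
    (hf : LocallyIntegrable f) : preciseValue f =ᵐ[volume] f := by
  filter_upwards [ae_isLebesguePoint hf] with x hx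
  exact preciseValue_eq_of_tendsto (hx.tendsto_average (.of_forall fun r =>
    (hf.integrableOn_isCompact (isCompact_closedBall x r)).mono_set ball_subset_closedBall))

section Trace

variable {Y T V : Type*} [NormedAddCommGroup Y] [NormedSpace ℝ Y] [FiniteDimensional ℝ Y]
  [MeasureSpace Y] [(volume : Measure Y).IsAddHaarMeasure]
  [NormedAddCommGroup T] [NormedSpace ℝ T] [FiniteDimensional ℝ T] [MeasureSpace T]
  [(volume : Measure T).IsAddHaarMeasure]
  [NormedAddCommGroup V] [InnerProductSpace ℝ V] [FiniteDimensional ℝ V]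
  {U : Y × T → V} {D : Set V} {J : Set T} {y₀ : Y} {t₀ : T}

theorem ae_exists_isApproxLimit_slice (hJ : MeasurableSet J) (hD : D.Countable)
    (hDd : Dense D) (hunit : ∀ t ∈ J, ∀ᶠ p in 𝓝 (y₀, t) ⊓ ae volume, ‖U p‖ = 1)
    (htrace : ∀ t ∈ J, ∀ ξ ∈ D, HasSliceTrace {p | 0 < ⟪U p, ξ⟫} y₀ t) :
    ∀ᵐ t ∂volume.restrict J, ∃ w, IsApproxLimit (fun y => U (y, t)) y₀ w := by
  have hsign : ∀ᵐ t ∂volume.restrict J, ∀ ξ ∈ D,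
      NullDensityAt {y | ⟪U (y, t), ξ⟫ ≤ 0} y₀ ∨ NullDensityAt {y | 0 < ⟪U (y, t), ξ⟫} y₀ := by
    refine (ae_ball_iff hD).2 fun ξ hξ => ae_restrict_of_forall_eventually hJ fun t ht => ?_
    obtain ⟨H, hout, hin, -⟩ := htrace t ht ξ hξ
    filter_upwards [hout, hin] with s hs_out hs_in
    simp only [not_lt] at hs_in
    exact (em (s ∈ H)).imp hs_in hs_out
  filter_upwards [ae_restrict_eventually_slice hJ hunit, hsign] with t ht_unit ht_sign
  exact exists_isApproxLimit_of_inner_signs hDd ht_unit ht_sign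

theorem IsApproxLimit.of_slices {f : T → V} {w : V} (h : IsApproxLimit U (y₀, t₀) w)
    (hDd : Dense D) (hunit : ∀ᶠ p in 𝓝 (y₀, t₀) ⊓ ae volume, ‖U p‖ = 1)
    (htrace : ∀ ξ ∈ D, HasSliceTrace {p | 0 < ⟪U p, ξ⟫} y₀ t₀)
    (hf : ∀ᶠ t in 𝓝 t₀ ⊓ ae volume, IsApproxLimit (fun y => U (y, t)) y₀ (f t)) :
    IsApproxLimit f t₀ w := by
  have hf_unit : ∀ᶠ t in 𝓝 t₀ ⊓ ae volume, ‖f t‖ = 1 := by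
    filter_upwards [hf, eventually_eventually_of_eventually_prod hunit] with t ht ht_unit
      using ht.norm_eq ht_unit
  refine isApproxLimit_of_inner_neg hDd hf_unit (h.norm_eq hunit) fun ξ hξ hwξ => ?_
  obtain ⟨H, -, hin, hnull⟩ := htrace ξ hξ
  have hH : NullDensityAt Hᶜ t₀ :=
    hnull ((h.nullDensityAt_inner_nonpos hwξ).subset fun p => le_of_not_gt (α := ℝ))
  refine hH.mono ?_
  filter_upwards [hf, hin] with t ht ht_in hneg htH
  have hnonneg : NullDensityAt {y | 0 ≤ ⟪U (y, t), ξ⟫} y₀ := by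
    simpa using ht.nullDensityAt_inner_nonpos (ξ := -ξ) (by simpa using hneg)
  obtain ⟨y, hy⟩ := ((ht_in htH).union hnonneg).frequently_notMem.exists
  exact hy ((lt_or_ge 0 ⟪U (y, t), ξ⟫).elim (fun h => .inr h.le) fun h => .inl h.not_gt)

variable [BorelSpace Y]

theorem exists_stronglyMeasurable_isApproxLimit_slice (hU : StronglyMeasurable U)
    (hJ : MeasurableSet J) (hunit : ∀ t ∈ J, ∀ᶠ p in 𝓝 (y₀, t) ⊓ ae volume, ‖U p‖ = 1)
    (hlim : ∀ᵐ t ∂volume.restrict J, ∃ w, IsApproxLimit (fun y => U (y, t)) y₀ w) :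
    ∃ g : T → V, StronglyMeasurable g ∧ (∀ᵐ t, ‖g t‖ ≤ 1) ∧
      ∀ᵐ t ∂volume.restrict J, IsApproxLimit (fun y => U (y, t)) y₀ (g t) := by
  have hslice : ∀ᵐ t ∂volume.restrict J,
      IsApproxLimit (fun y => U (y, t)) y₀ (preciseValue (fun y => U (y, t)) y₀) ∧
        ‖preciseValue (fun y => U (y, t)) y₀‖ = 1 := by
    filter_upwards [ae_restrict_eventually_slice hJ hunit, hlim] with t ht_unit ⟨w, hw⟩
    have hU_slice : StronglyMeasurable fun y => U (y, t) :=
      hU.comp_measurable measurable_prodMk_right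
    rw [preciseValue_eq_of_tendsto (hw.tendsto_average hU_slice (ht_unit.mono fun _ h => h.le))]
    exact ⟨hw, hw.norm_eq ht_unit⟩
  refine ⟨J.indicator fun t => preciseValue (fun y => U (y, t)) y₀,
    (stronglyMeasurable_preciseValue (G := fun t y => U (y, t)) (hU.comp_measurable measurable_swap)
      measurable_const).indicator hJ, ?_, ?_⟩
  · filter_upwards [(ae_restrict_iff' hJ).1 hslice] with t ht
    by_cases htJ : t ∈ J
    · rw [indicator_of_mem htJ, (ht htJ).2]
    · simp [indicator_of_notMem htJ]
  · filter_upwards [hslice, ae_restrict_mem hJ] with t ht htJ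
    rw [indicator_of_mem htJ]
    exact ht.1

variable [BorelSpace T]

theorem exists_measurable_trace [MeasurableSpace V] [BorelSpace V] (hU : Measurable U)
    (hJ : IsOpen J) (hD : D.Countable) (hDd : Dense D)
    (hunit : ∀ t ∈ J, ∀ᶠ p in 𝓝 (y₀, t) ⊓ ae volume, ‖U p‖ = 1)
    (htrace : ∀ t ∈ J, ∀ ξ ∈ D, HasSliceTrace {p | 0 < ⟪U p, ξ⟫} y₀ t) :
    ∃ f : T → V, Measurable f ∧
      (∀ᵐ t ∂volume.restrict J, ‖f t‖ = 1 ∧ IsLebesguePoint (fun y => U (y, t)) y₀ (f t) ∧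
        Tendsto (fun r : ℝ => ⨍ y in ball y₀ r, U (y, t)) (𝓝[>] 0) (𝓝 (f t))) ∧
      ∀ t ∈ J, ∀ w, IsApproxLimit U (y₀, t) w → IsLebesguePoint f t w ∧ f t = w := by
  obtain ⟨g, hg, hg_le, hg_slice⟩ := exists_stronglyMeasurable_isApproxLimit_slice
    hU.stronglyMeasurable hJ.measurableSet hunit
    (ae_exists_isApproxLimit_slice hJ.measurableSet hD hDd hunit htrace)
  have hg_ev (t : T) : ∀ᶠ s in 𝓝 t ⊓ ae volume, ‖g s‖ ≤ 1 := inf_le_right (a := 𝓝 t) hg_le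
  have hg_int : LocallyIntegrable g := fun t => by
    obtain ⟨K, hK, hKt⟩ := exists_compact_mem_nhds t
    exact ⟨K, hKt, .of_bound hK.measure_lt_top hg.aestronglyMeasurable.restrict 1
      (ae_restrict_of_ae hg_le)⟩
  have hfg : preciseValue g =ᵐ[volume] g := preciseValue_ae_eq hg_int
  refine ⟨preciseValue g, (stronglyMeasurable_preciseValue (G := fun _ => g)
    (hg.comp_measurable measurable_snd) measurable_id).measurable, ?_, fun t ht w hw => ?_⟩
  · filter_upwards [hg_slice, ae_restrict_of_ae hfg,
      ae_restrict_eventually_slice hJ.measurableSet hunit] with t ht htfg ht_unit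
    have hU_slice : StronglyMeasurable fun y => U (y, t) :=
      (hU.comp measurable_prodMk_right).stronglyMeasurable
    have ht_le := ht_unit.mono fun y hy => hy.le
    rw [htfg]
    exact ⟨ht.norm_eq ht_unit, ht.isLebesguePoint hU_slice ht_le, ht.tendsto_average hU_slice ht_le⟩
  · have hgw : IsApproxLimit g t w := hw.of_slices hDd (hunit t ht) (htrace t ht)
      (eventually_nhds_inf_ae_iff.2
        ⟨J, hJ.mem_nhds ht, (ae_restrict_iff' hJ.measurableSet).1 hg_slice⟩)
    refine ⟨(hgw.isLebesguePoint hg (hg_ev t)).congr fun r => ?_,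
      preciseValue_eq_of_tendsto (hgw.tendsto_average hg (hg_ev t))⟩
    refine integral_congr_ae (Measure.smul_absolutelyContinuous.ae_le ?_)
    filter_upwards [ae_restrict_of_ae hfg] with s hs
    rw [hs]

end Trace

section Cylinder

variable {Y T : Type*} [PseudoMetricSpace Y] [MeasureSpace Y] [OpensMeasurableSpace Y]
  [SFinite (volume : Measure Y)] [TopologicalSpace T] [MeasureSpace T] [OpensMeasurableSpace T]
  [SFinite (volume : Measure T)] {y₀ : Y} {K : Set T}

theorem eventually_ae_ae_restrict_ball_of_isCompact (hK : IsCompact K) {P : Y × T → Prop}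
    (hP : ∀ t ∈ K, ∀ᶠ p in 𝓝 (y₀, t) ⊓ ae volume, P p) :
    ∀ᶠ r in 𝓝[>] (0 : ℝ),
      ∀ᵐ t ∂volume.restrict K, ∀ᵐ y ∂volume.restrict (ball y₀ r), P (y, t) := by
  refine hK.induction_on (p := fun s => ∀ᶠ r in 𝓝[>] (0 : ℝ),
    ∀ᵐ t ∂volume.restrict s, ∀ᵐ y ∂volume.restrict (ball y₀ r), P (y, t)) (by simp)
    (fun s s' hss h => h.mono fun r => ae_restrict_of_ae_restrict_of_subset hss)
    (fun s s' hs hs' => ?_) fun t ht => ?_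
  · filter_upwards [hs, hs'] with r hr hr'
    exact (ae_restrict_union_iff _ _ _).2 ⟨hr, hr'⟩
  · obtain ⟨W, hW, hWP⟩ := eventually_nhds_inf_ae_iff.1 (hP t ht)
    obtain ⟨A, B, hA, hyA, hB, htB, hAB⟩ := mem_nhds_prod_iff'.1 hW
    obtain ⟨δ, hδ, hδA⟩ := Metric.isOpen_iff.1 hA y₀ hyA
    have hslices : ∀ᵐ s : T, ∀ᵐ y : Y, (y, s) ∈ W → P (y, s) :=
      Measure.ae_ae_of_ae_prod (Measure.measurePreserving_swap.quasiMeasurePreserving.ae hWP)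
    refine ⟨B, mem_nhdsWithin_of_mem_nhds (hB.mem_nhds htB), ?_⟩
    filter_upwards [Ioo_mem_nhdsGT hδ] with r hr
    filter_upwards [ae_restrict_of_ae hslices, ae_restrict_mem hB.measurableSet] with s hs hsB
    filter_upwards [ae_restrict_of_ae hs, ae_restrict_mem measurableSet_ball] with y hy hyr
    exact hy (hAB ⟨hδA (ball_subset_ball hr.2.le hyr), hsB⟩)

end Cylinder

theorem tendsto_setAverage_ball_integral_norm_sub {Y T V : Type*} [PseudoMetricSpace Y]
    [ProperSpace Y] [SecondCountableTopology Y] [MeasureSpace Y] [OpensMeasurableSpace Y]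
    [IsFiniteMeasureOnCompacts (volume : Measure Y)] [(volume : Measure Y).IsOpenPosMeasure]
    [TopologicalSpace T] [MeasureSpace T] [OpensMeasurableSpace T] [SFinite (volume : Measure T)]
    [IsFiniteMeasureOnCompacts (volume : Measure T)] [NormedAddCommGroup V]
    {U : Y × T → V} {f : T → V} {y₀ : Y} {J K : Set T} {c : ℝ} (hU : StronglyMeasurable U)
    (hf : StronglyMeasurable f) (hK : IsCompact K) (hJK : J ⊆ K)
    (hnorm : ∀ t ∈ K, ∀ᶠ p in 𝓝 (y₀, t) ⊓ ae volume, ‖U p‖ = c)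
    (hslice : ∀ᵐ t ∂volume.restrict J,
      ‖f t‖ = c ∧ IsLebesguePoint (fun y => U (y, t)) y₀ (f t)) :
    Tendsto (fun r : ℝ => ⨍ y in ball y₀ r, ∫ t in J, ‖U (y, t) - f t‖) (𝓝[>] 0) (𝓝 0) := by
  have hG : StronglyMeasurable fun p : Y × T => ‖U p - f p.2‖ :=
    (hU.sub (hf.comp_measurable measurable_snd)).norm
  have hbound : ∀ᶠ r in 𝓝[>] (0 : ℝ), ∀ᵐ t ∂volume.restrict J,
      ∀ᵐ y ∂volume.restrict (ball y₀ r), ‖‖U (y, t) - f t‖‖ ≤ c + c := by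
    filter_upwards [eventually_ae_ae_restrict_ball_of_isCompact hK hnorm] with r hr
    filter_upwards [ae_restrict_of_ae_restrict_of_subset hJK hr, hslice] with t ht htf
    filter_upwards [ht] with y hy
    rw [norm_norm]
    exact (norm_sub_le _ _).trans_eq (by rw [hy, htf.1])
  have : IsFiniteMeasure (volume.restrict J) :=
    ⟨by simpa using (measure_mono hJK).trans_lt hK.measure_lt_top⟩
  simpa using tendsto_setAverage_ball_integral hG hbound (hslice.mono fun t ht => ht.2)

theorem eventually_nhds_inf_ae_of_ae_restrict {X : Type*} [TopologicalSpace X] [MeasurableSpace X]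
    [OpensMeasurableSpace X] {μ : Measure X} {Ω : Set X} {P : X → Prop} {x : X} (hΩ : IsOpen Ω)
    (hx : x ∈ Ω) (hP : ∀ᵐ y ∂μ.restrict Ω, P y) : ∀ᶠ y in 𝓝 x ⊓ ae μ, P y :=
  eventually_nhds_inf_ae_iff.2 ⟨Ω, hΩ.mem_nhds hx, (ae_restrict_iff' hΩ.measurableSet).1 hP⟩

theorem tendsto_nhds_inf_ae_of_surjective {E F : Type*}
    [NormedAddCommGroup E] [NormedSpace ℝ E] [FiniteDimensional ℝ E] [MeasurableSpace E]
    [BorelSpace E] {μ : Measure E} [μ.IsAddHaarMeasure] [NormedAddCommGroup F] [NormedSpace ℝ F]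
    [MeasurableSpace F] [BorelSpace F] {ν : Measure F} [ν.IsAddHaarMeasure] {L : E →L[ℝ] F}
    (hL : Function.Surjective L) (p : E) : Tendsto L (𝓝 p ⊓ ae μ) (𝓝 (L p) ⊓ ae ν) :=
  (L.continuous.tendsto p).inf (quasiMeasurePreserving_of_surjective hL).tendsto_ae

theorem IsApproxLimit.comp_continuousLinearMap {E F V : Type*} [NormedAddCommGroup E]
    [NormedSpace ℝ E] [FiniteDimensional ℝ E] [MeasureSpace E] [BorelSpace E]
    [(volume : Measure E).IsAddHaarMeasure] [NormedAddCommGroup F] [NormedSpace ℝ F]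
    [FiniteDimensional ℝ F] [MeasureSpace F] [BorelSpace F] [(volume : Measure F).IsAddHaarMeasure]
    [NormedAddCommGroup V] {f : F → V} {L : E →L[ℝ] F} {p : E} {w : V}
    (h : IsApproxLimit f (L p) w) (hL : Function.Surjective L) :
    IsApproxLimit (fun q => f (L q)) p w := by
  intro ε hε
  exact (nullDensityAt_preimage_continuousLinearMap_iff (A := {x | ε ≤ ‖f x - w‖}) hL).2 (h ε hε)

section Coordinates

variable {n : ℕ}

theorem ins_castSucc (y : Fin n → ℝ) (t : ℝ) (i : Fin n) : ins (n + 1) y t i.castSucc = y i :=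
  dif_pos (by simp)

theorem ins_last (y : Fin n → ℝ) (t : ℝ) : ins (n + 1) y t (Fin.last n) = t :=
  dif_neg (by simp)

/-- The coordinates `(x', x_N) ↦ x` as a continuous linear map: `insCLM n (y, t)` is
`ins (n + 1) y t`. -/
def insCLM (n : ℕ) : (Fin n → ℝ) × ℝ →L[ℝ] EuclideanSpace ℝ (Fin (n + 1)) :=
  LinearMap.toContinuousLinearMap
    { toFun p := ins (n + 1) p.1 p.2
      map_add' p q := by
        ext j
        refine Fin.lastCases ?_ (fun i => ?_) j <;> simp [ins_castSucc, ins_last]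
      map_smul' c p := by
        ext j
        refine Fin.lastCases ?_ (fun i => ?_) j <;> simp [ins_castSucc, ins_last] }

theorem insCLM_surjective : Function.Surjective (insCLM n) := fun x => by
  refine ⟨(fun i => x i.castSucc, x (Fin.last n)), ?_⟩
  ext j
  exact Fin.lastCases (ins_last _ _) (fun i => ins_castSucc _ _ i) j

theorem eventually_cube_eq_ball (n : ℕ) :
    ∀ᶠ r in 𝓝[>] (0 : ℝ), cube (n + 1) r = ball (0 : Fin n → ℝ) r := by
  filter_upwards [self_mem_nhdsWithin] with r hr
  simp [cube, ball_pi _ (mem_Ioi.1 hr), Real.ball_eq_Ioo]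

theorem tendsto_setAverage_cube_iff {F : Type*} [NormedAddCommGroup F] [NormedSpace ℝ F]
    {f : (Fin n → ℝ) → F} {l : Filter F} :
    Tendsto (fun r : ℝ => ⨍ y in cube (n + 1) r, f y) (𝓝[>] 0) l ↔
      Tendsto (fun r : ℝ => ⨍ y in ball 0 r, f y) (𝓝[>] 0) l :=
  tendsto_congr' ((eventually_cube_eq_ball n).mono fun _ hr =>
    congrArg (fun s => ⨍ y in s, f y) hr)

theorem inner_ins_zero_left (t : ℝ) (ξ : EuclideanSpace ℝ (Fin (n + 1))) :
    ⟪ins (n + 1) 0 t, ξ⟫ = t * ξ (Fin.last n) := by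
  simp [PiLp.inner_apply, Fin.sum_univ_castSucc, ins_castSucc, ins_last, mul_comm]

theorem exists_countable_dense_last_ne_zero (n : ℕ) :
    ∃ D : Set (EuclideanSpace ℝ (Fin (n + 1))), D.Countable ∧ Dense D ∧
      ∀ ξ ∈ D, ξ (Fin.last n) ≠ 0 := by
  have hproj : Function.Surjective (EuclideanSpace.proj (𝕜 := ℝ) (Fin.last n)) :=
    fun t => ⟨ins (n + 1) 0 t, ins_last 0 t⟩
  obtain ⟨D, hD, hDc, hDd⟩ := ((dense_compl_singleton (0 : ℝ)).preimage
    (ContinuousLinearMap.isOpenMap _ hproj)).exists_countable_dense_subset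
  exact ⟨D, hDc, hDd, fun ξ hξ => hD hξ⟩

theorem KineticFormulation.hasSliceTrace
    {Ω : Set (EuclideanSpace ℝ (Fin (n + 1)))}
    {u : EuclideanSpace ℝ (Fin (n + 1)) → EuclideanSpace ℝ (Fin (n + 1))}
    (hkin : KineticFormulation Ω u) (hΩ : IsOpen Ω) (hu : Measurable u)
    {ξ : EuclideanSpace ℝ (Fin (n + 1))} (hξ : ξ (Fin.last n) ≠ 0) {y : Fin n → ℝ} {t : ℝ}
    (hyt : ins (n + 1) y t ∈ Ω) : HasSliceTrace {p | 0 < ⟪u (insCLM n p), ξ⟫} y t := by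
  set L : (Fin n → ℝ) × ℝ →L[ℝ] ℝ := (innerSL ℝ ξ).comp (insCLM n)
  have hL_apply (p) : L p = ⟪insCLM n p, ξ⟫ := real_inner_comm (insCLM n p) ξ
  have hL_inr : Function.Surjective (L.comp (.inr ℝ (Fin n → ℝ) ℝ)) := fun s =>
    ⟨s / ξ (Fin.last n), (hL_apply _).trans
      ((inner_ins_zero_left _ ξ).trans (div_mul_cancel₀ s hξ))⟩
  have hpre : insCLM n ⁻¹' Ω ∈ 𝓝 (y, t) := (insCLM n).continuous.continuousAt (hΩ.mem_nhds hyt)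
  obtain ⟨r, hr, hball⟩ := Metric.mem_nhds_iff.1 hpre
  have hA : MeasurableSet {p | 0 < ⟪u (insCLM n p), ξ⟫} :=
    measurableSet_lt measurable_const
      ((hu.comp (insCLM n).continuous.measurable).inner measurable_const)
  have hinv (z) (hz : L z = 0) : ∀ᵐ p, p ∈ ball (y, t) r → p + z ∈ ball (y, t) r →
      (0 < ⟪u (insCLM n (p + z)), ξ⟫ ↔ 0 < ⟪u (insCLM n p), ξ⟫) := by
    filter_upwards [(quasiMeasurePreserving_of_surjective insCLM_surjective).ae
      (hkin.ae_inner_add_pos_iff hΩ hu ((hL_apply z).symm.trans hz))] with p hp hpr hpzr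
    rw [← map_add] at hp
    exact hp ((image_segment ℝ (insCLM n).toLinearMap.toAffineMap p (p + z)).symm.trans_subset
      (image_subset_iff.2 (((convex_ball _ _).segment_subset hpr hpzr).trans hball)))
  obtain ⟨G, hG, hAG⟩ := exists_eventually_mem_iff_of_ae_add_ker (L := L) (.of_comp hL_inr) hA
    (ball_mem_nhds (y, t) hr) hinv
  exact hasSliceTrace_of_eventually_mem_iff hL_inr hG hAG

end Coordinates

theorem trace_on_segment (N : ℕ) (hN : 2 ≤ N)
    (Ω : Set (EuclideanSpace ℝ (Fin N))) (hΩ : IsOpen Ω)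
    (hL : (fun t => ins N 0 t) '' Icc (-1 : ℝ) 1 ⊆ Ω)
    (u : EuclideanSpace ℝ (Fin N) → EuclideanSpace ℝ (Fin N)) (hmeas : Measurable u)
    (hunit : ∀ᵐ x ∂volume.restrict Ω, ‖u x‖ = 1)
    (hkin : KineticFormulation Ω u) :
    ∃ utild : ℝ → EuclideanSpace ℝ (Fin N), Measurable utild ∧
      Tendsto (fun r : ℝ =>
          ⨍ y in cube N r, ∫ t in Ioo (-1 : ℝ) 1, ‖u (ins N y t) - utild t‖)
        (𝓝[>] 0) (𝓝 0) ∧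
      (∀ᵐ t ∂volume.restrict (Ioo (-1 : ℝ) 1), ‖utild t‖ = 1 ∧
        Tendsto (fun r : ℝ => ⨍ y in cube N r, u (ins N y t)) (𝓝[>] 0) (𝓝 (utild t))) ∧
      (∀ t ∈ Ioo (-1 : ℝ) 1, ∀ w : EuclideanSpace ℝ (Fin N),
        IsLebesguePoint u (ins N 0 t) w →
          IsLebesguePoint utild t w ∧ utild t = w) := by
  obtain ⟨n, rfl⟩ : ∃ n, N = n + 1 := ⟨N - 1, by lia⟩
  have hmem {t} (ht : t ∈ Icc (-1 : ℝ) 1) : insCLM n (0, t) ∈ Ω := hL (mem_image_of_mem _ ht)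
  have hu {t} (ht : t ∈ Icc (-1 : ℝ) 1) :=
    eventually_nhds_inf_ae_of_ae_restrict hΩ (hmem ht) hunit
  have hU : Measurable fun p => u (insCLM n p) := hmeas.comp (insCLM n).continuous.measurable
  have hU_unit (t) (ht : t ∈ Icc (-1 : ℝ) 1) :
      ∀ᶠ p in 𝓝 ((0 : Fin n → ℝ), t) ⊓ ae volume, ‖u (insCLM n p)‖ = 1 :=
    (tendsto_nhds_inf_ae_of_surjective insCLM_surjective _).eventually (hu ht)
  obtain ⟨D, hD, hDd, hD_last⟩ := exists_countable_dense_last_ne_zero n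
  obtain ⟨f, hf, hslice, hpoint⟩ := exists_measurable_trace hU isOpen_Ioo hD hDd
    (fun t ht => hU_unit t (Ioo_subset_Icc_self ht))
    fun t ht ξ hξ => hkin.hasSliceTrace hΩ hmeas (hD_last ξ hξ) (hmem (Ioo_subset_Icc_self ht))
  refine ⟨f, hf, tendsto_setAverage_cube_iff.2 ?_, ?_, fun t ht w hw => hpoint t ht w ?_⟩
  · exact tendsto_setAverage_ball_integral_norm_sub hU.stronglyMeasurable hf.stronglyMeasurable
      isCompact_Icc Ioo_subset_Icc_self hU_unit (hslice.mono fun t ht => ⟨ht.1, ht.2.1⟩)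
  · exact hslice.mono fun t ht => ⟨ht.1, tendsto_setAverage_cube_iff.2 ht.2.2⟩
  · have hw_approx : IsApproxLimit u (insCLM n (0, t)) w := IsLebesguePoint.isApproxLimit hw
      (eventually_integrableOn_ball hmeas.aestronglyMeasurable
        ((hu (Ioo_subset_Icc_self ht)).mono fun x hx => hx.le))
    exact hw_approx.comp_continuousLinearMap insCLM_surjective
end
end

section
/- Let N ≥ 3, Ω ⊆ ℝ^N a connected open set, and u : Ω → ℝ^N a Lebesgue measurable vector field with |u| = 1 a.e. in Ω that satisfies the kinetic formulation and is not a.e. equal to a constant vector. Then there exist a point P ∈ ℝ^N and a sign γ ∈ {+1, −1} such that u(x) = γ (x − P)/|x − P| for a.e. x ∈ Ω. -/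
open MeasureTheory Metric Set Filter
open scoped RealInnerProductSpace ENNReal Topology

noncomputable section

/-!
By the kinetic formulation the indicator of `{u · ξ > 0}` has vanishing weak derivatives along
`ξ⊥`, so it takes the same value at any two of its Lebesgue points joined by a segment orthogonal
to `ξ`. Hence, at Lebesgue points `x`, `y` of `u` in a ball, the projections of `u x` and `u y`
orthogonal to `y - x` lie on a common ray: the lines `x + ℝ u x` and `y + ℝ u y` are coplanar, and
`u x = u y` if they are parallel and distinct. In dimension at least three, lines which are pairwise
coplanar but not all parallel pass, up to a null set, through one point `P`, so `u` is on each ball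
either constant or a vortex. Such fields are determined by their values on any nonempty open set,
and connectedness of `Ω` propagates the alternative from one ball to all of `Ω`.
-/

section LinearAlgebra

variable {K M : Type*} [Field K] [AddCommGroup M] [Module K M]

theorem mem_span_singleton_symm {x y : M} (hx : x ≠ 0) (h : x ∈ Submodule.span K {y}) :
    y ∈ Submodule.span K {x} := by
  obtain ⟨t, rfl⟩ := Submodule.mem_span_singleton.1 h
  exact Submodule.mem_span_singleton.2 ⟨t⁻¹, inv_smul_smul₀ (left_ne_zero_of_smul hx) y⟩

theorem mem_span_singleton_of_mem_span_pairs {a b c p : M} (hab : LinearIndependent K ![a, b])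
    (hc : c ∉ Submodule.span K {a, b}) (hac : p ∈ Submodule.span K {a, c})
    (hbc : p ∈ Submodule.span K {b, c}) : p ∈ Submodule.span K {c} := by
  obtain ⟨α, γ, rfl⟩ := Submodule.mem_span_pair.1 hac
  obtain ⟨β, δ, h⟩ := Submodule.mem_span_pair.1 hbc
  have hind : LinearIndependent K ![c, a, b] := linearIndependent_finCons.2 ⟨hab,
    by rwa [Matrix.range_cons_cons_empty]⟩
  have hα : α = 0 := Fintype.linearIndependent_iff.1 hind ![γ - δ, α, -β]
    (by simpa [Fin.sum_univ_three] using by linear_combination (norm := module) -h) 1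
  exact Submodule.mem_span_singleton.2 ⟨γ, by simp [hα]⟩

theorem linearIndependent_pair_or_of_ne_zero {a b c : M} (hab : LinearIndependent K ![a, b])
    (hc : c ≠ 0) : LinearIndependent K ![a, c] ∨ LinearIndependent K ![b, c] := by
  simp only [LinearIndependent.pair_symm_iff (y := c), LinearIndependent.pair_iff' hc]
  by_contra! h
  obtain ⟨⟨α, rfl⟩, ⟨β, rfl⟩⟩ := h
  obtain ⟨rfl, -⟩ := LinearIndependent.pair_iff.1 hab β (-α) (by module)
  exact hab.ne_zero 1 (zero_smul K c)

theorem mem_span_singleton_of_notMem_span_pair {a b c p : M} (hab : LinearIndependent K ![a, b])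
    (hc : c ≠ 0) (hac : LinearIndependent K ![a, c] → p ∈ Submodule.span K {a, c})
    (hbc : LinearIndependent K ![b, c] → p ∈ Submodule.span K {b, c})
    (hp : p ∉ Submodule.span K {a, b}) : p ∈ Submodule.span K {c} := by
  have ha : a ∈ Submodule.span K {a, b} := Submodule.mem_span_of_mem (by simp)
  have hb : b ∈ Submodule.span K {a, b} := Submodule.mem_span_of_mem (by simp)
  have hcab : c ∉ Submodule.span K {a, b} := fun hcab => by
    rcases linearIndependent_pair_or_of_ne_zero hab hc with h | h
    · exact hp (Submodule.span_le.2 (pair_subset ha hcab) (hac h))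
    · exact hp (Submodule.span_le.2 (pair_subset hb hcab) (hbc h))
  have hind {x : M} (hx : x ∈ Submodule.span K {a, b}) (hx0 : x ≠ 0) :
      LinearIndependent K ![x, c] :=
    (LinearIndependent.pair_iff' hx0).2 fun t ht => hcab (ht ▸ Submodule.smul_mem _ t hx)
  exact mem_span_singleton_of_mem_span_pairs hab hcab (hac (hind ha (hab.ne_zero 0)))
    (hbc (hind hb (hab.ne_zero 1)))

end LinearAlgebra

section InnerProductSpace

variable {V : Type*} [NormedAddCommGroup V] [InnerProductSpace ℝ V]

theorem sameRay_of_forall_inner_pos {p q : V} (h : ∀ ξ, 0 < ⟪p, ξ⟫ → 0 ≤ ⟪q, ξ⟫) :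
    SameRay ℝ p q := by
  rcases eq_or_ne p 0 with rfl | hp
  · exact SameRay.zero_left q
  rcases eq_or_ne q 0 with rfl | hq
  · exact SameRay.zero_right p
  rw [sameRay_iff_norm_smul_eq, eq_comm, ← inner_eq_norm_mul_iff_real]
  refine (real_inner_le_norm p q).antisymm (not_lt.1 fun hlt => ?_)
  have hgap : 0 < ‖p‖ * ‖q‖ - ⟪p, q⟫ := sub_pos.2 hlt
  have hpξ : ⟪p, ‖q‖ • p - ‖p‖ • q⟫ = ‖p‖ * (‖p‖ * ‖q‖ - ⟪p, q⟫) := by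
    rw [inner_sub_right, real_inner_smul_right, real_inner_smul_right,
      real_inner_self_eq_norm_sq]
    ring
  have hqξ : ⟪q, ‖q‖ • p - ‖p‖ • q⟫ = -(‖q‖ * (‖p‖ * ‖q‖ - ⟪p, q⟫)) := by
    rw [inner_sub_right, real_inner_smul_right, real_inner_smul_right,
      real_inner_self_eq_norm_sq, real_inner_comm]
    ring
  have hq_nonneg := h _ (hpξ ▸ mul_pos (norm_pos_iff.2 hp) hgap)
  linarith [mul_pos (norm_pos_iff.2 hq) hgap]

theorem exists_inner_eq_zero_inner_pos {a d : V} (h : a ∉ Submodule.span ℝ {d}) :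
    ∃ ξ, ⟪d, ξ⟫ = 0 ∧ 0 < ⟪a, ξ⟫ := by
  have hproj : (ℝ ∙ d)ᗮ.orthogonalProjectionOnto a ≠ 0 := fun h0 =>
    h (by simpa using Submodule.orthogonalProjectionOnto_eq_zero_iff.1 h0)
  refine ⟨(ℝ ∙ d)ᗮ.orthogonalProjectionOnto a,
    Submodule.mem_orthogonal_singleton_iff_inner_right.1 (SetLike.coe_mem _), ?_⟩
  rw [← Submodule.inner_orthogonalProjectionOnto_eq_of_mem_right]
  exact real_inner_self_pos.2 (by simpa using hproj)

theorem mem_span_pair_of_forall_inner_nonneg {a b d : V} (hab : LinearIndependent ℝ ![a, b])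
    (h : ∀ ξ, ⟪d, ξ⟫ = 0 → 0 < ⟪a, ξ⟫ → 0 ≤ ⟪b, ξ⟫) : d ∈ Submodule.span ℝ {a, b} := by
  set π := (ℝ ∙ d)ᗮ.orthogonalProjectionOnto
  have hray : SameRay ℝ (π a) (π b) := sameRay_of_forall_inner_pos fun ξ => by
    simpa [π] using h ξ (Submodule.mem_orthogonal_singleton_iff_inner_right.1 ξ.2)
  by_contra hd
  have hdisj : Disjoint (Submodule.span ℝ (range ![a, b])) (LinearMap.ker π.toLinearMap) := by
    rw [Submodule.ker_orthogonalProjectionOnto, Submodule.orthogonal_orthogonal,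
      Matrix.range_cons_cons_empty]
    exact Submodule.disjoint_span_singleton_of_notMem hd
  refine sameRay_or_sameRay_neg_iff_not_linearIndependent.1 (Or.inl hray) ?_
  have hπ : π ∘ ![a, b] = ![π a, π b] := by
    ext i
    fin_cases i <;> rfl
  exact hπ ▸ hab.map hdisj

end InnerProductSpace

section LebesguePoint

theorem IsLebesguePoint.of_norm_sub_le_s15 {E F F' : Type*} [PseudoMetricSpace E] [ProperSpace E]
    [MeasureSpace E] [IsLocallyFiniteMeasure (volume : Measure E)] [NormedAddCommGroup F]
    [NormedAddCommGroup F'] {f : E → F} {g : E → F'} {x : E} {a : F} {b : F'} {C : ℝ}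
    (hx : IsLebesguePoint f x a) (hf : LocallyIntegrable f)
    (h : ∀ z, ‖g z - b‖ ≤ C * ‖f z - a‖) : IsLebesguePoint g x b := by
  have hlim := Tendsto.const_mul C hx
  rw [mul_zero] at hlim
  refine squeeze_zero (fun r => integral_nonneg fun z => norm_nonneg _) (fun r => ?_) hlim
  have hint : IntegrableOn (fun z => ‖f z - a‖) (ball x r) :=
    (((hf.sub (locallyIntegrable_const a)).integrableOn_isCompact
      (isCompact_closedBall x r)).mono_set ball_subset_closedBall).norm
  calc ⨍ z in ball x r, ‖g z - b‖
      ≤ ⨍ z in ball x r, C * ‖f z - a‖ :=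
        integral_mono_of_nonneg (ae_of_all _ fun z => norm_nonneg _)
          (hint.const_mul C).to_average (ae_of_all _ h)
    _ = C * ⨍ z in ball x r, ‖f z - a‖ := integral_const_mul _ _

variable {E : Type*} [NormedAddCommGroup E] [NormedSpace ℝ E] [FiniteDimensional ℝ E]
  [MeasureSpace E] [BorelSpace E] [(volume : Measure E).IsAddHaarMeasure]

theorem ball_ae_eq_closedBall (x : E) {r : ℝ} (hr : r ≠ 0) :
    ball x r =ᵐ[volume] closedBall x r := by
  rw [← ball_union_sphere]
  exact (union_ae_eq_left_of_ae_eq_empty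
    (ae_eq_empty.2 (Measure.addHaar_sphere_of_ne_zero volume x hr))).symm

open scoped Convolution in
theorem IsLebesguePoint.tendsto_convolution {ι : Type*} {l : Filter ι} {K : ℝ}
    {φ : ι → ContDiffBump (0 : E)} {f : E → ℝ} {x : E} {a : ℝ} (hx : IsLebesguePoint f x a)
    (hf : LocallyIntegrable f) (hφ : Tendsto (fun i => (φ i).rOut) l (𝓝 0))
    (hK : ∀ᶠ i in l, (φ i).rOut ≤ K * (φ i).rIn) :
    Tendsto (fun i => (f ⋆[ContinuousLinearMap.mul ℝ ℝ] (φ i).normed volume) x) l (𝓝 a) := by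
  have hmass (i : ι) : ∫ t, (φ i).normed volume (x - t) = 1 := by
    rw [integral_sub_left_eq_self, (φ i).integral_normed]
  have hsupport (i : ι) :
      Function.support (fun t => (φ i).normed volume (x - t)) ⊆ ball x (φ i).rOut := fun t ht => by
    have hxt : x - t ∈ ball 0 (φ i).rOut := (φ i).support_normed_eq (μ := volume) ▸ ht
    rwa [mem_ball_zero_iff, ← dist_eq_norm, dist_comm] at hxt
  have hbound {i : ι} (hi : (φ i).rOut ≤ K * (φ i).rIn) (t : E) :
      |(φ i).normed volume (x - t)| ≤
        K ^ Module.finrank ℝ E / volume.real (ball x (φ i).rOut) := by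
    rw [abs_of_nonneg ((φ i).nonneg_normed _),
      measureReal_congr (ball_ae_eq_closedBall x (φ i).rOut_pos.ne'),
      Measure.addHaar_real_closedBall_center]
    exact (φ i).normed_le_div_measure_closedBall_rOut _ _ hi _
  have hint (i : ι) : IntegrableOn f (ball x (φ i).rOut) :=
    (hf.integrableOn_isCompact (isCompact_closedBall _ _)).mono_set ball_subset_closedBall
  have havg := hx.comp
    (tendsto_nhdsWithin_iff.2 ⟨hφ, Eventually.of_forall fun i => (φ i).rOut_pos⟩)
  simpa only [convolution_def, ContinuousLinearMap.mul_apply', smul_eq_mul, mul_comm] using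
    tendsto_integral_smul_of_tendsto_average_norm_sub (K ^ Module.finrank ℝ E) havg
      (.of_forall hint) (by simp only [hmass, tendsto_const_nhds]) (.of_forall hsupport)
      (hK.mono fun i hi => hbound hi)

end LebesguePoint

section WeaklyConstant

open scoped Convolution

variable {E : Type*} [NormedAddCommGroup E] [NormedSpace ℝ E] [MeasureSpace E] [BorelSpace E]

/-- The distributional derivative of `f` in the direction `v` vanishes on `Ω`. -/
def IsWeaklyConstantAlong (f : E → ℝ) (v : E) (Ω : Set E) : Prop :=
  ∀ φ : E → ℝ, ContDiff ℝ (⊤ : ℕ∞) φ → HasCompactSupport φ → tsupport φ ⊆ Ω →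
    ∫ x in Ω, f x * fderiv ℝ φ x v = 0

namespace IsWeaklyConstantAlong

variable {f : E → ℝ} {v : E} {Ω : Set E}

theorem convolution_fderiv_apply_eq_zero (hv : IsWeaklyConstantAlong f v Ω)
    (hf : LocallyIntegrable f) {ρ : E → ℝ} (hρ : ContDiff ℝ (⊤ : ℕ∞) ρ)
    (hsupp : HasCompactSupport ρ) {z : E} (hz : (z - ·) ⁻¹' tsupport ρ ⊆ Ω) :
    (f ⋆[(ContinuousLinearMap.mul ℝ ℝ).precompR E] fderiv ℝ ρ) z v = 0 := by
  have htsupp : tsupport (fun t => ρ (z - t)) = (z - ·) ⁻¹' tsupport ρ :=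
    tsupport_comp_eq_preimage ρ (Homeomorph.subLeft z)
  have hfderiv (t : E) : fderiv ℝ (fun t => ρ (z - t)) t v = -fderiv ℝ ρ (z - t) v := by
    have hρz : HasFDerivAt ρ (fderiv ℝ ρ (z - t)) (z - t) :=
      (hρ.differentiable (by simp) _).hasFDerivAt
    have hcomp : HasFDerivAt (fun t => ρ (z - t)) _ t :=
      hρz.comp t ((hasFDerivAt_id t).const_sub z)
    rw [hcomp.fderiv, ContinuousLinearMap.comp_neg, ContinuousLinearMap.comp_id, neg_apply]
  have h := hv (fun t => ρ (z - t)) (hρ.comp (contDiff_const.sub contDiff_id))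
    (hsupp.comp_homeomorph (Homeomorph.subLeft z)) (htsupp ▸ hz)
  rw [convolution_precompR_apply _ hf (hsupp.fderiv ℝ) (hρ.continuous_fderiv (by simp)),
    convolution_def]
  simp only [hfderiv, mul_neg, integral_neg, neg_eq_zero] at h
  rwa [setIntegral_eq_integral_of_forall_compl_eq_zero fun t ht => ?_] at h
  have hzt : z - t ∉ tsupport ρ := fun hmem => ht (hz hmem)
  rw [fderiv_of_notMem_tsupport ℝ hzt, zero_apply, mul_zero]

variable [FiniteDimensional ℝ E] [(volume : Measure E).IsAddHaarMeasure]

theorem convolution_eq (hv : IsWeaklyConstantAlong f v Ω)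
    (hf : LocallyIntegrable f) {ρ : E → ℝ} (hρ : ContDiff ℝ (⊤ : ℕ∞) ρ)
    (hsupp : HasCompactSupport ρ) {x y : E} (hxy : y - x = v)
    (hΩ : ∀ z ∈ segment ℝ x y, (z - ·) ⁻¹' tsupport ρ ⊆ Ω) :
    (f ⋆[ContinuousLinearMap.mul ℝ ℝ] ρ) x = (f ⋆[ContinuousLinearMap.mul ℝ ℝ] ρ) y := by
  subst hxy
  obtain ⟨z, hz, h⟩ := domain_mvt (fun z _ => (hsupp.hasFDerivAt_convolution_right
    (ContinuousLinearMap.mul ℝ ℝ) hf (hρ.of_le (by simp)) z).hasFDerivWithinAt)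
    (convex_segment x y) (left_mem_segment ℝ x y) (right_mem_segment ℝ x y)
  rw [hv.convolution_fderiv_apply_eq_zero hf hρ hsupp (hΩ z hz), sub_eq_zero] at h
  exact h.symm

theorem eq_of_isLebesguePoint {x y : E} {a b : ℝ} (hv : IsWeaklyConstantAlong f (y - x) Ω)
    (hf : LocallyIntegrable f) (hΩ : IsOpen Ω) (hxy : segment ℝ x y ⊆ Ω)
    (hx : IsLebesguePoint f x a) (hy : IsLebesguePoint f y b) : a = b := by
  have hxy_compact : IsCompact (segment ℝ x y) := by
    rw [segment_eq_image_lineMap]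
    exact isCompact_Icc.image (by fun_prop)
  obtain ⟨ε, hε, hεΩ⟩ := hxy_compact.exists_cthickening_subset_open hΩ hxy
  let φ (n : ℕ) : ContDiffBump (0 : E) :=
    ⟨1 / ((n : ℝ) + 1), 2 * (1 / ((n : ℝ) + 1)), by positivity, lt_two_mul_self (by positivity)⟩
  have hφ : Tendsto (fun n => (φ n).rOut) atTop (𝓝 0) := by
    simpa [φ] using (tendsto_one_div_add_atTop_nhds_zero_nat (𝕜 := ℝ)).const_mul 2
  have hK : ∀ᶠ n in atTop, (φ n).rOut ≤ 2 * (φ n).rIn := .of_forall fun n => le_rfl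
  refine tendsto_nhds_unique_of_eventuallyEq (hx.tendsto_convolution hf hφ hK)
    (hy.tendsto_convolution hf hφ hK) ?_
  filter_upwards [hφ.eventually (ge_mem_nhds hε)] with n hn
  refine hv.convolution_eq hf (φ n).contDiff_normed (φ n).hasCompactSupport_normed rfl
    fun z hz t ht => hεΩ ?_
  rw [mem_preimage, (φ n).tsupport_normed_eq, mem_closedBall_zero_iff, ← dist_eq_norm] at ht
  exact mem_cthickening_of_dist_le t z ε _ hz ((dist_comm t z).trans_le (ht.trans hn))

end IsWeaklyConstantAlong

end WeaklyConstant

section Gluing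

variable {X Y : Type*} [TopologicalSpace X] [MeasurableSpace X]

theorem exists_ae_eq_of_locally_ae_eq [SecondCountableTopology X] {μ : Measure X}
    {Ω : Set X} (hconn : IsConnected Ω) {p : (X → Y) → Prop}
    (huniq : ∀ U : Set X, IsOpen U → U.Nonempty → ∀ f g, p f → p g → f =ᵐ[μ.restrict U] g → f = g)
    {u : X → Y} (hloc : ∀ x : Ω, ∃ U : Set X, IsOpen U ∧ ↑x ∈ U ∧ ∃ f, p f ∧ u =ᵐ[μ.restrict U] f) :
    ∃ f, p f ∧ u =ᵐ[μ.restrict Ω] f := by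
  choose U hU hxU f hf huf using hloc
  have hlc : IsLocallyConstant f := (IsLocallyConstant.iff_exists_open f).2 fun x => by
    refine ⟨Subtype.val ⁻¹' U x, (hU x).preimage continuous_subtype_val, hxU x, fun y hy => ?_⟩
    refine huniq (U y ∩ U x) ((hU y).inter (hU x)) ⟨y, hxU y, hy⟩ _ _ (hf y) (hf x) ?_
    filter_upwards [ae_restrict_of_ae_restrict_of_subset inter_subset_left (huf y),
      ae_restrict_of_ae_restrict_of_subset inter_subset_right (huf x)] with z hzy hzx
    exact hzy.symm.trans hzx
  have : ConnectedSpace Ω := isConnected_iff_connectedSpace.1 hconn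
  obtain ⟨x₀, hx₀⟩ := hconn.nonempty
  have hux₀ (x : Ω) : u =ᵐ[μ.restrict (U x)] f ⟨x₀, hx₀⟩ :=
    hlc.apply_eq_of_preconnectedSpace x ⟨x₀, hx₀⟩ ▸ huf x
  have hunion : u =ᵐ[μ.restrict (⋃ x, U x)] f ⟨x₀, hx₀⟩ := by
    obtain ⟨T, hT, hTU⟩ := TopologicalSpace.isOpen_iUnion_countable U hU
    rw [← hTU]
    exact (ae_restrict_biUnion_iff U hT _).2 fun x _ => hux₀ x
  exact ⟨f ⟨x₀, hx₀⟩, hf _, ae_restrict_of_ae_restrict_of_subset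
    (fun x hx => mem_iUnion.2 ⟨⟨x, hx⟩, hxU _⟩) hunion⟩

end Gluing

section LocalClassification

variable {V : Type*} [NormedAddCommGroup V] [InnerProductSpace ℝ V]

/-- The pointwise form of the kinetic formulation on a set `G`: `u · ξ` takes no two values of
opposite sign at points of `G` lying on a common hyperplane orthogonal to `ξ`. -/
def PointwiseKineticOn (u : V → V) (G : Set V) : Prop :=
  ∀ ⦃x⦄, x ∈ G → ∀ ⦃y⦄, y ∈ G → ∀ ξ, ⟪y - x, ξ⟫ = 0 → 0 < ⟪u x, ξ⟫ → 0 ≤ ⟪u y, ξ⟫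

/-- The unit radial field around the centre `P`, multiplied by `γ`. -/
def vortex (P : V) (γ : ℝ) (x : V) : V := γ • (‖x - P‖⁻¹ • (x - P))

/-- The fields to which solutions of the kinetic formulation reduce: constants of any length, and
vortices of sign `±1` around an arbitrary centre. -/
def IsConstOrVortex (f : V → V) : Prop :=
  (∃ c, f = fun _ => c) ∨ ∃ P γ, |γ| = 1 ∧ f = vortex P γ

namespace PointwiseKineticOn

variable {u : V → V} {G : Set V} (hu : PointwiseKineticOn u G)
include hu

theorem mono {H : Set V} (hHG : H ⊆ G) : PointwiseKineticOn u H :=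
  fun _ hx _ hy => hu (hHG hx) (hHG hy)

theorem sub_mem_span_pair {x y : V} (hx : x ∈ G) (hy : y ∈ G)
    (hxy : LinearIndependent ℝ ![u x, u y]) : y - x ∈ Submodule.span ℝ {u x, u y} :=
  mem_span_pair_of_forall_inner_nonneg hxy (hu hx hy)

theorem mul_nonneg_of_eq_smul {x y p : V} {α β t : ℝ} (hx : x ∈ G) (hy : y ∈ G)
    (hp : p ∉ Submodule.span ℝ {y - x}) (hux : u x = α • p) (huy : u y = β • p + t • (y - x)) :
    0 ≤ α * β := by
  obtain ⟨ξ, hξ, hpξ⟩ := exists_inner_eq_zero_inner_pos hp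
  rcases eq_or_ne α 0 with rfl | hα
  · simp
  have hxξ : 0 < ⟪u x, α • ξ⟫ := by
    rw [hux, real_inner_smul_left, real_inner_smul_right, ← mul_assoc]
    exact mul_pos (mul_self_pos.2 hα) hpξ
  have hyξ := hu hx hy (α • ξ) (by rw [real_inner_smul_right, hξ, mul_zero]) hxξ
  rw [huy, real_inner_smul_right, inner_add_left, real_inner_smul_left, real_inner_smul_left, hξ,
    mul_zero, add_zero, ← mul_assoc] at hyξ
  exact nonneg_of_mul_nonneg_left hyξ hpξ

theorem eq_of_not_linearIndependent {x y : V} (hx : x ∈ G) (hy : y ∈ G) (hux : ‖u x‖ = 1)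
    (huy : ‖u y‖ = 1) (hyx : y - x ∉ Submodule.span ℝ {u x})
    (hdep : ¬ LinearIndependent ℝ ![u x, u y]) : u y = u x := by
  have hux0 : u x ≠ 0 := norm_ne_zero_iff.1 (hux ▸ one_ne_zero)
  obtain ⟨t, ht⟩ : ∃ t : ℝ, t • u x = u y := by
    simpa [LinearIndependent.pair_iff' hux0] using hdep
  have hx_notMem : u x ∉ Submodule.span ℝ {y - x} := fun hmem =>
    hyx (mem_span_singleton_symm hux0 hmem)
  have ht_nonneg : 0 ≤ t := one_mul t ▸
    hu.mul_nonneg_of_eq_smul (t := 0) hx hy hx_notMem (one_smul ℝ _).symm (by simp [ht])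
  have ht_one : t = 1 := by
    rw [← abs_of_nonneg ht_nonneg]
    simpa [← ht, norm_smul, hux] using huy
  rw [← ht, ht_one, one_smul]

theorem exists_center {x y : V} (hx : x ∈ G) (hy : y ∈ G)
    (hxy : LinearIndependent ℝ ![u x, u y]) :
    ∃ P, ∀ z ∈ G, u z ≠ 0 → z - P ∉ Submodule.span ℝ {u x, u y} →
      z - P ∈ Submodule.span ℝ {u z} := by
  obtain ⟨α, β, h⟩ := Submodule.mem_span_pair.1 (hu.sub_mem_span_pair hx hy hxy)
  -- The lines `x + ℝ u x` and `y + ℝ u y` meet at `x + α • u x = y - β • u y`.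
  refine ⟨x + α • u x, fun z hz huz hzP => ?_⟩
  have hxz (hind : LinearIndependent ℝ ![u x, u z]) :
      z - (x + α • u x) ∈ Submodule.span ℝ {u x, u z} := by
    rw [← sub_sub]
    exact sub_mem (hu.sub_mem_span_pair hx hz hind)
      (Submodule.smul_mem _ _ (Submodule.mem_span_of_mem (mem_insert _ _)))
  have hyz (hind : LinearIndependent ℝ ![u y, u z]) :
      z - (x + α • u x) ∈ Submodule.span ℝ {u y, u z} := by
    rw [show z - (x + α • u x) = (z - y) + β • u y by linear_combination (norm := module) -h]
    exact add_mem (hu.sub_mem_span_pair hy hz hind)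
      (Submodule.smul_mem _ _ (Submodule.mem_span_of_mem (mem_insert _ _)))
  exact mem_span_singleton_of_notMem_span_pair hxy huz hxz hyz hzP

theorem mul_nonneg_of_eq_vortex {P x y : V} {γ δ : ℝ} (hx : x ∈ G) (hy : y ∈ G) (hxP : x ≠ P)
    (hyP : y ≠ P) (hxy : y - P ∉ Submodule.span ℝ {x - P}) (hux : u x = vortex P γ x)
    (huy : u y = vortex P δ y) : 0 ≤ γ * δ := by
  rw [← sub_ne_zero] at hxP hyP
  have hx_notMem : x - P ∉ Submodule.span ℝ {y - x} := fun hmem => hxy <| by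
    rw [← sub_add_sub_cancel y x P]
    exact add_mem (mem_span_singleton_symm hxP hmem) (Submodule.mem_span_singleton_self _)
  have h : 0 ≤ (γ * ‖x - P‖⁻¹) * (δ * ‖y - P‖⁻¹) :=
    hu.mul_nonneg_of_eq_smul (t := δ * ‖y - P‖⁻¹) hx hy hx_notMem (by rw [hux, vortex, smul_smul])
      (by rw [huy, vortex, smul_smul, ← smul_add, sub_add_sub_cancel'])
  rw [mul_mul_mul_comm] at h
  exact nonneg_of_mul_nonneg_left h (by positivity)

end PointwiseKineticOn

theorem norm_smul_vortex {γ : ℝ} (hγ : |γ| = 1) (P x : V) :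
    (γ * ‖x - P‖) • vortex P γ x = x - P := by
  rcases eq_or_ne x P with rfl | hx
  · simp
  have hx' : ‖x - P‖ ≠ 0 := norm_ne_zero_iff.2 (sub_ne_zero.2 hx)
  rw [vortex, smul_smul, smul_smul, mul_right_comm γ, ← abs_mul_abs_self, hγ, one_mul, one_mul,
    mul_inv_cancel₀ hx', one_smul]

theorem exists_eq_vortex {P x e : V} (he : ‖e‖ = 1) (hx : x ≠ P)
    (h : x - P ∈ Submodule.span ℝ {e}) : ∃ γ : ℝ, |γ| = 1 ∧ e = vortex P γ x := by
  obtain ⟨t, ht⟩ := Submodule.mem_span_singleton.1 h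
  have ht0 : t ≠ 0 := left_ne_zero_of_smul (ht ▸ sub_ne_zero.2 hx)
  have hnorm : ‖x - P‖ = |t| := by rw [← ht, norm_smul, he, mul_one, Real.norm_eq_abs]
  refine ⟨t / |t|, by rw [abs_div, abs_abs, div_self (abs_ne_zero.2 ht0)], ?_⟩
  rw [vortex, hnorm, ← ht, smul_smul, smul_smul, mul_right_comm, div_mul_eq_mul_div,
    ← abs_mul_abs_self t, mul_div_cancel_right₀ _ (abs_ne_zero.2 ht0),
    mul_inv_cancel₀ (abs_ne_zero.2 ht0), one_smul]

section Measure

open Module (finrank)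

variable [FiniteDimensional ℝ V] [MeasurableSpace V] [BorelSpace V] {μ ν : Measure V}
  [μ.IsAddHaarMeasure]

theorem ae_sub_notMem_span (hν : ν ≪ μ) {s : Set V} (hs : s.Finite)
    (hcard : s.ncard < finrank ℝ V) (P : V) : ∀ᵐ x ∂ν, x - P ∉ Submodule.span ℝ s := by
  have := hs.fintype
  have hne : Submodule.span ℝ s ≠ ⊤ :=
    (span_lt_top_of_card_lt_finrank (by rwa [← ncard_eq_toFinset_card'])).ne
  exact hν.ae_le ((eventually_sub_right_iff μ P).2
    (measure_eq_zero_iff_ae_notMem.1 (Measure.addHaar_submodule μ _ hne)))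

theorem ae_sub_notMem_span_singleton (hν : ν ≪ μ) (hV : 1 < finrank ℝ V) (c P : V) :
    ∀ᵐ x ∂ν, x - P ∉ Submodule.span ℝ {c} :=
  ae_sub_notMem_span hν (finite_singleton c) (by rwa [ncard_singleton]) P

variable [(ae ν).NeBot]

theorem not_const_ae_eq_vortex (hν : ν ≪ μ) (hV : 1 < finrank ℝ V) {c P : V} {γ : ℝ}
    (hγ : |γ| = 1) : ¬ (fun _ => c) =ᵐ[ν] vortex P γ := fun h => by
  obtain ⟨x, hx, hcx⟩ := (h.and (ae_sub_notMem_span_singleton hν hV c P)).exists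
  exact hcx (Submodule.mem_span_singleton.2
    ⟨_, (congrArg _ hx).trans (norm_smul_vortex hγ P x)⟩)

theorem vortex_eq_of_ae_eq (hν : ν ≪ μ) (hV : 1 < finrank ℝ V) {P Q : V} {γ δ : ℝ}
    (hγ : |γ| = 1) (hδ : |δ| = 1) (h : vortex P γ =ᵐ[ν] vortex Q δ) :
    vortex P γ = vortex Q δ := by
  obtain ⟨x, hx, hxPQ⟩ := (h.and (ae_sub_notMem_span_singleton hν hV (Q - P) P)).exists
  have hxP : x - P ≠ 0 := fun h0 => hxPQ (h0 ▸ zero_mem _)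
  have hP := norm_smul_vortex hγ P x
  have hQ := norm_smul_vortex hδ Q x
  rw [← hx] at hQ
  obtain rfl : P = Q := by
    by_contra hPQ
    have hmem : Q - P ∈ Submodule.span ℝ {vortex P γ x} := by
      rw [← sub_sub_sub_cancel_left, ← hP, ← hQ, ← sub_smul]
      exact Submodule.mem_span_singleton.2 ⟨_, rfl⟩
    refine hxPQ (hP ▸ Submodule.smul_mem _ _ (mem_span_singleton_symm ?_ hmem))
    exact sub_ne_zero.2 (Ne.symm hPQ)
  have he : vortex P γ x ≠ 0 := right_ne_zero_of_smul (hP ▸ hxP)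
  rw [mul_right_cancel₀ (norm_ne_zero_iff.2 hxP)
    (smul_left_injective ℝ he (hP.trans hQ.symm))]

theorem IsConstOrVortex.eq_of_ae_eq (hν : ν ≪ μ) (hV : 1 < finrank ℝ V) {f g : V → V}
    (hf : IsConstOrVortex f) (hg : IsConstOrVortex g) (hfg : f =ᵐ[ν] g) : f = g := by
  rcases hf with ⟨c, rfl⟩ | ⟨P, γ, hγ, rfl⟩ <;> rcases hg with ⟨d, rfl⟩ | ⟨Q, δ, hδ, rfl⟩
  · obtain ⟨_, hx⟩ := hfg.exists
    exact funext fun _ => hx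
  · exact (not_const_ae_eq_vortex hν hV hδ hfg).elim
  · exact (not_const_ae_eq_vortex hν hV hγ hfg.symm).elim
  · exact vortex_eq_of_ae_eq hν hV hγ hδ hfg

namespace PointwiseKineticOn

variable {u : V → V} {G : Set V} (hu : PointwiseKineticOn u G) (hnorm : ∀ x ∈ G, ‖u x‖ = 1)
include hu hnorm

theorem exists_ae_eq_const (hν : ν ≪ μ) (hG : ∀ᵐ x ∂ν, x ∈ G) (hV : 1 < finrank ℝ V)
    (hdep : ∀ x ∈ G, ∀ y ∈ G, ¬ LinearIndependent ℝ ![u x, u y]) :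
    ∃ c, u =ᵐ[ν] fun _ => c := by
  obtain ⟨x, hx⟩ := hG.exists
  refine ⟨u x, ?_⟩
  filter_upwards [hG, ae_sub_notMem_span_singleton hν hV (u x) x] with y hy hyx
  exact hu.eq_of_not_linearIndependent hx hy (hnorm x hx) (hnorm y hy) hyx (hdep x hx y hy)

theorem exists_ae_eq_vortex (hν : ν ≪ μ) (hG : ∀ᵐ x ∂ν, x ∈ G) (hV : 3 ≤ finrank ℝ V) {x y : V}
    (hx : x ∈ G) (hy : y ∈ G) (hxy : LinearIndependent ℝ ![u x, u y]) :
    ∃ P γ, |γ| = 1 ∧ u =ᵐ[ν] vortex P γ := by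
  obtain ⟨P, hP⟩ := hu.exists_center hx hy hxy
  have hGP : ∀ᵐ z ∂ν, z ∈ G ∧ z ≠ P ∧ ∃ γ, |γ| = 1 ∧ u z = vortex P γ z := by
    filter_upwards [hG, ae_sub_notMem_span hν (toFinite {u x, u y})
      ((ncard_insert_le _ _).trans_lt (by rw [ncard_singleton]; exact hV)) P] with z hz hzP
    have hzP' : z ≠ P := fun h => hzP (by simp [h])
    have huz : u z ≠ 0 := norm_ne_zero_iff.1 ((hnorm z hz).trans_ne one_ne_zero)
    exact ⟨hz, hzP', exists_eq_vortex (hnorm z hz) hzP' (hP z hz huz hzP)⟩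
  obtain ⟨w, hw, hwP, γ, hγ, huw⟩ := hGP.exists
  refine ⟨P, γ, hγ, ?_⟩
  filter_upwards [hGP, ae_sub_notMem_span_singleton hν (by omega) (w - P) P]
  rintro z ⟨hz, hzP, δ, hδ, huz⟩ hzw
  have hsign : 0 ≤ γ * δ := hu.mul_nonneg_of_eq_vortex hw hz hwP hzP hzw huw huz
  obtain rfl : γ = δ := (abs_eq_abs.1 (hγ.trans hδ.symm)).resolve_right fun h => by
    rw [h, neg_mul, ← abs_mul_abs_self, hδ] at hsign
    norm_num at hsign
  exact huz

theorem exists_isConstOrVortex_ae_eq (hν : ν ≪ μ) (hG : ∀ᵐ x ∂ν, x ∈ G) (hV : 3 ≤ finrank ℝ V) :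
    ∃ f, IsConstOrVortex f ∧ u =ᵐ[ν] f := by
  by_cases hdep : ∀ x ∈ G, ∀ y ∈ G, ¬ LinearIndependent ℝ ![u x, u y]
  · obtain ⟨c, hc⟩ := hu.exists_ae_eq_const hnorm hν hG (by omega) hdep
    exact ⟨_, .inl ⟨c, rfl⟩, hc⟩
  · push Not at hdep
    obtain ⟨x, hx, y, hy, hxy⟩ := hdep
    obtain ⟨P, γ, hγ, h⟩ := hu.exists_ae_eq_vortex hnorm hν hG hV hx hy hxy
    exact ⟨_, .inr ⟨P, γ, hγ, rfl⟩, h⟩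

end PointwiseKineticOn

end Measure

end LocalClassification

section Kinetic

variable {N : ℕ} {u w : EuclideanSpace ℝ (Fin N) → EuclideanSpace ℝ (Fin N)}
  {Ω : Set (EuclideanSpace ℝ (Fin N))}

theorem abs_chi_sub_chi_le {x ξ : EuclideanSpace ℝ (Fin N)} (hξ : ⟪u x, ξ⟫ ≠ 0)
    (z : EuclideanSpace ℝ (Fin N)) :
    |chi u z ξ - chi u x ξ| ≤ ‖ξ‖ / |⟪u x, ξ⟫| * ‖u z - u x‖ := by
  by_cases hsign : 0 < ⟪u z, ξ⟫ ↔ 0 < ⟪u x, ξ⟫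
  · rw [chi, chi, if_congr hsign rfl rfl, sub_self, abs_zero]
    positivity
  have hle : |⟪u x, ξ⟫| ≤ ‖ξ‖ * ‖u z - u x‖ := by
    have hdist : |⟪u x, ξ⟫| ≤ |⟪u z, ξ⟫ - ⟪u x, ξ⟫| := by
      generalize ⟪u z, ξ⟫ = b, ⟪u x, ξ⟫ = a at *
      grind
    calc |⟪u x, ξ⟫| ≤ |⟪u z, ξ⟫ - ⟪u x, ξ⟫| := hdist
      _ = |⟪ξ, u z - u x⟫| := by rw [← inner_sub_left, real_inner_comm]
      _ ≤ ‖ξ‖ * ‖u z - u x‖ := abs_real_inner_le_norm _ _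
  calc |chi u z ξ - chi u x ξ| ≤ 1 := by unfold chi; split_ifs <;> norm_num
    _ ≤ ‖ξ‖ * ‖u z - u x‖ / |⟪u x, ξ⟫| := (one_le_div (abs_pos.2 hξ)).2 hle
    _ = ‖ξ‖ / |⟪u x, ξ⟫| * ‖u z - u x‖ := by rw [div_mul_eq_mul_div]

theorem locallyIntegrable_chi (hu : Measurable u) (ξ : EuclideanSpace ℝ (Fin N)) :
    LocallyIntegrable (chi u · ξ) := by
  have hmeas : Measurable (chi u · ξ) :=
    .ite (measurableSet_lt measurable_const (hu.inner_const)) measurable_const measurable_const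
  refine (locallyIntegrable_const (1 : ℝ)).mono hmeas.aestronglyMeasurable (ae_of_all _ fun x => ?_)
  unfold chi
  split_ifs <;> norm_num

theorem chi_smul {t : ℝ} (ht : 0 < t) (x ξ : EuclideanSpace ℝ (Fin N)) :
    chi u x (t • ξ) = chi u x ξ := by
  unfold chi
  rw [real_inner_smul_right, if_congr (mul_pos_iff_of_pos_left ht) rfl rfl]

theorem IsLebesguePoint.chi {x : EuclideanSpace ℝ (Fin N)} (hx : IsLebesguePoint u x (u x))
    (hu : LocallyIntegrable u) {ξ : EuclideanSpace ℝ (Fin N)} (hξ : ⟪u x, ξ⟫ ≠ 0) :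
    IsLebesguePoint (chi u · ξ) x (chi u x ξ) :=
  hx.of_norm_sub_le_s15 hu (abs_chi_sub_chi_le hξ)

namespace KineticFormulation

theorem congr_ae (h : KineticFormulation Ω u) (hw : u =ᵐ[volume.restrict Ω] w) :
    KineticFormulation Ω w := by
  intro ξ hξ v hv φ hφ hsupp hΩ
  rw [← h ξ hξ v hv φ hφ hsupp hΩ]
  refine integral_congr_ae ?_
  filter_upwards [hw] with x hx
  simp only [chi, hx]

theorem isWeaklyConstantAlong (h : KineticFormulation Ω u) {ξ v : EuclideanSpace ℝ (Fin N)}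
    (hv : ⟪v, ξ⟫ = 0) : IsWeaklyConstantAlong (chi u · ξ) v Ω := by
  intro φ hφ hsupp hΩ
  rcases eq_or_ne ξ 0 with rfl | hξ
  · simp [chi]
  have hunit := h (‖ξ‖⁻¹ • ξ) (norm_smul_inv_norm hξ) v
    (by rw [real_inner_smul_right, hv, mul_zero]) φ hφ hsupp hΩ
  simpa only [chi_smul (inv_pos.2 (norm_pos_iff.2 hξ)), inner_gradient_right,
    conj_trivial] using hunit

theorem pointwiseKineticOn (h : KineticFormulation Ω u) (hΩ : IsOpen Ω) (hmeas : Measurable u)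
    (hu : LocallyIntegrable u) {B : Set (EuclideanSpace ℝ (Fin N))} (hB : Convex ℝ B)
    (hBΩ : B ⊆ Ω) :
    PointwiseKineticOn u {x ∈ B | IsLebesguePoint u x (u x)} := by
  rintro x ⟨hxB, hx⟩ y ⟨hyB, hy⟩ ξ hξ hxpos
  by_contra! hyneg
  have hchi := (h.isWeaklyConstantAlong hξ).eq_of_isLebesguePoint (locallyIntegrable_chi hmeas ξ) hΩ
    ((hB.segment_subset hxB hyB).trans hBΩ) (hx.chi hu hxpos.ne') (hy.chi hu hyneg.ne)
  simp only [chi, if_pos hxpos, if_neg hyneg.not_gt, one_ne_zero] at hchi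

theorem exists_isConstOrVortex_ae_eq (h : KineticFormulation Ω u) (hN : 3 ≤ N) (hΩ : IsOpen Ω)
    (hmeas : Measurable u) (hunit : ∀ᵐ x ∂volume.restrict Ω, ‖u x‖ = 1)
    {B : Set (EuclideanSpace ℝ (Fin N))} (hBo : IsOpen B) (hBne : B.Nonempty) (hB : Convex ℝ B)
    (hBΩ : B ⊆ Ω) : ∃ f, IsConstOrVortex f ∧ u =ᵐ[volume.restrict B] f := by
  -- Outside `Ω` nothing is known about `u`, so replace it there by zero.
  wlog hu : LocallyIntegrable u generalizing u
  · have hw : u =ᵐ[volume.restrict Ω] Ω.indicator u :=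
      (indicator_ae_eq_restrict hΩ.measurableSet).symm
    have hint : LocallyIntegrable (Ω.indicator u) :=
      (locallyIntegrable_const (1 : ℝ)).mono
        (hmeas.indicator hΩ.measurableSet).aestronglyMeasurable <| by
        filter_upwards [(ae_restrict_iff' hΩ.measurableSet).1 hunit] with x hx
        by_cases hxΩ : x ∈ Ω <;> simp [hxΩ, hx]
    obtain ⟨f, hf, hwf⟩ := this (h.congr_ae hw) (hmeas.indicator hΩ.measurableSet)
      (by filter_upwards [hunit, hw] with x hx hwx using hwx ▸ hx) hint
    refine ⟨f, hf, ?_⟩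
    filter_upwards [ae_restrict_of_ae_restrict_of_subset hBΩ hw, hwf] with x hwx hfx
    exact hwx.trans hfx
  have hpt : PointwiseKineticOn u {x ∈ B | IsLebesguePoint u x (u x) ∧ ‖u x‖ = 1} :=
    (h.pointwiseKineticOn hΩ hmeas hu hB hBΩ).mono fun x hx => ⟨hx.1, hx.2.1⟩
  have hG : ∀ᵐ x ∂volume.restrict B, x ∈ {x ∈ B | IsLebesguePoint u x (u x) ∧ ‖u x‖ = 1} := by
    filter_upwards [ae_restrict_mem hBo.measurableSet, ae_restrict_of_ae (ae_isLebesguePoint hu),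
      ae_restrict_of_ae_restrict_of_subset hBΩ hunit] with x hxB hxL hx
    exact ⟨hxB, hxL, hx⟩
  have : (ae (volume.restrict B)).NeBot :=
    ae_restrict_neBot.2 (hBo.measure_pos volume hBne).ne'
  exact hpt.exists_isConstOrVortex_ae_eq (fun x hx => hx.2.2)
    Measure.absolutelyContinuous_restrict hG (by rwa [finrank_euclideanSpace_fin])

end KineticFormulation

end Kinetic

theorem kinetic_characterizes_vortex (N : ℕ) (hN : 3 ≤ N)
    (Ω : Set (EuclideanSpace ℝ (Fin N))) (hΩ : IsOpen Ω) (hconn : IsConnected Ω)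
    (u : EuclideanSpace ℝ (Fin N) → EuclideanSpace ℝ (Fin N)) (hmeas : Measurable u)
    (hunit : ∀ᵐ x ∂volume.restrict Ω, ‖u x‖ = 1)
    (hkin : KineticFormulation Ω u)
    (hnc : ¬ ∃ c : EuclideanSpace ℝ (Fin N), ∀ᵐ x ∂volume.restrict Ω, u x = c) :
    ∃ P : EuclideanSpace ℝ (Fin N), ∃ γ : ℝ, (γ = 1 ∨ γ = -1) ∧
      ∀ᵐ x ∂volume.restrict Ω, u x = γ • (‖x - P‖⁻¹ • (x - P)) := by
  have hV : 1 < Module.finrank ℝ (EuclideanSpace ℝ (Fin N)) := by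
    rw [finrank_euclideanSpace_fin]
    omega
  obtain ⟨f, hf, huf⟩ : ∃ f, IsConstOrVortex f ∧ u =ᵐ[volume.restrict Ω] f := by
    refine exists_ae_eq_of_locally_ae_eq hconn (fun U hU hne f g hf hg hfg => ?_) fun x => ?_
    · have : (ae (volume.restrict U)).NeBot :=
        ae_restrict_neBot.2 (hU.measure_pos volume hne).ne'
      exact hf.eq_of_ae_eq Measure.absolutelyContinuous_restrict hV hg hfg
    · obtain ⟨r, hr, hrΩ⟩ := Metric.isOpen_iff.1 hΩ x x.2
      exact ⟨ball x r, isOpen_ball, mem_ball_self hr, hkin.exists_isConstOrVortex_ae_eq hN hΩ hmeas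
        hunit isOpen_ball ⟨x, mem_ball_self hr⟩ (convex_ball _ _) hrΩ⟩
  rcases hf with ⟨c, rfl⟩ | ⟨P, γ, hγ, rfl⟩
  · exact (hnc ⟨c, huf⟩).elim
  · exact ⟨P, γ, (abs_eq zero_le_one).1 hγ, huf⟩
end
end

section
/- Let N ≥ 4, Ω ⊆ ℝ^N an open set, and u : Ω → ℝ^N a Lebesgue measurable vector field with |u| = 1 a.e. satisfying: (i) the weakened kinetic formulation: for every ξ ∈ S^{N−1} with ξ_N = 0, every v ∈ ℝ^N with v·ξ = 0, and every φ ∈ C_c^∞(Ω), ∫_Ω χ(x, ξ)(v·∇φ(x)) dx = 0; and (ii) the distributional relations ∂_k u_N = ∂_N u_k for k = 1, …, N−1, i.e. ∫_Ω (u_N ∂_k φ − u_k ∂_N φ) dx = 0 for all φ ∈ C_c^∞(Ω). Then for every open ball B ⊆ Ω on which |u′(x)| > 0 for a.e. x (where u′ = (u₁, …, u_{N−1})), either there exists a constant vector w′ ∈ S^{N−2} ⊂ ℝ^{N−1} with u′(x)/|u′(x)| = w′ for a.e. x ∈ B, or there exist a point P′ ∈ ℝ^{N−1} and a sign γ ∈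 {+1, −1} with u′(x)/|u′(x)| = γ (x′ − P′)/|x′ − P′| for a.e. x = (x′, x_N) ∈ B. -/
open MeasureTheory Metric Set Filter
open scoped RealInnerProductSpace ENNReal Topology

noncomputable section

/-- The projection of a vector of Euclidean N-space onto its first N-1 coordinates. -/
def proj' (N : ℕ) (x : EuclideanSpace ℝ (Fin N)) : EuclideanSpace ℝ (Fin (N - 1)) :=
  (WithLp.equiv 2 (Fin (N - 1) → ℝ)).symm (fun i => x (Fin.castLE (Nat.sub_le N 1) i))

/-!
For `ξ ∈ ℝ^{N-1}` the set `{u' · ξ > 0}` has, by the kinetic formulation, a vanishing derivative in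
every direction `v` with `v' ⊥ ξ`. A density point `x` of it therefore cannot be joined, along such
a direction, to a density point `y` of its complement: no hyperplane parallel to the chord
`x' - y'` strictly separates `u'(x)` from `u'(y)`. Hence the lines `x' + ℝ u'(x)` and `y' + ℝ u'(y)`
are coplanar, with directions on the same side of the chord. Pairwise coplanar lines whose base
points lie in no proper affine subspace of a space of dimension at least three are either all
parallel or all concurrent, and the side condition fixes the sign of the direction along them.
-/

open scoped ContDiff Convolution
open ContinuousLinearMap (lsmul)

lemma locallyIntegrable_indicator_one {X : Type*} [TopologicalSpace X] [MeasurableSpace X]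
    {μ : Measure X} [IsLocallyFiniteMeasure μ] {S : Set X} (hS : MeasurableSet S) :
    LocallyIntegrable (S.indicator (1 : X → ℝ)) μ :=
  (locallyIntegrable_const (1 : ℝ)).indicator hS

section Mollification

variable {E : Type*} [NormedAddCommGroup E] [NormedSpace ℝ E]
  {B S T : Set E} {g : E → ℝ} {v x y : E}

lemma convex_setOf_closedBall_subset {r : ℝ} (hB : Convex ℝ B) :
    Convex ℝ {x | closedBall x r ⊆ B} := by
  intro x hx y hy a b ha hb hab z hz
  have hshift {q : E} (hq : closedBall q r ⊆ B) : q + (z - (a • x + b • y)) ∈ B :=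
    hq (by simpa [mem_closedBall, dist_eq_norm] using hz)
  have hz_eq : z = a • (x + (z - (a • x + b • y))) + b • (y + (z - (a • x + b • y))) := by
    obtain rfl : b = 1 - a := by linarith
    module
  exact hz_eq ▸ hB (hshift hx) (hshift hy) ha hb hab

/-- The bump function equal to `1` on the ball of radius `1 / (n + 1)` about the origin and
supported in the ball of twice that radius. -/
def shrinkingBump (E : Type*) [NormedAddCommGroup E] [NormedSpace ℝ E] (n : ℕ) :
    ContDiffBump (0 : E) where
  rIn := 1 / ((n : ℝ) + 1)
  rOut := 2 * (1 / ((n : ℝ) + 1))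
  rIn_pos := Nat.one_div_pos_of_nat
  rIn_lt_rOut := lt_two_mul_self Nat.one_div_pos_of_nat

lemma tendsto_rOut_shrinkingBump : Tendsto (fun n ↦ (shrinkingBump E n).rOut) atTop (𝓝 0) := by
  simpa [shrinkingBump] using (tendsto_one_div_add_atTop_nhds_zero_nat (𝕜 := ℝ)).const_mul 2

lemma eventually_closedBall_shrinkingBump_subset (hB : IsOpen B) (hx : x ∈ B) :
    ∀ᶠ n in atTop, closedBall x (shrinkingBump E n).rOut ⊆ B := by
  obtain ⟨ε, hε, hεB⟩ := Metric.isOpen_iff.1 hB x hx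
  filter_upwards [(tendsto_rOut_shrinkingBump (E := E)).eventually (gt_mem_nhds hε)] with n hn
  exact (closedBall_subset_ball hn).trans hεB

variable [MeasurableSpace E] {μ : Measure E}

/-- The derivative of `g` in the direction `v` vanishes on `B` in the sense of distributions:
`∫ g ∂ᵥφ dμ = 0` for every test function `φ ∈ C_c^∞(B)`. -/
def WeakDerivVanishes (μ : Measure E) (B : Set E) (g : E → ℝ) (v : E) : Prop :=
  ∀ φ : E → ℝ, ContDiff ℝ ∞ φ → HasCompactSupport φ → tsupport φ ⊆ B →
    ∫ z, g z * fderiv ℝ φ z v ∂μ = 0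

variable [BorelSpace E] [FiniteDimensional ℝ E] [μ.IsAddHaarMeasure]

lemma hasFDerivAt_normed_convolution (hg : LocallyIntegrable g μ) (f : ContDiffBump (0 : E))
    (x : E) :
    HasFDerivAt (f.normed μ ⋆[lsmul ℝ ℝ, μ] g)
      ((fderiv ℝ (f.normed μ) ⋆[(lsmul ℝ ℝ).precompL E, μ] g) x) x :=
  f.hasCompactSupport_normed.hasFDerivAt_convolution_left _ f.contDiff_normed hg x

lemma fderiv_normed_convolution_apply (hg : LocallyIntegrable g μ) (f : ContDiffBump (0 : E))
    (x v : E) :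
    fderiv ℝ (f.normed μ ⋆[lsmul ℝ ℝ, μ] g) x v =
      -∫ z, g z * fderiv ℝ (fun z ↦ f.normed μ (x - z)) z v ∂μ := by
  have hex : ConvolutionExistsAt (fderiv ℝ (f.normed μ)) g x ((lsmul ℝ ℝ).precompL E) μ :=
    (f.hasCompactSupport_normed.fderiv ℝ).convolutionExists_left _
      ((f.contDiff_normed (n := 1)).continuous_fderiv one_ne_zero) hg x
  have hreflect (z : E) :
      fderiv ℝ (fun z ↦ f.normed μ (x - z)) z v = -fderiv ℝ (f.normed μ) (x - z) v := by
    have hsub : HasFDerivAt (fun z ↦ x - z) (-ContinuousLinearMap.id ℝ E) z :=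
      (hasFDerivAt_id z).const_sub x
    have hbump := (f.contDiff_normed (μ := μ) (n := 1)).differentiable one_ne_zero (x - z)
    have hcomp : HasFDerivAt (fun z ↦ f.normed μ (x - z)) _ z := hbump.hasFDerivAt.comp z hsub
    simp [hcomp.fderiv]
  rw [(hasFDerivAt_normed_convolution hg f x).fderiv, convolution_eq_swap,
    ContinuousLinearMap.integral_apply (convolutionExistsAt_iff_integrable_swap.1 hex),
    ← integral_neg]
  simp only [hreflect, ContinuousLinearMap.precompL_apply, ContinuousLinearMap.lsmul_apply,
    smul_eq_mul, mul_neg, neg_neg, mul_comm]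

lemma tsupport_normed_const_sub (f : ContDiffBump (0 : E)) (x : E) :
    tsupport (fun z ↦ f.normed μ (x - z)) = closedBall x f.rOut := by
  have h := tsupport_comp_eq_preimage (f.normed μ) (Homeomorph.subLeft x)
  rw [f.tsupport_normed_eq] at h
  refine h.trans ?_
  ext z
  simp [dist_eq_norm, norm_sub_rev]

lemma WeakDerivVanishes.fderiv_normed_convolution_eq_zero (h : WeakDerivVanishes μ B g v)
    (hg : LocallyIntegrable g μ) (f : ContDiffBump (0 : E)) (hx : closedBall x f.rOut ⊆ B) :
    fderiv ℝ (f.normed μ ⋆[lsmul ℝ ℝ, μ] g) x v = 0 := by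
  have hsupp := tsupport_normed_const_sub (μ := μ) f x
  rw [fderiv_normed_convolution_apply hg, neg_eq_zero]
  refine h _ (f.contDiff_normed.comp (contDiff_const.sub contDiff_id)) ?_ (hsupp ▸ hx)
  rw [HasCompactSupport, hsupp]
  exact isCompact_closedBall x f.rOut

lemma WeakDerivVanishes.normed_convolution_eq (h : WeakDerivVanishes μ B g (x - y))
    (hB : Convex ℝ B) (hg : LocallyIntegrable g μ) (f : ContDiffBump (0 : E))
    (hx : closedBall x f.rOut ⊆ B) (hy : closedBall y f.rOut ⊆ B) :
    (f.normed μ ⋆[lsmul ℝ ℝ, μ] g) x = (f.normed μ ⋆[lsmul ℝ ℝ, μ] g) y := by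
  have hconv := convex_setOf_closedBall_subset (r := f.rOut) hB
  obtain ⟨z, hz, hmean⟩ := domain_mvt
    (fun z _ ↦ (hasFDerivAt_normed_convolution hg f z).hasFDerivWithinAt) hconv hy hx
  rwa [← (hasFDerivAt_normed_convolution hg f z).fderiv,
    h.fderiv_normed_convolution_eq_zero hg f (hconv.segment_subset hy hx hz), sub_eq_zero] at hmean

/-- The proportion of `S` near `x`, averaged against the `n`-th shrinking bump function. A smooth
average replaces the mean over a ball so that it can be differentiated in `x`. -/
def smoothDensity (μ : Measure E) (S : Set E) (n : ℕ) (x : E) : ℝ :=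
  ((shrinkingBump E n).normed μ ⋆[lsmul ℝ ℝ, μ] S.indicator 1) x

lemma convolutionExists_shrinkingBump (hS : MeasurableSet S) (n : ℕ) :
    ConvolutionExists ((shrinkingBump E n).normed μ) (S.indicator (1 : E → ℝ)) (lsmul ℝ ℝ) μ :=
  (shrinkingBump E n).hasCompactSupport_normed.convolutionExists_left _
    (shrinkingBump E n).continuous_normed (locallyIntegrable_indicator_one hS)

lemma smoothDensity_mono (hS : MeasurableSet S) (hT : MeasurableSet T) (hST : S ⊆ T) (n : ℕ)
    (x : E) : smoothDensity μ S n x ≤ smoothDensity μ T n x :=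
  convolution_mono_right (convolutionExists_shrinkingBump hS n x)
    (convolutionExists_shrinkingBump hT n x) (shrinkingBump E n).nonneg_normed
    (indicator_le_indicator_of_subset hST fun _ ↦ zero_le_one)

lemma smoothDensity_univ (n : ℕ) (x : E) : smoothDensity μ univ n x = 1 := by
  rw [smoothDensity, indicator_univ]
  exact ContDiffBump.normed_convolution_eq_right fun _ _ ↦ rfl

lemma smoothDensity_add_compl (hS : MeasurableSet S) (n : ℕ) (x : E) :
    smoothDensity μ S n x + smoothDensity μ Sᶜ n x = 1 := by
  rw [← smoothDensity_univ (μ := μ) n x, smoothDensity, smoothDensity, smoothDensity,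
    ← (convolutionExists_shrinkingBump hS n x).distrib_add
      (convolutionExists_shrinkingBump hS.compl n x),
    indicator_self_add_compl, indicator_univ]

/-- `x` is a density point of `S`, for densities measured by the smooth averages
`smoothDensity`. -/
def IsDensityPoint (μ : Measure E) (S : Set E) (x : E) : Prop :=
  Tendsto (fun n ↦ smoothDensity μ S n x) atTop (𝓝 1)

lemma ae_isDensityPoint (hS : MeasurableSet S) : ∀ᵐ x ∂μ, x ∈ S → IsDensityPoint μ S x := by
  filter_upwards [ContDiffBump.ae_convolution_tendsto_right_of_locallyIntegrable
    (φ := shrinkingBump E) (K := 2) tendsto_rOut_shrinkingBump (.of_forall fun _ ↦ le_rfl)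
    (locallyIntegrable_indicator_one (μ := μ) hS)] with x hx hxS
  rwa [indicator_of_mem hxS] at hx

lemma IsDensityPoint.mono (h : IsDensityPoint μ S x) (hS : MeasurableSet S)
    (hT : MeasurableSet T) (hST : S ⊆ T) : IsDensityPoint μ T x :=
  tendsto_of_tendsto_of_tendsto_of_le_of_le h tendsto_const_nhds
    (fun n ↦ smoothDensity_mono hS hT hST n x)
    (fun n ↦ (smoothDensity_mono hT .univ (subset_univ T) n x).trans_eq (smoothDensity_univ n x))

lemma WeakDerivVanishes.not_isDensityPoint_compl
    (h : WeakDerivVanishes μ B (S.indicator 1) (x - y)) (hB : Convex ℝ B) (hBo : IsOpen B)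
    (hS : MeasurableSet S) (hx : x ∈ B) (hy : y ∈ B) (hxS : IsDensityPoint μ S x) :
    ¬IsDensityPoint μ Sᶜ y := by
  intro hyS
  have hsum : ∀ᶠ n in atTop, smoothDensity μ S n x + smoothDensity μ Sᶜ n y = 1 := by
    filter_upwards [eventually_closedBall_shrinkingBump_subset hBo hx,
      eventually_closedBall_shrinkingBump_subset hBo hy] with n hnx hny
    have hxy : smoothDensity μ S n x = smoothDensity μ S n y :=
      h.normed_convolution_eq hB (locallyIntegrable_indicator_one hS) _ hnx hny
    rw [hxy, smoothDensity_add_compl hS]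
  have hlim : (1 : ℝ) + 1 = 1 :=
    tendsto_nhds_unique ((hxS.add hyS).congr' hsum) tendsto_const_nhds
  norm_num at hlim

end Mollification

section ApproximateContinuity

variable {E Y : Type*} [NormedAddCommGroup E] [NormedSpace ℝ E] [MeasurableSpace E]
  [BorelSpace E] [FiniteDimensional ℝ E] {μ : Measure E} [μ.IsAddHaarMeasure]
  [TopologicalSpace Y] [MeasurableSpace Y] [OpensMeasurableSpace Y]
  {B : Set E} {W : E → Y} {x y : E} {U : Set Y}

/-- `W` is approximately continuous at `x`: every open set around `W x` pulls back to a set of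
which `x` is a density point. -/
def ApproxContinuousAt (μ : Measure E) (W : E → Y) (x : E) : Prop :=
  ∀ U : Set Y, IsOpen U → W x ∈ U → IsDensityPoint μ (W ⁻¹' U) x

lemma ae_approxContinuousAt [SecondCountableTopology Y] (hW : Measurable W) :
    ∀ᵐ x ∂μ, ApproxContinuousAt μ W x := by
  have hbasis : ∀ᵐ x ∂μ, ∀ V ∈ TopologicalSpace.countableBasis Y,
      x ∈ W ⁻¹' V → IsDensityPoint μ (W ⁻¹' V) x :=
    (ae_ball_iff (TopologicalSpace.countable_countableBasis Y)).2 fun V hV ↦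
      ae_isDensityPoint (hW (TopologicalSpace.isOpen_of_mem_countableBasis hV).measurableSet)
  filter_upwards [hbasis] with x hx U hU hxU
  obtain ⟨V, hV, hxV, hVU⟩ :=
    (TopologicalSpace.isBasis_countableBasis Y).exists_subset_of_mem_open hxU hU
  exact (hx V hV hxV).mono
    (hW (TopologicalSpace.isOpen_of_mem_countableBasis hV).measurableSet)
    (hW hU.measurableSet) (preimage_mono hVU)

lemma ApproxContinuousAt.mem_closure_of_weakDerivVanishes (hxW : ApproxContinuousAt μ W x)
    (hyW : ApproxContinuousAt μ W y) (hW : Measurable W) (hB : Convex ℝ B) (hBo : IsOpen B)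
    (hx : x ∈ B) (hy : y ∈ B) (hU : IsOpen U)
    (h : WeakDerivVanishes μ B ((W ⁻¹' U).indicator 1) (x - y)) (hxU : W x ∈ U) :
    W y ∈ closure U := by
  by_contra hyU
  have hclosure : IsOpen (closure U)ᶜ := isClosed_closure.isOpen_compl
  exact h.not_isDensityPoint_compl hB hBo (hW hU.measurableSet) hx hy (hxW U hU hxU)
    ((hyW _ hclosure hyU).mono (hW hclosure.measurableSet) (hW hU.measurableSet).compl
      (preimage_mono (compl_subset_compl.2 subset_closure)))

end ApproximateContinuity

section LinearAlgebra

variable {K V : Type*} [DivisionRing K] [AddCommGroup V] [Module K V] {D q₀ q₁ w w₀ w₁ : V}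

lemma mem_span_singleton_symm_s18 (hw : w ≠ 0) (h : w ∈ K ∙ D) : D ∈ K ∙ w := by
  simpa using mem_span_insert_exchange (s := ∅) (by simpa using h) (by simpa using hw)

lemma exists_sub_mem_span_singleton (h : q₀ - q₁ ∈ Submodule.span K {w₀, w₁}) :
    ∃ P, q₀ - P ∈ K ∙ w₀ ∧ q₁ - P ∈ K ∙ w₁ := by
  obtain ⟨a, b, hab⟩ := Submodule.mem_span_pair.1 h
  refine ⟨q₀ - a • w₀, Submodule.mem_span_singleton.2 ⟨a, (sub_sub_cancel _ _).symm⟩,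
    Submodule.mem_span_singleton.2 ⟨-b, ?_⟩⟩
  rw [neg_smul, neg_eq_iff_eq_neg, eq_sub_of_add_eq' hab]
  abel

lemma mem_span_singleton_of_mem_span_pairs_s18 (hw₁ : w₁ ∉ K ∙ w₀)
    (hD : D ∉ Submodule.span K {w₀, w₁}) (h₀ : w ∈ Submodule.span K {w₀, D})
    (h₁ : w ∈ Submodule.span K {w₁, D}) : w ∈ K ∙ D := by
  obtain ⟨m₀, k₀, rfl⟩ := Submodule.mem_span_pair.1 h₀
  obtain ⟨m₁, k₁, hw⟩ := Submodule.mem_span_pair.1 h₁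
  obtain rfl : k₀ = k₁ := by
    by_contra hk
    refine hD ((Submodule.smul_mem_iff _ (sub_ne_zero.2 hk)).1
      (Submodule.mem_span_pair.2 ⟨-m₀, m₁, ?_⟩))
    rw [sub_smul, neg_smul, eq_sub_of_add_eq hw]
    abel
  have hm : m₁ = 0 := by
    by_contra hm
    exact hw₁ ((Submodule.smul_mem_iff _ hm).1
      (Submodule.mem_span_singleton.2 ⟨m₀, (add_right_cancel hw).symm⟩))
  rw [← hw, hm, zero_smul, zero_add]
  exact Submodule.smul_mem _ k₀ (Submodule.mem_span_singleton_self D)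

end LinearAlgebra

section SameRayMod

variable {𝕜 V : Type*} [Field 𝕜] [LinearOrder 𝕜] [IsStrictOrderedRing 𝕜] [AddCommGroup V]
  [Module 𝕜 V] {d D D' P q q₀ q₁ w w₀ w₁ X Y : V} {s t : 𝕜} {S : Submodule 𝕜 V}

variable (𝕜) in
/-- `X` and `Y` point in the same direction modulo the line spanned by `d`. For `d = q - q'` this
says that the lines through `q` and `q'` with directions `X` and `Y` are coplanar, and that `X` and
`Y` do not point to opposite sides of the chord from `q` to `q'`. -/
def SameRayMod (d X Y : V) : Prop :=
  SameRay 𝕜 ((𝕜 ∙ d).mkQ X) ((𝕜 ∙ d).mkQ Y)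

lemma SameRayMod.sameRay (h : SameRayMod 𝕜 d X Y) (hX : X ∈ S) (hY : Y ∈ S) (hd : d ∉ S) :
    SameRay 𝕜 X Y := by
  have hd₀ : d ≠ 0 := by
    rintro rfl
    exact hd S.zero_mem
  have hinj : Function.Injective ((𝕜 ∙ d).mkQ.domRestrict S) := by
    rw [LinearMap.injective_domRestrict_iff, Submodule.ker_mkQ]
    exact (Submodule.disjoint_span_singleton' hd₀).2 hd
  have hsub : SameRay 𝕜 (⟨X, hX⟩ : S) ⟨Y, hY⟩ := hinj.sameRay_map_iff.1 h
  exact hsub.map S.subtype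

lemma SameRayMod.mem_span_pair (h : SameRayMod 𝕜 d X Y) (hY : Y ∉ 𝕜 ∙ d) :
    X ∈ Submodule.span 𝕜 {Y, d} := by
  have hY₀ : (𝕜 ∙ d).mkQ Y ≠ 0 := by simpa using hY
  obtain ⟨r, -, hr⟩ := h.symm.exists_nonneg_left hY₀
  have hXr : X - r • Y ∈ 𝕜 ∙ d := by
    rw [← Submodule.ker_mkQ (𝕜 ∙ d), LinearMap.mem_ker, map_sub, map_smul, hr, sub_self]
  obtain ⟨c, hc⟩ := Submodule.mem_span_singleton.1 hXr
  exact Submodule.mem_span_pair.2 ⟨r, c, by rw [hc]; module⟩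

lemma SameRayMod.sub_mem_span_pair (h : SameRayMod 𝕜 (q₀ - q₁) w₀ w₁) (hw₀ : w₀ ≠ 0)
    (hw₁ : w₁ ∉ 𝕜 ∙ w₀) : q₀ - q₁ ∈ Submodule.span 𝕜 {w₀, w₁} := by
  by_contra hq
  have hray : SameRay 𝕜 w₀ w₁ :=
    h.sameRay (Submodule.subset_span (by simp)) (Submodule.subset_span (by simp)) hq
  obtain ⟨r, -, hr⟩ := hray.exists_nonneg_left hw₀
  exact hw₁ (Submodule.mem_span_singleton.2 ⟨r, hr⟩)

lemma SameRayMod.mem_span_pair_of_sub_mem (h : SameRayMod 𝕜 (q - q₀) w w₀) (hw₀ : w₀ ≠ 0)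
    (hP : q₀ - P ∈ 𝕜 ∙ w₀) (hq : q - P ∉ 𝕜 ∙ w₀) :
    w ∈ Submodule.span 𝕜 {w₀, q - P} := by
  have hchord : q - q₀ ∉ 𝕜 ∙ w₀ := fun hmem ↦ hq (by simpa using add_mem hmem hP)
  have hle : Submodule.span 𝕜 {w₀, q - q₀} ≤ Submodule.span 𝕜 {w₀, q - P} := by
    have hw₀_mem : w₀ ∈ Submodule.span 𝕜 {w₀, q - P} := Submodule.subset_span (by simp)
    have hq_mem : q - P ∈ Submodule.span 𝕜 {w₀, q - P} := Submodule.subset_span (by simp)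
    have hP_mem := (Submodule.span_singleton_le_iff_mem _ _).2 hw₀_mem hP
    refine Submodule.span_le.2 (Set.insert_subset hw₀_mem (Set.singleton_subset_iff.2 ?_))
    simpa using sub_mem hq_mem hP_mem
  exact hle (h.mem_span_pair fun hmem ↦ hchord (mem_span_singleton_symm_s18 hw₀ hmem))

lemma SameRayMod.sameRay_smul (h : SameRayMod 𝕜 (D - D') (s • D) (t • D')) (hD' : D' ≠ 0)
    (hD : D ∉ 𝕜 ∙ D') : SameRay 𝕜 (s • D) (t • D) := by
  have hmk : (𝕜 ∙ (D - D')).mkQ D' = (𝕜 ∙ (D - D')).mkQ D :=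
    ((Submodule.Quotient.eq _).2 (Submodule.mem_span_singleton_self _)).symm
  have hDD : SameRayMod 𝕜 (D - D') (s • D) (t • D) := by
    rwa [SameRayMod, map_smul _ t, hmk, ← map_smul] at h
  refine hDD.sameRay (S := 𝕜 ∙ D) (Submodule.smul_mem _ s (Submodule.mem_span_singleton_self D))
    (Submodule.smul_mem _ t (Submodule.mem_span_singleton_self D)) fun hsub ↦ ?_
  have hD'D : D' ∈ 𝕜 ∙ D := by
    simpa using sub_mem (Submodule.mem_span_singleton_self D) hsub
  exact hD (mem_span_singleton_symm_s18 hD' hD'D)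

end SameRayMod

section InnerProduct

variable {H : Type*} [NormedAddCommGroup H] [InnerProductSpace ℝ H] {d X Y : H}

lemma sameRay_of_forall_inner_nonneg (h : ∀ ξ : H, 0 < ⟪X, ξ⟫ → 0 ≤ ⟪Y, ξ⟫) :
    SameRay ℝ X Y := by
  rcases eq_or_ne X 0 with rfl | hX
  · exact .zero_left Y
  rcases eq_or_ne Y 0 with rfl | hY
  · exact .zero_right X
  -- Unless Cauchy-Schwarz is an equality, `ξ = ‖Y‖ • X - ‖X‖ • Y` separates `X` from `Y`.
  rw [sameRay_iff_norm_smul_eq, ← inner_eq_norm_mul_iff_real]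
  refine (real_inner_le_norm Y X).antisymm (le_of_not_gt fun hlt ↦ ?_)
  have hX₀ : 0 < ‖X‖ := norm_pos_iff.2 hX
  have hY₀ : 0 < ‖Y‖ := norm_pos_iff.2 hY
  have hXξ : 0 < ⟪X, ‖Y‖ • X - ‖X‖ • Y⟫ := by
    rw [inner_sub_right, inner_smul_right, inner_smul_right, real_inner_self_eq_norm_sq,
      real_inner_comm]
    nlinarith
  have hYξ : 0 ≤ ⟪Y, ‖Y‖ • X - ‖X‖ • Y⟫ := h _ hXξ
  rw [inner_sub_right, inner_smul_right, inner_smul_right, real_inner_self_eq_norm_sq]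
    at hYξ
  nlinarith

lemma sameRayMod_of_forall_inner_nonneg
    (h : ∀ ξ : H, ⟪d, ξ⟫ = 0 → 0 < ⟪X, ξ⟫ → 0 ≤ ⟪Y, ξ⟫) : SameRayMod ℝ d X Y := by
  set T : Submodule ℝ H := (ℝ ∙ d)ᗮ
  have hinner (Z : H) (ξ : T) : ⟪T.orthogonalProjectionOnto Z, ξ⟫ = ⟪Z, (ξ : H)⟫ :=
    T.inner_orthogonalProjectionOnto_eq_of_mem_right ξ Z
  have hmk (Z : H) : (ℝ ∙ d).mkQ (T.orthogonalProjectionOnto Z : H) = (ℝ ∙ d).mkQ Z := by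
    rw [Submodule.orthogonalProjectionOnto_orthogonal, map_sub, sub_eq_self,
      ← LinearMap.mem_ker, Submodule.ker_mkQ]
    exact Submodule.starProjection_apply_mem _ Z
  have hproj : SameRay ℝ (T.orthogonalProjectionOnto X) (T.orthogonalProjectionOnto Y) := by
    refine sameRay_of_forall_inner_nonneg fun ξ ↦ ?_
    rw [hinner, hinner]
    exact h ξ (Submodule.mem_orthogonal_singleton_iff_inner_right.1 ξ.2)
  have hray := hproj.map ((ℝ ∙ d).mkQ ∘ₗ T.subtype)
  rwa [LinearMap.comp_apply, LinearMap.comp_apply, Submodule.subtype_apply, Submodule.subtype_apply,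
    hmk, hmk] at hray

end InnerProduct

section GeneralPosition

variable {K V α : Type*} [DivisionRing K] [AddCommGroup V] [Module K V] [MeasurableSpace α]
  {ν : Measure α} {p : α → V}

lemma span_pair_ne_top (hV : 2 < Module.finrank K V) (a b : V) :
    Submodule.span K {a, b} ≠ ⊤ := by
  classical
  refine (span_lt_top_of_card_lt_finrank ?_).ne
  simpa using Finset.card_le_two.trans_lt hV

variable (K ν p) in
/-- The map `p` sends almost no point into any given proper affine subspace `h + S`, so that
almost every point is in general position to any finite configuration. -/
def InGeneralPosition : Prop :=
  ∀ S : Submodule K V, S ≠ ⊤ → ∀ h : V, ∀ᵐ x ∂ν, p x - h ∉ S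

lemma InGeneralPosition.ae_sub_notMem_span_pair (hp : InGeneralPosition K ν p)
    (hV : 2 < Module.finrank K V) (h a b : V) : ∀ᵐ x ∂ν, p x - h ∉ Submodule.span K {a, b} :=
  hp _ (span_pair_ne_top hV a b) h

lemma InGeneralPosition.ae_sub_notMem_span_singleton (hp : InGeneralPosition K ν p)
    (hV : 2 < Module.finrank K V) (h a : V) : ∀ᵐ x ∂ν, p x - h ∉ K ∙ a := by
  simpa using hp.ae_sub_notMem_span_pair hV h a a

end GeneralPosition

lemma inGeneralPosition_of_absolutelyContinuous {E V : Type*} [NormedAddCommGroup E]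
    [NormedSpace ℝ E] [MeasurableSpace E] [BorelSpace E] [FiniteDimensional ℝ E]
    [AddCommGroup V] [Module ℝ V] {μ ν : Measure E} [μ.IsAddHaarMeasure] (hν : ν ≪ μ)
    {p : E →ₗ[ℝ] V} (hp : Function.Surjective p) : InGeneralPosition ℝ ν p := by
  intro S hS h
  obtain ⟨x₀, rfl⟩ := hp h
  have hcomap : S.comap p ≠ ⊤ := fun htop ↦ hS <| by
    rw [← Submodule.map_comap_eq_of_surjective hp S, htop, Submodule.map_top,
      LinearMap.range_eq_top.2 hp]
  have hmk : AffineSubspace.mk' x₀ (S.comap p) ≠ ⊤ := fun htop ↦ hcomap <| by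
    rw [← AffineSubspace.direction_mk' x₀ (S.comap p), htop, AffineSubspace.direction_top]
  have hnull : ∀ᵐ x ∂μ, x ∉ AffineSubspace.mk' x₀ (S.comap p) :=
    measure_eq_zero_iff_ae_notMem.1 (Measure.addHaar_affineSubspace μ _ hmk)
  filter_upwards [hν.ae_le hnull] with x hx
  simpa [AffineSubspace.mem_mk'] using hx

section PairwiseCoplanar

variable {𝕜 V α : Type*} [Field 𝕜] [LinearOrder 𝕜] [IsStrictOrderedRing 𝕜] [AddCommGroup V]
  [Module 𝕜 V] [MeasurableSpace α] {ν : Measure α} {p W : α → V} {G : Set α} {x₀ x₁ : α} {P : V}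

lemma ae_sameRay_of_forall_mem_span_singleton (hp : InGeneralPosition 𝕜 ν p)
    (hV : 2 < Module.finrank 𝕜 V) (hG : ∀ᵐ x ∂ν, x ∈ G)
    (hpair : ∀ x ∈ G, ∀ y ∈ G, SameRayMod 𝕜 (p x - p y) (W x) (W y)) (hx₀ : x₀ ∈ G)
    (hW : ∀ x ∈ G, W x ∈ 𝕜 ∙ W x₀) : ∀ᵐ x ∂ν, SameRay 𝕜 (W x) (W x₀) := by
  filter_upwards [hG, hp.ae_sub_notMem_span_singleton hV (p x₀) (W x₀)] with x hx hchord
  exact (hpair x hx x₀ hx₀).sameRay (hW x hx) (hW x₀ hx₀) hchord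

lemma exists_ae_mem_span_singleton_sub (hp : InGeneralPosition 𝕜 ν p)
    (hV : 2 < Module.finrank 𝕜 V) (hG : ∀ᵐ x ∂ν, x ∈ G)
    (hpair : ∀ x ∈ G, ∀ y ∈ G, SameRayMod 𝕜 (p x - p y) (W x) (W y)) (hx₀ : x₀ ∈ G)
    (hx₁ : x₁ ∈ G) (hW₀ : W x₀ ≠ 0) (hW₁ : W x₁ ∉ 𝕜 ∙ W x₀) :
    ∃ P, ∀ᵐ x ∂ν, W x ∈ 𝕜 ∙ (p x - P) := by
  have hW₁_ne : W x₁ ≠ 0 := fun h ↦ hW₁ (h ▸ zero_mem _)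
  obtain ⟨P, hP₀, hP₁⟩ :=
    exists_sub_mem_span_singleton ((hpair x₀ hx₀ x₁ hx₁).sub_mem_span_pair hW₀ hW₁)
  refine ⟨P, ?_⟩
  filter_upwards [hG, hp.ae_sub_notMem_span_pair hV P (W x₀) (W x₁)] with x hx hxP
  have hxP₀ : p x - P ∉ 𝕜 ∙ W x₀ := fun h ↦ hxP (Submodule.span_mono (by simp) h)
  have hxP₁ : p x - P ∉ 𝕜 ∙ W x₁ := fun h ↦ hxP (Submodule.span_mono (by simp) h)
  exact mem_span_singleton_of_mem_span_pairs_s18 hW₁ hxP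
    ((hpair x hx x₀ hx₀).mem_span_pair_of_sub_mem hW₀ hP₀ hxP₀)
    ((hpair x hx x₁ hx₁).mem_span_pair_of_sub_mem hW₁_ne hP₁ hxP₁)

lemma exists_ae_sameRay_smul_sub [NeBot (ae ν)] (hp : InGeneralPosition 𝕜 ν p)
    (hV : 2 < Module.finrank 𝕜 V) (hG : ∀ᵐ x ∂ν, x ∈ G) (hW : ∀ x ∈ G, W x ≠ 0)
    (hpair : ∀ x ∈ G, ∀ y ∈ G, SameRayMod 𝕜 (p x - p y) (W x) (W y))
    (hP : ∀ᵐ x ∂ν, W x ∈ 𝕜 ∙ (p x - P)) :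
    ∃ t : 𝕜, t ≠ 0 ∧ ∀ᵐ x ∂ν, SameRay 𝕜 (W x) (t • (p x - P)) := by
  obtain ⟨y, hyG, hyP⟩ := (hG.and hP).exists
  obtain ⟨t, ht⟩ := Submodule.mem_span_singleton.1 hyP
  have hWy : t • (p y - P) ≠ 0 := ht ▸ hW y hyG
  refine ⟨t, (smul_ne_zero_iff.1 hWy).1, ?_⟩
  filter_upwards [hG, hP, hp.ae_sub_notMem_span_singleton hV P (p y - P)] with x hxG hxP hxy
  obtain ⟨s, hs⟩ := Submodule.mem_span_singleton.1 hxP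
  have hxy_mod := hpair x hxG y hyG
  rw [← hs, ← ht, ← sub_sub_sub_cancel_right _ _ P] at hxy_mod
  exact hs ▸ hxy_mod.sameRay_smul (smul_ne_zero_iff.1 hWy).2 hxy

lemma ae_parallel_or_concurrent [NeBot (ae ν)] (hp : InGeneralPosition 𝕜 ν p)
    (hV : 2 < Module.finrank 𝕜 V) (hG : ∀ᵐ x ∂ν, x ∈ G) (hW : ∀ x ∈ G, W x ≠ 0)
    (hpair : ∀ x ∈ G, ∀ y ∈ G, SameRayMod 𝕜 (p x - p y) (W x) (W y)) :
    (∃ w ≠ 0, ∀ᵐ x ∂ν, SameRay 𝕜 (W x) w) ∨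
      ∃ P, ∃ t : 𝕜, t ≠ 0 ∧ ∀ᵐ x ∂ν, SameRay 𝕜 (W x) (t • (p x - P)) := by
  obtain ⟨x₀, hx₀⟩ := hG.exists
  by_cases hline : ∀ x ∈ G, W x ∈ 𝕜 ∙ W x₀
  · exact .inl ⟨W x₀, hW x₀ hx₀,
      ae_sameRay_of_forall_mem_span_singleton hp hV hG hpair hx₀ hline⟩
  · push Not at hline
    obtain ⟨x₁, hx₁, hW₁⟩ := hline
    obtain ⟨P, hP⟩ := exists_ae_mem_span_singleton_sub hp hV hG hpair hx₀ hx₁ (hW x₀ hx₀) hW₁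
    exact .inr ⟨P, exists_ae_sameRay_smul_sub hp hV hG hW hpair hP⟩

end PairwiseCoplanar

lemma inv_norm_smul_smul {H : Type*} [NormedAddCommGroup H] [NormedSpace ℝ H] (t : ℝ) (D : H) :
    ‖t • D‖⁻¹ • t • D = (SignType.sign t : ℝ) • ‖D‖⁻¹ • D := by
  have hsign : |t|⁻¹ * t = SignType.sign t := by
    rcases lt_trichotomy t 0 with ht | rfl | ht
    · simp [ht, abs_of_neg, inv_neg, ht.ne]
    · simp
    · simp [ht, abs_of_pos, ht.ne']
  rw [norm_smul, Real.norm_eq_abs, mul_inv, smul_smul, smul_smul, ← hsign]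
  ring_nf

section Dichotomy

variable {E H : Type*} [NormedAddCommGroup E] [NormedSpace ℝ E] [MeasurableSpace E]
  [BorelSpace E] [FiniteDimensional ℝ E] {μ : Measure E} [μ.IsAddHaarMeasure]
  [NormedAddCommGroup H] [InnerProductSpace ℝ H] [MeasurableSpace H] [BorelSpace H]
  {B : Set E} {W : E → H} {p : E →ₗ[ℝ] H}

lemma ApproxContinuousAt.sameRayMod {x y : E} (hxW : ApproxContinuousAt μ W x)
    (hyW : ApproxContinuousAt μ W y) (hW : Measurable W) (hB : Convex ℝ B) (hBo : IsOpen B)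
    (hx : x ∈ B) (hy : y ∈ B)
    (hkin : ∀ ξ : H, ‖ξ‖ = 1 → ∀ v : E, ⟪p v, ξ⟫ = 0 →
      WeakDerivVanishes μ B ((W ⁻¹' {w | 0 < ⟪w, ξ⟫}).indicator 1) v) :
    SameRayMod ℝ (p x - p y) (W x) (W y) := by
  refine sameRayMod_of_forall_inner_nonneg fun ξ hξ hxξ ↦ ?_
  have hξ₀ : ξ ≠ 0 := by
    rintro rfl
    simp at hxξ
  have hscale (w : H) : ⟪w, ‖ξ‖⁻¹ • ξ⟫ = ‖ξ‖⁻¹ * ⟪w, ξ⟫ := real_inner_smul_right _ _ _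
  have hclosure : W y ∈ closure {w | 0 < ⟪w, ‖ξ‖⁻¹ • ξ⟫} := by
    refine hxW.mem_closure_of_weakDerivVanishes hyW hW hB hBo hx hy
      (isOpen_lt continuous_const (by fun_prop)) (hkin _ (norm_smul_inv_norm hξ₀) _ ?_) ?_
    · rw [map_sub]
      exact (hscale _).trans (by rw [hξ, mul_zero])
    · simpa [hscale, hξ₀] using hxξ
  have hyξ : 0 ≤ ⟪W y, ‖ξ‖⁻¹ • ξ⟫ :=
    closure_lt_subset_le continuous_const (by fun_prop) hclosure
  rwa [hscale, mul_nonneg_iff_of_pos_left (inv_pos.2 (norm_pos_iff.2 hξ₀))] at hyξ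

theorem weakened_kinetic_vortex_line_general (hB : Convex ℝ B) (hBo : IsOpen B)
    (hp : Function.Surjective p) (hH : 2 < Module.finrank ℝ H) (hW : Measurable W)
    (hW₀ : ∀ᵐ x ∂μ.restrict B, W x ≠ 0)
    (hkin : ∀ ξ : H, ‖ξ‖ = 1 → ∀ v : E, ⟪p v, ξ⟫ = 0 →
      WeakDerivVanishes μ B ((W ⁻¹' {w | 0 < ⟪w, ξ⟫}).indicator 1) v) :
    (∃ w : H, ‖w‖ = 1 ∧ ∀ᵐ x ∂μ.restrict B, ‖W x‖⁻¹ • W x = w) ∨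
      ∃ P : H, ∃ γ : ℝ, (γ = 1 ∨ γ = -1) ∧
        ∀ᵐ x ∂μ.restrict B, ‖W x‖⁻¹ • W x = γ • (‖p x - P‖⁻¹ • (p x - P)) := by
  rcases eq_or_neBot (ae (μ.restrict B)) with hnull | hne
  · exact .inr ⟨0, 1, .inl rfl, by simp [hnull]⟩
  have : FiniteDimensional ℝ H := Module.Finite.of_surjective p hp
  have hgen := inGeneralPosition_of_absolutelyContinuous
    (Measure.absolutelyContinuous_of_le Measure.restrict_le_self : μ.restrict B ≪ μ) hp
  have hG : ∀ᵐ x ∂μ.restrict B, x ∈ {x | x ∈ B ∧ W x ≠ 0 ∧ ApproxContinuousAt μ W x} := by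
    filter_upwards [ae_restrict_mem hBo.measurableSet, hW₀,
      ae_restrict_of_ae (ae_approxContinuousAt hW)] with x hx hxW hxc
    exact ⟨hx, hxW, hxc⟩
  rcases ae_parallel_or_concurrent hgen hH hG (fun x hx ↦ hx.2.1) (fun x hx y hy ↦
    hx.2.2.sameRayMod hy.2.2 hW hB hBo hx.1 hy.1 hkin) with ⟨w, hw, hray⟩ | ⟨P, t, ht, hray⟩
  · refine .inl ⟨‖w‖⁻¹ • w, norm_smul_inv_norm hw, ?_⟩
    filter_upwards [hW₀, hray] with x hxW hx
    exact hx.inv_norm_smul_eq hxW hw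
  · refine .inr ⟨P, SignType.sign t, ?_, ?_⟩
    · rcases ht.lt_or_gt with h | h <;> simp [h]
    filter_upwards [hW₀, hray, hgen.ae_sub_notMem_span_singleton hH P 0] with x hxW hx hxP
    have hD : p x - P ≠ 0 := fun h ↦ hxP (h ▸ zero_mem (ℝ ∙ (0 : H)))
    rw [hx.inv_norm_smul_eq hxW (smul_ne_zero ht hD), inv_norm_smul_smul]

end Dichotomy

section FirstCoords

variable {N : ℕ}

/-- The projection `x ↦ x'` onto the first `N - 1` coordinates, `proj' N` as a linear map. -/
def firstCoords (N : ℕ) : EuclideanSpace ℝ (Fin N) →ₗ[ℝ] EuclideanSpace ℝ (Fin (N - 1)) where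
  toFun := proj' N
  map_add' _ _ := rfl
  map_smul' _ _ := rfl

lemma firstCoords_apply (x : EuclideanSpace ℝ (Fin N)) (i : Fin (N - 1)) :
    firstCoords N x i = x (Fin.castLE (Nat.sub_le N 1) i) :=
  rfl

lemma firstCoords_single_castLE (j : Fin (N - 1)) :
    firstCoords N (EuclideanSpace.single (Fin.castLE (Nat.sub_le N 1) j) 1) =
      EuclideanSpace.single j 1 := by
  ext i
  simp [firstCoords_apply]

lemma adjoint_firstCoords_castLE (ξ : EuclideanSpace ℝ (Fin (N - 1))) (j : Fin (N - 1)) :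
    (firstCoords N).adjoint ξ (Fin.castLE (Nat.sub_le N 1) j) = ξ j := by
  have h := (firstCoords N).adjoint_inner_right
    (EuclideanSpace.single (Fin.castLE (Nat.sub_le N 1) j) 1) ξ
  simpa [firstCoords_single_castLE, EuclideanSpace.inner_single_left] using h

lemma adjoint_firstCoords_last (hN : N - 1 < N) (ξ : EuclideanSpace ℝ (Fin (N - 1))) :
    (firstCoords N).adjoint ξ ⟨N - 1, hN⟩ = 0 := by
  have hsingle : firstCoords N (EuclideanSpace.single ⟨N - 1, hN⟩ 1) = 0 := by
    ext i
    simpa [firstCoords_apply, Fin.ext_iff] using i.2.ne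
  have h := (firstCoords N).adjoint_inner_right (EuclideanSpace.single ⟨N - 1, hN⟩ 1) ξ
  simpa [hsingle, EuclideanSpace.inner_single_left] using h

lemma firstCoords_adjoint_firstCoords (ξ : EuclideanSpace ℝ (Fin (N - 1))) :
    firstCoords N ((firstCoords N).adjoint ξ) = ξ := by
  ext j
  exact adjoint_firstCoords_castLE ξ j

lemma norm_adjoint_firstCoords (ξ : EuclideanSpace ℝ (Fin (N - 1))) :
    ‖(firstCoords N).adjoint ξ‖ = ‖ξ‖ := by
  rw [norm_eq_sqrt_real_inner, LinearMap.adjoint_inner_right, firstCoords_adjoint_firstCoords,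
    ← norm_eq_sqrt_real_inner]

variable {Ω B : Set (EuclideanSpace ℝ (Fin N))}
  {u : EuclideanSpace ℝ (Fin N) → EuclideanSpace ℝ (Fin N)} {v ξ : EuclideanSpace ℝ (Fin N)}

lemma weakDerivVanishes_of_setIntegral_chi (hB : B ⊆ Ω)
    (h : ∀ φ : EuclideanSpace ℝ (Fin N) → ℝ, ContDiff ℝ ∞ φ → HasCompactSupport φ →
      tsupport φ ⊆ Ω → ∫ x in Ω, chi u x ξ * ⟪v, gradient φ x⟫ = 0) :
    WeakDerivVanishes volume B ({x | 0 < ⟪u x, ξ⟫}.indicator 1) v := by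
  intro φ hφ hφc hφs
  have hφΩ : tsupport φ ⊆ Ω := hφs.trans hB
  have hchi (x : EuclideanSpace ℝ (Fin N)) : {x | 0 < ⟪u x, ξ⟫}.indicator 1 x * fderiv ℝ φ x v =
      chi u x ξ * ⟪v, gradient φ x⟫ := by
    rw [real_inner_comm, inner_gradient_left]
    rfl
  have hout (x : EuclideanSpace ℝ (Fin N)) (hx : x ∉ Ω) :
      {x | 0 < ⟪u x, ξ⟫}.indicator 1 x * fderiv ℝ φ x v = 0 := by
    simp [fderiv_of_notMem_tsupport ℝ fun hxφ ↦ hx (hφΩ hxφ)]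
  rw [← setIntegral_eq_integral_of_forall_compl_eq_zero hout]
  simpa only [hchi] using h φ hφ hφc hφΩ

lemma weakDerivVanishes_halfSpace_firstCoords (hN : N - 1 < N) (hB : B ⊆ Ω)
    (hkin : ∀ ξ : EuclideanSpace ℝ (Fin N), ‖ξ‖ = 1 → ξ ⟨N - 1, hN⟩ = 0 →
      ∀ v : EuclideanSpace ℝ (Fin N), ⟪v, ξ⟫ = 0 →
        ∀ φ : EuclideanSpace ℝ (Fin N) → ℝ, ContDiff ℝ ∞ φ → HasCompactSupport φ →
          tsupport φ ⊆ Ω → ∫ x in Ω, chi u x ξ * ⟪v, gradient φ x⟫ = 0)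
    (ξ : EuclideanSpace ℝ (Fin (N - 1))) (hξ : ‖ξ‖ = 1) (v : EuclideanSpace ℝ (Fin N))
    (hv : ⟪firstCoords N v, ξ⟫ = 0) :
    WeakDerivVanishes volume B
      (((fun x ↦ firstCoords N (u x)) ⁻¹' {w | 0 < ⟪w, ξ⟫}).indicator 1) v := by
  have h := weakDerivVanishes_of_setIntegral_chi hB <|
    hkin ((firstCoords N).adjoint ξ) (by rwa [norm_adjoint_firstCoords])
      (adjoint_firstCoords_last hN ξ) v (by rwa [LinearMap.adjoint_inner_right])
  simpa only [preimage_ofPred_eq, LinearMap.adjoint_inner_right] using h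

end FirstCoords

theorem weakened_kinetic_vortex_line (N : ℕ) (hN : 4 ≤ N)
    (Ω : Set (EuclideanSpace ℝ (Fin N))) (hΩ : IsOpen Ω)
    (u : EuclideanSpace ℝ (Fin N) → EuclideanSpace ℝ (Fin N)) (hmeas : Measurable u)
    (hunit : ∀ᵐ x ∂volume.restrict Ω, ‖u x‖ = 1)
    (hkinW : ∀ ξ : EuclideanSpace ℝ (Fin N), ‖ξ‖ = 1 → ξ (⟨N - 1, by omega⟩ : Fin N) = 0 →
      ∀ v : EuclideanSpace ℝ (Fin N), ⟪v, ξ⟫ = 0 →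
        ∀ φ : EuclideanSpace ℝ (Fin N) → ℝ, ContDiff ℝ (⊤ : ℕ∞) φ → HasCompactSupport φ →
          tsupport φ ⊆ Ω →
          ∫ x in Ω, chi u x ξ * ⟪v, gradient φ x⟫ = 0)
    (hsym : ∀ k : Fin N, (k : ℕ) < N - 1 →
      ∀ φ : EuclideanSpace ℝ (Fin N) → ℝ, ContDiff ℝ (⊤ : ℕ∞) φ → HasCompactSupport φ →
        tsupport φ ⊆ Ω →
        ∫ x in Ω, (u x (⟨N - 1, by omega⟩ : Fin N) * fderiv ℝ φ x (EuclideanSpace.single k 1)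
          - u x k * fderiv ℝ φ x (EuclideanSpace.single (⟨N - 1, by omega⟩ : Fin N) 1)) = 0) :
    ∀ (c : EuclideanSpace ℝ (Fin N)) (ρ : ℝ), Metric.ball c ρ ⊆ Ω →
      (∀ᵐ x ∂volume.restrict (Metric.ball c ρ), 0 < ‖proj' N (u x)‖) →
      ((∃ w' : EuclideanSpace ℝ (Fin (N - 1)), ‖w'‖ = 1 ∧
          ∀ᵐ x ∂volume.restrict (Metric.ball c ρ),
            ‖proj' N (u x)‖⁻¹ • proj' N (u x) = w') ∨
       (∃ P' : EuclideanSpace ℝ (Fin (N - 1)), ∃ γ : ℝ, (γ = 1 ∨ γ = -1) ∧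
          ∀ᵐ x ∂volume.restrict (Metric.ball c ρ),
            ‖proj' N (u x)‖⁻¹ • proj' N (u x)
              = γ • (‖proj' N x - P'‖⁻¹ • (proj' N x - P')))) := by
  intro c ρ hball hpos
  exact weakened_kinetic_vortex_line_general (p := firstCoords N) (convex_ball c ρ) isOpen_ball
    (fun ξ ↦ ⟨_, firstCoords_adjoint_firstCoords ξ⟩) (by rw [finrank_euclideanSpace_fin]; omega)
    ((firstCoords N).continuous_of_finiteDimensional.measurable.comp hmeas)
    (hpos.mono fun _ hx ↦ norm_pos_iff.1 hx)
    (weakDerivVanishes_halfSpace_firstCoords (by omega) hball hkinW)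
end
end
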